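/- arXiv:2504.14198 — 2 statements merged into one kernel-verified Lean document; each statement's English description precedes it below -/
import Mathlib

section
/- Let F be a field with char(F) ≠ 2, let n ≥ 2, and let T : M_n(F) → M_n(F) be a bijective linear map. Then T(B_n) ⊆ B_n if and only if there exist a scalar α ∈ {−1, 1} and an invertible matrix P ∈ M_n(F) such that either T(X) = α·P·X·P⁻¹ for all X ∈ M_n(F), or T(X) = α·P·Xᵗ·P⁻¹ for all X ∈ M_n(F). -/
open Matrix

/-- The set of matrices that are products of two involutions. -/
def ProdInv2 (F : Type*) [Field F] (n : ℕ) : Set (Matrix (Fin n) (Fin n) F) :=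
  {A | ∃ J₁ J₂ : Matrix (Fin n) (Fin n) F, J₁ * J₁ = 1 ∧ J₂ * J₂ = 1 ∧ A = J₁ * J₂}

section partA
variable {F : Type*} [Field F] {V : Type*} [AddCommGroup V] [Module F V]

/-- `A` is a product of two involutions. -/
def BB (A : Module.End F V) : Prop :=
  ∃ J : Module.End F V, J * J = 1 ∧ (J * A) * (J * A) = 1

lemma rel_compl (A a b : Submodule F V) (ha : a ≤ A) (hb : b ≤ A) (hab : Disjoint a b) :
    ∃ c, a ≤ c ∧ c ≤ A ∧ Disjoint c b ∧ c ⊔ b = A := by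
  obtain ⟨x, hx⟩ := exists_isCompl (a ⊔ b)
  refine ⟨a ⊔ (x ⊓ A), le_sup_left, sup_le ha inf_le_right, ?_, ?_⟩
  · rw [Submodule.disjoint_def] at hab ⊢
    intro v hv hvb
    obtain ⟨u, hu, w, hw, rfl⟩ := Submodule.mem_sup.1 hv
    have hw0 : w = 0 := by
      have h1 : w ∈ a ⊔ b := by
        have := Submodule.sub_mem _ (Submodule.mem_sup_right (S := a) hvb)
          (Submodule.mem_sup_left (T := b) hu)
        simpa using this
      exact (Submodule.disjoint_def.1 hx.disjoint) w h1 hw.1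
    rw [hw0, add_zero] at hvb ⊢
    exact hab u hu hvb
  · have : a ⊔ x ⊓ A ⊔ b = (a ⊔ b) ⊔ x ⊓ A := by
      rw [sup_assoc, sup_comm (x ⊓ A), sup_assoc]
    rw [this, ← sup_inf_assoc_of_le x (sup_le ha hb), hx.sup_eq_top, top_inf_eq]

lemma grade_step (M : Module.End F V) (p I0 I1 : Submodule F V)
    (hI : I0 ⊔ I1 = p.map M) (hIp : p.map M ≤ p) (hd : Disjoint I0 I1)
    (h0 : ∀ x ∈ I0, M x ∈ I1) (h1 : ∀ x ∈ I1, M x ∈ I0) :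
    ∃ E0 E1 : Submodule F V, Disjoint E0 E1 ∧ E0 ⊔ E1 = p ∧
      (∀ x ∈ E0, M x ∈ E1) ∧ (∀ x ∈ E1, M x ∈ E0) := by
  have hI0 : I0 ≤ p.map M := hI ▸ le_sup_left
  have hI1 : I1 ≤ p.map M := hI ▸ le_sup_right
  set K : Submodule F V := p ⊓ LinearMap.ker M with hK
  set A0 : Submodule F V := p ⊓ I1.comap M with hA0
  set A1 : Submodule F V := p ⊓ I0.comap M with hA1
  have hKA0 : K ≤ A0 := fun x hx => ⟨hx.1, by
    have : M x = 0 := hx.2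
    simp [this]⟩
  have hKA1 : K ≤ A1 := fun x hx => ⟨hx.1, by
    have : M x = 0 := hx.2
    simp [this]⟩
  have hIA0 : I0 ≤ A0 := fun x hx => ⟨hIp (hI0 hx), h0 x hx⟩
  have hIA1 : I1 ≤ A1 := fun x hx => ⟨hIp (hI1 hx), h1 x hx⟩
  have hAA : A0 ⊓ A1 ≤ K := fun x hx => ⟨hx.1.1,
    (Submodule.disjoint_def.1 hd) _ hx.2.2 hx.1.2⟩
  have hd' := Submodule.disjoint_def.1 hd
  obtain ⟨K', k1, k2, k3, k4⟩ := rel_compl K (I1 ⊓ K) (I0 ⊓ K) inf_le_right inf_le_right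
    (Submodule.disjoint_def.2 fun x hx hy => hd' x hy.1 hx.1)
  have k3' := Submodule.disjoint_def.1 k3
  obtain ⟨E0, e1, e2, e3, e4⟩ := rel_compl A0 I0 K' hIA0 (k2.trans hKA0)
    (Submodule.disjoint_def.2 fun x hx hy => k3' x hy ⟨hx, k2 hy⟩)
  obtain ⟨E1, f1, f2, f3, f4⟩ := rel_compl A1 (I1 ⊔ K') (I0 ⊓ K) (sup_le hIA1 (k2.trans hKA1))
    (inf_le_right.trans hKA1) (by
      refine Submodule.disjoint_def.2 fun x hx hy => ?_
      obtain ⟨u, hu, w, hw, rfl⟩ := Submodule.mem_sup.1 hx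
      have hu' : u ∈ K := by
        have := K.sub_mem hy.2 (k2 hw)
        simpa using this
      exact k3' _ (K'.add_mem (k1 ⟨hu, hu'⟩) hw) hy)
  have e3' := Submodule.disjoint_def.1 e3
  have f3' := Submodule.disjoint_def.1 f3
  refine ⟨E0, E1, ?_, ?_, ?_, ?_⟩
  · refine Submodule.disjoint_def.2 fun x hx hy => ?_
    have hxK : x ∈ K := hAA ⟨e2 hx, f2 hy⟩
    rw [← k4] at hxK
    obtain ⟨u, hu, w, hw, rfl⟩ := Submodule.mem_sup.1 hxK
    have hu0 : u = 0 := e3' u (by simpa using E0.sub_mem hx (e1 hw.1)) hu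
    rw [hu0, zero_add] at hy ⊢
    exact f3' w hy hw
  · apply le_antisymm
    · exact sup_le (e2.trans inf_le_left) (f2.trans inf_le_left)
    · have hA0' : A0 ≤ E0 ⊔ E1 := by
        rw [← e4]
        exact sup_le le_sup_left ((le_sup_right.trans f1).trans le_sup_right)
      have hA1' : A1 ≤ E0 ⊔ E1 := by
        rw [← f4]
        exact sup_le le_sup_right ((inf_le_left.trans e1).trans le_sup_left)
      intro x hx
      have hMx : M x ∈ I0 ⊔ I1 := by rw [hI]; exact ⟨x, hx, rfl⟩
      obtain ⟨u, hu, w, hw, huw⟩ := Submodule.mem_sup.1 hMx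
      obtain ⟨y, hy, rfl⟩ := hI0 hu
      have a1 : y ∈ A1 := ⟨hy, hu⟩
      have a0 : x - y ∈ A0 := ⟨p.sub_mem hx hy, by
        change M (x - y) ∈ I1
        rw [map_sub, ← huw, add_sub_cancel_left]
        exact hw⟩
      have := (E0 ⊔ E1).add_mem (hA0' a0) (hA1' a1)
      simpa using this
  · intro x hx
    exact f1 (Submodule.mem_sup_left (e2 hx).2)
  · intro x hx
    exact e1 (f2 hx).2

lemma grade_exists (M : Module.End F V) (hM : IsNilpotent M) :
    ∃ E0 E1 : Submodule F V, IsCompl E0 E1 ∧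
      (∀ x ∈ E0, M x ∈ E1) ∧ (∀ x ∈ E1, M x ∈ E0) := by
  obtain ⟨m, hm⟩ := hM
  have key : ∀ j ≤ m, ∃ E0 E1 : Submodule F V, Disjoint E0 E1 ∧
      E0 ⊔ E1 = LinearMap.range (M ^ (m - j)) ∧
      (∀ x ∈ E0, M x ∈ E1) ∧ (∀ x ∈ E1, M x ∈ E0) := by
    intro j
    induction j with
    | zero =>
      intro _
      refine ⟨⊥, ⊥, disjoint_bot_left, ?_, ?_, ?_⟩
      · simp [hm]
      · simp
      · simp
    | succ j ih =>
      intro hj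
      obtain ⟨I0, I1, a, b, c, d⟩ := ih (by omega)
      have hmj : m - j = (m - (j + 1)) + 1 := by omega
      have hr : LinearMap.range (M ^ (m - j)) =
          (LinearMap.range (M ^ (m - (j+1)))).map M := by
        rw [hmj, pow_succ', Module.End.mul_eq_comp, LinearMap.range_comp]
      refine grade_step M _ I0 I1 (b.trans hr) ?_ a c d
      rw [← hr, hmj, pow_succ, Module.End.mul_eq_comp]
      exact LinearMap.range_comp_le_range _ _
  obtain ⟨E0, E1, a, b, c, d⟩ := key m le_rfl
  refine ⟨E0, E1, ⟨a, codisjoint_iff.2 ?_⟩, c, d⟩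
  rw [b]
  simp [Module.End.one_eq_id]

lemma nil_anti (M : Module.End F V) (hM : IsNilpotent M) :
    ∃ J : Module.End F V, J * J = 1 ∧ J * M = - (M * J) := by
  obtain ⟨E0, E1, hc, h0, h1⟩ := grade_exists M hM
  let J : Module.End F V := LinearMap.ofIsCompl hc E0.subtype (-E1.subtype)
  have j0 : ∀ x ∈ E0, J x = x := fun x hx => by
    have := LinearMap.ofIsCompl_apply_left hc (φ := E0.subtype) (ψ := -E1.subtype) ⟨x, hx⟩
    simpa using this
  have j1 : ∀ x ∈ E1, J x = -x := fun x hx => by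
    have := LinearMap.ofIsCompl_apply_right hc (φ := E0.subtype) (ψ := -E1.subtype) ⟨x, hx⟩
    simpa using this
  have split : ∀ x : V, ∃ u ∈ E0, ∃ w ∈ E1, u + w = x := fun x =>
    Submodule.mem_sup.1 (hc.sup_eq_top ▸ Submodule.mem_top)
  refine ⟨J, ?_, ?_⟩
  · ext x
    obtain ⟨u, hu, w, hw, rfl⟩ := split x
    simp [j0 u hu, j1 w hw]
  · ext x
    obtain ⟨u, hu, w, hw, rfl⟩ := split x
    simp [j0 u hu, j1 w hw, j1 _ (h0 u hu), j0 _ (h1 w hw), add_comm]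

lemma BB_unip (h2 : (2:F) ≠ 0) (A : Module.End F V) (hA : IsNilpotent (A - 1)) : BB A := by
  have hu2 : IsUnit ((2 : F) • (1 : Module.End F V)) := by
    refine ⟨⟨(2:F) • 1, (2:F)⁻¹ • 1, ?_, ?_⟩, rfl⟩ <;> simp [h2]
  have hu : IsUnit (A + 1) := by
    have e : A + 1 = (2:F) • (1 : Module.End F V) + (A - 1) := by
      rw [two_smul]; abel
    rw [e]
    exact hA.isUnit_add_left_of_commute hu2 ((Commute.one_right _).smul_right _)
  obtain ⟨u, hu⟩ := hu
  have hAu : Commute A (u : Module.End F V) := by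
    rw [hu]; exact (Commute.refl A).add_right (Commute.one_right A)
  have hAui : Commute A ((u⁻¹ : (Module.End F V)ˣ) : Module.End F V) := hAu.units_inv_right
  have hNui : Commute (A - 1) ((u⁻¹ : (Module.End F V)ˣ) : Module.End F V) :=
    hAui.sub_left (Commute.one_left _)
  set M : Module.End F V := (A - 1) * ((u⁻¹ : (Module.End F V)ˣ) : Module.End F V) with hMdef
  have hM : IsNilpotent M := hNui.isNilpotent_mul_right hA
  have hMu : M * u = A - 1 := by simp [hMdef, mul_assoc]
  obtain ⟨J, hJ, hJM⟩ := nil_anti M hM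
  refine ⟨J, hJ, ?_⟩
  have hAM : A * (1 - M) = 1 + M := by
    have : (A * (1 - M)) * u = (1 + M) * u := by
      rw [mul_assoc, sub_mul, add_mul, hMu, one_mul, hu]
      noncomm_ring
    exact u.isUnit.mul_right_cancel this
  obtain ⟨v, hv⟩ := hM.isUnit_one_sub
  apply v.isUnit.mul_right_cancel
  rw [hv]
  have e1 : J * (1 + M) = (1 - M) * J := by
    rw [mul_add, hJM]; noncomm_ring
  have e2 : J * (1 - M) = (1 + M) * J := by
    rw [mul_sub, hJM]; noncomm_ring
  calc J * A * (J * A) * (1 - M) = J * A * J * (A * (1 - M)) := by noncomm_ring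
    _ = J * A * (J * (1 + M)) := by rw [hAM]; noncomm_ring
    _ = J * (A * (1 - M)) * J := by rw [e1]; noncomm_ring
    _ = (1 - M) * (J * J) := by rw [hAM, e1]; noncomm_ring
    _ = 1 * (1 - M) := by rw [hJ]; noncomm_ring

lemma BB_glue (A : Module.End F V) (K R : Submodule F V) (hc : IsCompl K R)
    (hK : ∀ x ∈ K, A x ∈ K) (hR : ∀ x ∈ R, A x ∈ R)
    (bK : BB (A.restrict hK)) (bR : BB (A.restrict hR)) : BB A := by
  obtain ⟨JK, k1, k2⟩ := bK
  obtain ⟨JR, r1, r2⟩ := bR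
  let J : Module.End F V := LinearMap.ofIsCompl hc (K.subtype ∘ₗ JK) (R.subtype ∘ₗ JR)
  have j0 : ∀ x : K, J x = JK x := fun x =>
    LinearMap.ofIsCompl_apply_left hc (φ := K.subtype ∘ₗ JK) (ψ := R.subtype ∘ₗ JR) x
  have j1 : ∀ x : R, J x = JR x := fun x =>
    LinearMap.ofIsCompl_apply_right hc (φ := K.subtype ∘ₗ JK) (ψ := R.subtype ∘ₗ JR) x
  have split : ∀ x : V, ∃ u : K, ∃ w : R, (u:V) + w = x := fun x => by
    obtain ⟨u, hu, w, hw, h⟩ := Submodule.mem_sup.1 (hc.sup_eq_top ▸ Submodule.mem_top : x ∈ K ⊔ R)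
    exact ⟨⟨u, hu⟩, ⟨w, hw⟩, h⟩
  have a0 : ∀ x : K, A x = (A.restrict hK x : K) := fun x => rfl
  have a1 : ∀ x : R, A x = (A.restrict hR x : R) := fun x => rfl
  refine ⟨J, ?_, ?_⟩
  · ext x
    obtain ⟨u, w, rfl⟩ := split x
    have e1 := LinearMap.congr_fun k1 u
    have e2 := LinearMap.congr_fun r1 w
    simp only [Module.End.mul_apply, Module.End.one_apply] at e1 e2 ⊢
    rw [map_add, map_add, j0, j1, j0, j1, e1, e2]
  · ext x
    obtain ⟨u, w, rfl⟩ := split x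
    have e1 := LinearMap.congr_fun k2 u
    have e2 := LinearMap.congr_fun r2 w
    simp only [Module.End.mul_apply, Module.End.one_apply] at e1 e2 ⊢
    rw [map_add, map_add, map_add, map_add, a0, a1, j0, j1, a0, a1, j0, j1, e1, e2]

variable {W : Type*} [AddCommGroup W] [Module F W]

lemma BB_pull (B : Module.End F W) (A J : Module.End F V) (hJ : J * J = 1)
    (hJA : (J * A) * (J * A) = 1) (q : W →ₗ[F] V) (hq : Function.Injective q)
    (hqB : ∀ x, q (B x) = A (q x)) (hr : ∀ x, ∃ y, q y = J (q x)) : BB B := by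
  choose j hj using hr
  let J' : Module.End F W :=
    { toFun := j
      map_add' := fun x y => hq (by simp [hj])
      map_smul' := fun c x => hq (by simp [hj]) }
  have hJ' : ∀ x, q (J' x) = J (q x) := hj
  refine ⟨J', ?_, ?_⟩
  · ext x
    apply hq
    have := LinearMap.congr_fun hJ (q x)
    simp only [Module.End.mul_apply, Module.End.one_apply] at this ⊢
    rw [hJ', hJ', this]
  · ext x
    apply hq
    have := LinearMap.congr_fun hJA (q x)
    simp only [Module.End.mul_apply, Module.End.one_apply] at this ⊢
    rw [hJ', hqB, hJ', hqB, this]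

lemma BB_ext [FiniteDimensional F V] (h2 : (2:F) ≠ 0) (A : Module.End F V) (A' : Module.End F W)
    (p : V →ₗ[F] W) (hp : Function.Surjective p) (hA' : BB A')
    (hpA : ∀ x, p (A x) = A' (p x)) (hker : ∀ x, p x = 0 → A x = x) : BB A := by
  obtain ⟨J, hJ, hJA⟩ := hA'
  obtain ⟨m, hm, hm1⟩ := ((LinearMap.eventually_isCompl_ker_pow_range_pow (A - 1)).and
    (Filter.eventually_ge_atTop 1)).exists
  set N : Module.End F V := A - 1 with hN
  have hcomm : A * N ^ m = N ^ m * A := by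
    have : Commute A N := (Commute.refl A).sub_right (Commute.one_right A)
    exact this.pow_right m
  have hc' : ∀ x, A ((N^m) x) = (N^m) (A x) := fun x => LinearMap.congr_fun hcomm x
  have hK : ∀ x ∈ LinearMap.ker (N^m), A x ∈ LinearMap.ker (N^m) := fun x hx => by
    rw [LinearMap.mem_ker] at *
    rw [← hc', hx, map_zero]
  have hR : ∀ x ∈ LinearMap.range (N^m), A x ∈ LinearMap.range (N^m) := by
    rintro _ ⟨x, rfl⟩
    exact ⟨A x, (hc' x).symm⟩
  have hpN : ∀ k x, p ((N^k) x) = ((A' - 1)^k) (p x) := by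
    intro k
    induction k with
    | zero => intro x; simp
    | succ k ih =>
      intro x
      rw [pow_succ, pow_succ, Module.End.mul_apply, Module.End.mul_apply, ih]
      simp [hN, hpA]
  refine BB_glue A _ _ hm hK hR ?_ ?_
  · apply BB_unip h2
    refine ⟨m, ?_⟩
    have : ∀ k (x : LinearMap.ker (N^m)), (((A.restrict hK - 1)^k) x : V) = (N^k) x := by
      intro k
      induction k with
      | zero => intro x; simp
      | succ k ih =>
        intro x
        rw [pow_succ, pow_succ, Module.End.mul_apply, Module.End.mul_apply, ih]
        simp [hN]
    ext x
    rw [this]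
    simp
  · refine BB_pull _ A' J hJ hJA (p ∘ₗ (LinearMap.range (N^m)).subtype) ?_ ?_ ?_
    · rw [injective_iff_map_eq_zero]
      intro x hx
      have h1 := hker x hx
      have h3 : (x : V) ∈ LinearMap.ker (N^m) := by
        have h4 : N ^ m = N ^ (m - 1) * N := by rw [← pow_succ, Nat.sub_add_cancel hm1]
        have h5 : (N ^ m) (x : V) = (N ^ (m - 1)) (N x) := LinearMap.congr_fun h4 x
        rw [LinearMap.mem_ker, h5]
        simp [hN, h1]
      have := (Submodule.disjoint_def.1 hm.disjoint) x h3 x.2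
      exact Subtype.ext this
    · intro x
      exact hpA x
    · have hC : A' * (J * A' * J) = 1 := by
        have : J * (J * A' * (J * A')) * J = 1 := by rw [hJA]; simp [hJ]
        calc A' * (J * A' * J) = (J * J) * (A' * (J * A' * J)) := by rw [hJ, one_mul]
          _ = J * (J * A' * (J * A')) * J := by noncomm_ring
          _ = 1 := this
      set C := J * A' * J with hCdef
      have hJA1 : J * (A' - 1) = (A' - 1) * (-C * J) := by
        have : C * J = J * A' := by rw [hCdef, mul_assoc, hJ, mul_one]
        calc J * (A' - 1) = C * J - J := by rw [this]; noncomm_ring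
          _ = - (A' * C - C) * J := by rw [hC]; noncomm_ring
          _ = _ := by noncomm_ring
      have hJk : ∀ k, ∃ D, J * (A' - 1)^k = (A' - 1)^k * D := by
        have hCc : Commute (-C) (A' - 1) := by
          have hC' : C * A' = 1 := by rw [hCdef]; rw [← hJA]; noncomm_ring
          have : Commute C A' := by rw [Commute, SemiconjBy, hC, hC']
          exact (this.sub_right (Commute.one_right _)).neg_left
        intro k
        refine ⟨(-C)^k * J, ?_⟩
        induction k with
        | zero => simp
        | succ k ih =>
          calc J * (A' - 1)^(k+1) = (J * (A' - 1)^k) * (A' - 1) := by rw [pow_succ, mul_assoc]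
            _ = (A' - 1)^k * ((-C)^k * (J * (A' - 1))) := by rw [ih]; noncomm_ring
            _ = (A' - 1)^k * (((-C)^k * (A' - 1)) * (-C * J)) := by rw [hJA1]; noncomm_ring
            _ = (A' - 1)^k * (((A' - 1) * (-C)^k) * (-C * J)) := by rw [(hCc.pow_left k).eq]
            _ = _ := by rw [pow_succ, pow_succ]; noncomm_ring
      obtain ⟨D, hD⟩ := hJk m
      rintro ⟨_, x, rfl⟩
      obtain ⟨y, hy⟩ := hp (D (p x))
      refine ⟨⟨(N^m) y, y, rfl⟩, ?_⟩
      simp only [LinearMap.comp_apply, Submodule.subtype_apply, hpN, hy]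
      exact (LinearMap.congr_fun hD (p x)).symm

end partA


section partB
variable {F : Type*} [Field F] {V : Type*} [AddCommGroup V] [Module F V]

/-- rank one endomorphism -/
def rk (z : V) (g : V →ₗ[F] F) : Module.End F V := g.smulRight z

lemma rk_apply (z : V) (g : V →ₗ[F] F) (v : V) : rk z g v = g v • z := rfl

lemma mul_rk (G : Module.End F V) (z : V) (g : V →ₗ[F] F) : G * rk z g = rk (G z) g := by
  ext v; simp [rk_apply]

lemma dual_family {ι : Type*} [DecidableEq ι] (v : ι → V) (hv : LinearIndependent F v) :
    ∃ f : ι → (V →ₗ[F] F), ∀ i j, f i (v j) = if i = j then 1 else 0 := by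
  obtain ⟨g, hg⟩ := LinearMap.exists_extend (hv.repr : _ →ₗ[F] (ι →₀ F))
  refine ⟨fun i => (Finsupp.lapply i) ∘ₗ g, fun i j => ?_⟩
  have hj : v j ∈ Submodule.span F (Set.range v) := Submodule.subset_span ⟨j, rfl⟩
  have h1 : g (v j) = Finsupp.single j 1 := by
    have := LinearMap.congr_fun hg ⟨v j, hj⟩
    simp only [LinearMap.comp_apply, Submodule.subtype_apply] at this
    rw [this]
    exact hv.repr_eq_single j _ rfl
  simp [h1, Finsupp.single_apply, eq_comm]

lemma dual_pair (w u : V) (hw : w ≠ 0) (hu : ∀ c : F, c • w ≠ u) :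
    ∃ f1 f2 : V →ₗ[F] F, f1 w = 1 ∧ f1 u = 0 ∧ f2 w = 0 ∧ f2 u = 1 := by
  have hli : LinearIndependent F ![w, u] := (LinearIndependent.pair_iff' hw).2 hu
  obtain ⟨f, hf⟩ := dual_family _ hli
  exact ⟨f 0, f 1, by simpa using hf 0 0, by simpa using hf 0 1, by simpa using hf 1 0,
    by simpa using hf 1 1⟩

lemma dual_one (z : V) (hz : z ≠ 0) : ∃ f : V →ₗ[F] F, f z = 1 := by
  obtain ⟨f, hf⟩ := dual_family (F := F) ![z] (by simpa using hz)
  exact ⟨f 0, by simpa using hf 0 0⟩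

lemma eq_zero_of_dual (v : V) (h : ∀ f : V →ₗ[F] F, f v = 0) : v = 0 := by
  by_contra hv
  obtain ⟨f, hf⟩ := dual_one (F := F) v hv
  simp [h f] at hf

variable [FiniteDimensional F V]

lemma tr_mul_rk (G : Module.End F V) (z : V) (g : V →ₗ[F] F) :
    LinearMap.trace F V (G * rk z g) = g (G z) := by
  rw [mul_rk]; exact LinearMap.trace_smulRight _ _

lemma tr_rk_mul (G : Module.End F V) (z : V) (g : V →ₗ[F] F) :
    LinearMap.trace F V (rk z g * G) = g (G z) := by
  rw [LinearMap.trace_mul_comm, tr_mul_rk]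

lemma tr_rk (z : V) (g : V →ₗ[F] F) : LinearMap.trace F V (rk z g) = g z :=
  LinearMap.trace_smulRight _ _

/-- L5: prescribed image and trace -/
lemma BB_TR (w u : V) (hw : w ≠ 0) (hu : ∀ c : F, c • w ≠ u) (c : F) :
    ∃ A : Module.End F V, BB A ∧ A w = u ∧ LinearMap.trace F V A = c := by
  obtain ⟨f1, f2, a, b, d, e⟩ := dual_pair w u hw hu
  set t : F := c - (Module.finrank F V - 2) with ht
  let A : Module.End F V := 1 + rk (u - w) f1 + rk (-u - w + t • u) f2
  let J : Module.End F V := 1 + rk (u - w) f1 + rk (w - u) f2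
  refine ⟨A, ⟨J, ?_, ?_⟩, ?_, ?_⟩
  · ext v
    simp only [J, Module.End.mul_apply, LinearMap.add_apply, Module.End.one_apply, rk_apply,
      map_add, map_smul, map_sub, a, b, d, e]
    module
  · ext v
    simp only [A, J, Module.End.mul_apply, LinearMap.add_apply, Module.End.one_apply, rk_apply,
      map_add, map_smul, map_sub, map_neg, a, b, d, e]
    module
  · simp only [A, LinearMap.add_apply, Module.End.one_apply, rk_apply, a, d]
    module
  · simp only [A, map_add, tr_rk, LinearMap.trace_one, map_sub, map_neg, map_smul, a, b, d, e,
      smul_eq_mul, ht]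
    ring

lemma exists_indep (h : 2 ≤ Module.finrank F V) (w : V) : ∃ u : V, ∀ c : F, c • w ≠ u := by
  by_contra! hcon
  have : (⊤ : Submodule F V) ≤ Submodule.span F {w} := fun u _ => by
    obtain ⟨c, hc⟩ := hcon u
    exact Submodule.mem_span_singleton.2 ⟨c, hc⟩
  have h1 := Submodule.finrank_mono this
  rw [finrank_top] at h1
  have h2 : Module.finrank F (Submodule.span F {w}) ≤ 1 := (finrank_span_le_card ({w} : Set V)).trans (by simp)
  omega

lemma BB_tr (h : 2 ≤ Module.finrank F V) (c : F) :
    ∃ A : Module.End F V, BB A ∧ LinearMap.trace F V A = c := by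
  have : Nontrivial V := Module.nontrivial_of_finrank_pos (R := F) (by omega)
  obtain ⟨w, hw⟩ := exists_ne (0 : V)
  obtain ⟨u, hu⟩ := exists_indep h w
  obtain ⟨A, h1, _, h3⟩ := BB_TR w u hw hu c
  exact ⟨A, h1, h3⟩

lemma tr_dual (φ : Module.End F V →ₗ[F] F) :
    ∃ X : Module.End F V, ∀ G, φ G = LinearMap.trace F V (G * X) := by
  let L : Module.End F V →ₗ[F] (Module.Dual F (Module.End F V)) :=
    LinearMap.mk₂ F (fun X G => LinearMap.trace F V (G * X))
      (by intros; simp [mul_add]) (by intros; simp) (by intros; simp [add_mul]) (by intros; simp)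
  have hL : ∀ X G, L X G = LinearMap.trace F V (G * X) := fun _ _ => rfl
  have hinj : Function.Injective L := by
    rw [injective_iff_map_eq_zero]
    intro X hX
    ext v
    refine eq_zero_of_dual (F := F) _ fun g => ?_
    rw [← tr_rk_mul, ← hL, hX]; rfl
  have hsurj := (LinearMap.injective_iff_surjective_of_finrank_eq_finrank
    (Subspace.dual_finrank_eq (K := F) (V := Module.End F V)).symm).1 hinj
  obtain ⟨X, hX⟩ := hsurj φ
  exact ⟨X, fun G => by rw [← hX, hL]⟩

lemma factor_on {E E' : Type*} [AddCommGroup E] [Module F E] [AddCommGroup E'] [Module F E']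
    (p : Submodule F E) (φ : E →ₗ[F] E') (ξ : E →ₗ[F] F) (h : ∀ x ∈ p, φ x = 0 → ξ x = 0) :
    ∃ η : E' →ₗ[F] F, ∀ x ∈ p, η (φ x) = ξ x := by
  have : (ξ.domRestrict p : Module.Dual F p) ∈ LinearMap.range (φ.domRestrict p).dualMap := by
    rw [LinearMap.range_dualMap_eq_dualAnnihilator_ker, Submodule.mem_dualAnnihilator]
    intro x hx
    exact h x x.2 hx
  obtain ⟨η, hη⟩ := this
  exact ⟨η, fun x hx => LinearMap.congr_fun hη ⟨x, hx⟩⟩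

/-- eigen subspace of endomorphisms -/
def Eg (F : Type*) [Field F] {V : Type*} [AddCommGroup V] [Module F V] (z : V) :
    Submodule F (Module.End F V) :=
  (Submodule.span F {z}).comap (LinearMap.applyₗ z)

lemma mem_Eg (z : V) (G : Module.End F V) : G ∈ Eg F z ↔ ∃ c : F, c • z = G z := by
  simp [Eg, Submodule.mem_span_singleton]

/-- Claim A -/
def ClaimA (F V : Type*) [Field F] [AddCommGroup V] [Module F V] : Prop :=
  ∀ (𝒢 : Submodule F (Module.End F V)) (X0 : Module.End F V),
    Module.finrank F 𝒢 < Module.finrank F V →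
    ∃ A : Module.End F V, BB A ∧ ∀ G ∈ 𝒢, LinearMap.trace F V (G * A) = LinearMap.trace F V (G * X0)

lemma finrank_kerf (f : V →ₗ[F] F) (z : V) (hz : f z = 1) :
    Module.finrank F (LinearMap.ker f) + 1 = Module.finrank F V := by
  have h1 := LinearMap.finrank_range_add_finrank_ker f
  have h2 : LinearMap.range f = ⊤ := by
    rw [LinearMap.range_eq_top]
    intro c; exact ⟨c • z, by simp [hz]⟩
  rw [h2, finrank_top, Module.finrank_self] at h1
  omega

/-- projection to the kernel of f along z -/
lemma exists_proj (f : V →ₗ[F] F) (z : V) (hz : f z = 1) :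
    ∃ p : V →ₗ[F] LinearMap.ker f, (∀ v, (p v : V) = v - f v • z) ∧ (∀ w : LinearMap.ker f, p w = w) := by
  have h0 : ∀ v, (LinearMap.id - f.smulRight z : V →ₗ[F] V) v ∈ LinearMap.ker f := fun v => by
    simp [hz]
  refine ⟨LinearMap.codRestrict _ (LinearMap.id - f.smulRight z) h0, fun v => rfl, ?_⟩
  intro w
  apply Subtype.ext
  have : f w = 0 := w.2
  change (w : V) - f w • z = w
  rw [this, zero_smul, sub_zero]

lemma step_lemma (h2 : (2:F) ≠ 0) (z : V) (f : V →ₗ[F] F) (hz : f z = 1)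
    (hW : ClaimA F (LinearMap.ker f))
    (𝒢 : Submodule F (Module.End F V)) (X0 : Module.End F V)
    (hfin : Module.finrank F (𝒢 ⊓ Eg F z : Submodule F (Module.End F V)) + 1 < Module.finrank F V)
    (hcond : ∀ g : V →ₗ[F] F, rk z g ∈ 𝒢 → g z = g (X0 z)) :
    ∃ A : Module.End F V, BB A ∧
      ∀ G ∈ 𝒢, LinearMap.trace F V (G * A) = LinearMap.trace F V (G * X0) := by
  obtain ⟨p, hp, hpw⟩ := exists_proj f z hz
  let Φ : Module.End F V →ₗ[F] Module.End F (LinearMap.ker f) :=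
    { toFun := fun G => p ∘ₗ G ∘ₗ (LinearMap.ker f).subtype
      map_add' := by intros; ext; simp
      map_smul' := by intros; ext; simp }
  have hΦ : ∀ G, Φ G = p ∘ₗ G ∘ₗ (LinearMap.ker f).subtype := fun _ => rfl
  have hpz : ∀ v, p v = 0 → v = f v • z := fun v hv => by
    have := hp v
    rw [hv] at this
    exact (sub_eq_zero.1 this.symm)
  have hpz0 : p z = 0 := by
    ext; rw [hp]; simp [hz]
  let τ : Module.End F V →ₗ[F] F := LinearMap.trace F V ∘ₗ LinearMap.mulRight F X0
  have hτ : ∀ G, τ G = LinearMap.trace F V (G * X0) := fun _ => rfl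
  let ξ0 : Module.End F V →ₗ[F] F := τ - f ∘ₗ LinearMap.applyₗ z
  have hξ0 : ∀ G, ξ0 G = LinearMap.trace F V (G * X0) - f (G z) := fun _ => rfl
  obtain ⟨η, hη⟩ := factor_on (𝒢 ⊓ Eg F z) Φ ξ0 (by
    rintro G ⟨hG, hGz⟩ hG0
    obtain ⟨c, hc⟩ := (mem_Eg z G).1 hGz
    have hGrk : G = rk z (f ∘ₗ G) := by
      ext v
      have h1 : p (G (p v)) = 0 := LinearMap.congr_fun hG0 (p v)
      have h3 : p (G v) = 0 := by
        rw [hp, map_sub, map_sub, map_smul, ← hc] at h1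
        simpa [hpz0] using h1
      exact hpz _ h3
    have h4 := hcond (f ∘ₗ G) (hGrk ▸ hG)
    rw [hξ0]
    have h5 : LinearMap.trace F V (G * X0) = (f ∘ₗ G) (X0 z) := by
      rw [← tr_rk_mul, ← hGrk]
    rw [h5, ← h4]
    simp)
  obtain ⟨X0', hX0'⟩ := tr_dual η
  have hfr := finrank_kerf f z hz
  obtain ⟨A', hA', hA'2⟩ := hW ((𝒢 ⊓ Eg F z).map Φ) X0' (by
    have := Submodule.finrank_map_le Φ (𝒢 ⊓ Eg F z)
    omega)
  let ξ1 : Module.End F V →ₗ[F] F := ξ0 - LinearMap.trace F (LinearMap.ker f) ∘ₗ LinearMap.mulRight F A' ∘ₗ Φ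
  have hξ1 : ∀ G, ξ1 G = ξ0 G - LinearMap.trace F (LinearMap.ker f) (Φ G * A') := fun _ => rfl
  obtain ⟨y, hy⟩ := factor_on 𝒢 (p ∘ₗ LinearMap.applyₗ z) ξ1 (by
    intro G hG hG0
    have hG0' : p (G z) = 0 := hG0
    have hGz : G ∈ Eg F z := (mem_Eg z G).2 ⟨f (G z), (hpz _ hG0').symm⟩
    rw [hξ1, hA'2 _ ⟨G, ⟨hG, hGz⟩, rfl⟩, ← hX0', hη G ⟨hG, hGz⟩, sub_self])
  let A : Module.End F V := rk z f + rk z (y ∘ₗ p) + (LinearMap.ker f).subtype ∘ₗ A' ∘ₗ p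
  have hAv : ∀ v, A v = f v • z + y (p v) • z + (A' (p v) : (LinearMap.ker f)) := fun v => rfl
  refine ⟨A, BB_ext h2 A A' p (fun w => ⟨w, hpw w⟩) hA' ?_ ?_, ?_⟩
  · intro v
    rw [hAv]; simp [hpz0, hpw]
  · intro v hv
    rw [hAv, hv]; simp [← hpz v hv]
  · intro G hG
    have e1 : LinearMap.trace F V (G * ((LinearMap.ker f).subtype ∘ₗ A' ∘ₗ p)) = LinearMap.trace F (LinearMap.ker f) (Φ G * A') := by
      have := LinearMap.trace_comp_comm' (R := F) p (G ∘ₗ (LinearMap.ker f).subtype ∘ₗ A')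
      exact this
    have e2 : y (p (G z)) = ξ1 G := hy G hG
    simp only [A, mul_add, map_add, tr_mul_rk, e1, LinearMap.comp_apply, e2, hξ1, hξ0]
    ring

lemma eig_same (G : Module.End F V) (x y : V) (hx : x ≠ 0) (hy : ∀ c : F, c • x ≠ y) (a b c : F)
    (h1 : G x = a • x) (h2 : G y = b • y) (h3 : G (x + y) = c • (x + y)) : a = b := by
  obtain ⟨f1, f2, e1, e2, e3, e4⟩ := dual_pair x y hx hy
  rw [map_add, h1, h2] at h3
  have i1 := congrArg f1 h3
  have i2 := congrArg f2 h3
  simp [e1, e2, e3, e4] at i1 i2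
  rw [i1, i2]

lemma eig_lemma (h2 : (2:F) ≠ 0) (P : Submodule F V) (hP : P ≠ ⊤) (G : Module.End F V)
    (h : ∀ z, z ∉ P → ∃ c : F, c • z = G z) : ∃ c : F, ∀ v, G v = c • v := by
  obtain ⟨z0, hz0⟩ : ∃ z, z ∉ P := by
    by_contra! hc
    exact hP (eq_top_iff.2 fun x _ => hc x)
  obtain ⟨l, hl⟩ := h z0 hz0
  have hz00 : z0 ≠ 0 := fun h0 => hz0 (h0 ▸ P.zero_mem)
  have main : ∀ z, z ∉ P → G z = l • z := by
    intro z hz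
    by_cases hd : ∃ c : F, c • z0 = z
    · obtain ⟨c, rfl⟩ := hd
      rw [map_smul, ← hl, smul_comm]
    · push Not at hd
      obtain ⟨m, hm⟩ := h z hz
      by_cases h3 : z0 + z ∈ P
      · have h4 : z0 + (-z) ∉ P := fun h4 => hz0 (by
          have h5 := P.add_mem h3 h4
          have h6 : (2:F) • z0 ∈ P := by convert h5 using 1; rw [two_smul]; abel
          exact (P.smul_mem_iff h2).1 h6)
        obtain ⟨c, hc⟩ := h _ h4
        have := eig_same G z0 (-z) hz00 (fun c hc => hd (-c) (by rw [neg_smul, hc, neg_neg])) l m c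
          hl.symm (by rw [map_neg, ← hm, smul_neg]) hc.symm
        rw [← hm, this]
      · obtain ⟨c, hc⟩ := h _ h3
        have := eig_same G z0 z hz00 hd l m c hl.symm hm.symm hc.symm
        rw [← hm, this]
  refine ⟨l, fun v => ?_⟩
  by_cases hv : v ∈ P
  · have h3 : z0 + v ∉ P := fun h3 => hz0 (by simpa using P.sub_mem h3 hv)
    have := main _ h3
    rw [map_add, main z0 hz0, smul_add] at this
    exact add_left_cancel this
  · exact main v hv

lemma basis_of_span (S : Set V) (hS : Submodule.span F S = ⊤) :
    ∃ b : Module.Basis (Fin (Module.finrank F V)) F V, ∀ i, b i ∈ S := by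
  let b := Module.Basis.ofSpan (K := F) hS.ge
  refine ⟨b.reindex (b.indexEquiv (Module.finBasis F V)), fun i => ?_⟩
  rw [Module.Basis.reindex_apply]
  exact Module.Basis.ofSpan_subset hS.ge ⟨_, rfl⟩

lemma li_rk {ι : Type*} (z : ι → V) (hz : LinearIndependent F z) (g : ι → (V →ₗ[F] F))
    (hg : ∀ i, g i ≠ 0) : LinearIndependent F (fun i => rk (z i) (g i)) := by
  rw [linearIndependent_iff'] at hz ⊢
  intro s c hc i hi
  by_contra hci
  apply hg i
  ext v
  have h1 := LinearMap.congr_fun hc v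
  have h3 := hz s (fun i => c i * g i v) (by
    simpa [rk_apply, smul_smul, LinearMap.sum_apply] using h1) i hi
  simpa [hci] using h3

lemma span_rk_ne_top (𝒢 : Submodule F (Module.End F V))
    (h : Module.finrank F 𝒢 < Module.finrank F V) :
    Submodule.span F {z : V | ∃ g : V →ₗ[F] F, g ≠ 0 ∧ rk z g ∈ 𝒢} ≠ ⊤ := by
  intro hS
  obtain ⟨b, hb⟩ := basis_of_span _ hS
  choose g hg hg2 using hb
  have hli := li_rk b b.linearIndependent g hg
  have hli' : LinearIndependent F (fun i => (⟨rk (b i) (g i), hg2 i⟩ : 𝒢)) :=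
    LinearIndependent.of_comp 𝒢.subtype hli
  have := hli'.fintype_card_le_finrank
  simp at this
  omega

end partB

theorem claimA_all (F : Type*) [Field F] (h2 : (2:F) ≠ 0) (m : ℕ) : ∀ (V : Type*) [AddCommGroup V]
    [Module F V] [FiniteDimensional F V], Module.finrank F V = m + 1 → ClaimA F V := by
  induction m with
  | zero =>
    intro V _ _ _ hV 𝒢 X0 hfin
    have h0 : 𝒢 = ⊥ := Submodule.finrank_eq_zero.1 (by omega)
    refine ⟨1, ⟨1, by simp, by simp⟩, fun G hG => ?_⟩
    rw [h0, Submodule.mem_bot] at hG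
    simp [hG]
  | succ m ih =>
    intro V _ _ _ hV 𝒢 X0 hfin
    set P := Submodule.span F {z : V | ∃ g : V →ₗ[F] F, g ≠ 0 ∧ rk z g ∈ 𝒢} with hPdef
    have hP : P ≠ ⊤ := span_rk_ne_top 𝒢 hfin
    by_cases hcase : ∀ z, z ∉ P → ∀ G ∈ 𝒢, ∃ c : F, c • z = G z
    · obtain ⟨A, hA, hAt⟩ := BB_tr (F := F) (V := V) (by omega) (LinearMap.trace F V X0)
      refine ⟨A, hA, fun G hG => ?_⟩
      obtain ⟨c, hc⟩ := eig_lemma h2 P hP G (fun z hz => hcase z hz G hG)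
      have : G = c • 1 := by ext v; simp [hc]
      rw [this]
      simp [hAt]
    · push Not at hcase
      obtain ⟨z, hz, G1, hG1, hGz⟩ := hcase
      have hz0 : z ≠ 0 := fun h => hz (h ▸ P.zero_mem)
      obtain ⟨f, hf⟩ := dual_one (F := F) z hz0
      have hfr := finrank_kerf f z hf
      refine step_lemma h2 z f hf (ih _ (by omega)) 𝒢 X0 ?_ ?_
      · have hlt : 𝒢 ⊓ Eg F z < 𝒢 := by
          refine lt_of_le_of_ne inf_le_left fun he => ?_
          rw [← he] at hG1
          obtain ⟨c, hc⟩ := (mem_Eg z G1).1 hG1.2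
          exact hGz c hc
        have := Submodule.finrank_lt_finrank_of_lt hlt
        omega
      · intro g hg
        have : g = 0 := by
          by_contra hg0
          exact hz (Submodule.subset_span ⟨g, hg0, hg⟩)
        simp [this]


section partC
variable {F : Type*} [Field F] {V : Type*} [AddCommGroup V] [Module F V]

/-- determinant of three functionals at three vectors -/
def D3 (p q r : V →ₗ[F] F) (x y z : V) : F :=
  p x * (q y * r z - q z * r y) - p y * (q x * r z - q z * r x) + p z * (q x * r y - q y * r x)

lemma D3_span (p q r : V →ₗ[F] F) (u w x y z : V) (hx : x ∈ Submodule.span F {u, w})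
    (hy : y ∈ Submodule.span F {u, w}) (hz : z ∈ Submodule.span F {u, w}) :
    D3 p q r x y z = 0 := by
  obtain ⟨a, b, rfl⟩ := Submodule.mem_span_pair.1 hx
  obtain ⟨c, d, rfl⟩ := Submodule.mem_span_pair.1 hy
  obtain ⟨e, f, rfl⟩ := Submodule.mem_span_pair.1 hz
  simp only [D3, map_add, map_smul, smul_eq_mul]
  ring

variable [FiniteDimensional F V]

lemma D1 (h2 : (2:F) ≠ 0) (h3 : 3 ≤ Module.finrank F V) (𝒢 : Submodule F (Module.End F V))
    (hfin : Module.finrank F 𝒢 = Module.finrank F V)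
    (hH : ∀ A : Module.End F V, BB A → ∃ G ∈ 𝒢, LinearMap.trace F V (G * A) ≠ 0)
    (z : V) (hz : z ≠ 0) (hi : ∀ g : V →ₗ[F] F, rk z g ∈ 𝒢 → g z = 0) :
    Module.finrank F V ≤ Module.finrank F (𝒢 ⊓ Eg F z : Submodule F (Module.End F V)) + 1 ∧
    ∃ w, ∀ G ∈ 𝒢, G z ∈ Submodule.span F {z, w} := by
  obtain ⟨f, hf⟩ := dual_one (F := F) z hz
  have hfr := finrank_kerf f z hf
  have h1 : Module.finrank F V ≤
      Module.finrank F (𝒢 ⊓ Eg F z : Submodule F (Module.End F V)) + 1 := by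
    by_contra! hlt
    obtain ⟨A, hA, hA2⟩ := step_lemma h2 z f hf
      (claimA_all F h2 (Module.finrank F (LinearMap.ker f) - 1) _ (by omega)) 𝒢 0 hlt
      (fun g hg => by simp [hi g hg])
    obtain ⟨G, hG, hG2⟩ := hH A hA
    exact hG2 (by simpa using hA2 G hG)
  refine ⟨h1, ?_⟩
  by_cases hle : 𝒢 ≤ Eg F z
  · refine ⟨0, fun G hG => ?_⟩
    obtain ⟨c, hc⟩ := (mem_Eg z G).1 (hle hG)
    exact Submodule.mem_span_pair.2 ⟨c, 0, by simpa using hc⟩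
  · obtain ⟨G1, hG1, hG1'⟩ := Set.not_subset.1 hle
    refine ⟨G1 z, fun G hG => ?_⟩
    have hlt : 𝒢 ⊓ Eg F z < (𝒢 ⊓ Eg F z) ⊔ Submodule.span F {G1} := by
      refine lt_of_le_of_ne le_sup_left fun he => hG1' ?_
      have : G1 ∈ 𝒢 ⊓ Eg F z := by
        rw [he]; exact Submodule.mem_sup_right (Submodule.mem_span_singleton_self _)
      exact this.2
    have hlt' := Submodule.finrank_lt_finrank_of_lt hlt
    have hle2 : (𝒢 ⊓ Eg F z) ⊔ Submodule.span F {G1} ≤ 𝒢 :=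
      sup_le inf_le_left ((Submodule.span_singleton_le_iff_mem _ _).2 hG1)
    have heq := Submodule.eq_of_le_of_finrank_le hle2 (by omega)
    rw [← heq] at hG
    obtain ⟨K, hK, L, hL, rfl⟩ := Submodule.mem_sup.1 hG
    obtain ⟨c, rfl⟩ := Submodule.mem_span_singleton.1 hL
    obtain ⟨d, hd⟩ := (mem_Eg z K).1 hK.2
    exact Submodule.mem_span_pair.2 ⟨d, c, by simp [hd]⟩

/-- Case 1: the set S spans. -/
lemma D_case1 (h2 : (2:F) ≠ 0) (h3 : 3 ≤ Module.finrank F V) (𝒢 : Submodule F (Module.End F V))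
    (hfin : Module.finrank F 𝒢 = Module.finrank F V)
    (hD : ∀ z : V, z ≠ 0 → (∀ g : V →ₗ[F] F, rk z g ∈ 𝒢 → g z = 0) →
      ∃ w, ∀ G ∈ 𝒢, G z ∈ Submodule.span F {z, w})
    (hS : Submodule.span F {z : V | ∃ g : V →ₗ[F] F, g z ≠ 0 ∧ rk z g ∈ 𝒢} = ⊤) :
    ∃ g : V →ₗ[F] F, g ≠ 0 ∧ ∀ z, rk z g ∈ 𝒢 := by
  classical
  obtain ⟨b, hb⟩ := basis_of_span _ hS
  choose g hg hg2 using hb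
  have hg0 : ∀ i, g i ≠ 0 := fun i h => hg i (by simp [h])
  have hli := li_rk b b.linearIndependent g hg0
  have hspan : 𝒢 = Submodule.span F (Set.range fun i => rk (b i) (g i)) := by
    symm
    apply Submodule.eq_of_le_of_finrank_le
    · rw [Submodule.span_le]; rintro _ ⟨i, rfl⟩; exact hg2 i
    · rw [finrank_span_eq_card hli, hfin]; simp
  by_contra hcon
  have key : ∀ z : V, (∀ k, b.coord k z ≠ 0) → ∀ i j, i ≠ j → g i z = 0 ∨ g j z = 0 := by
    intro z hz i j hij
    have hz0 : z ≠ 0 := fun h => hz i (by simp [h])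
    obtain ⟨w, hw⟩ := hD z hz0 (by
      intro g' hg'
      by_contra hg'0
      apply hcon
      refine ⟨g', fun h => hg'0 (by simp [h]), ?_⟩
      rw [hspan] at hg'
      obtain ⟨d, hd⟩ := (Submodule.mem_span_range_iff_exists_fun F).1 hg'
      have hcoef : ∀ k v, d k * g k v = g' v * b.coord k z := by
        intro k v
        have h1 := congrArg (b.coord k) (LinearMap.congr_fun hd v)
        simpa [rk_apply, LinearMap.sum_apply, Finsupp.single_apply] using h1
      have hk : ∀ k, rk (b k) g' ∈ 𝒢 := by
        intro k
        have : rk (b k) g' = ((b.coord k z)⁻¹ * d k) • rk (b k) (g k) := by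
          ext v
          rw [LinearMap.smul_apply, rk_apply, rk_apply, smul_smul, mul_assoc, hcoef,
            mul_comm (g' v), inv_mul_cancel_left₀ (hz k)]
        rw [this]
        exact 𝒢.smul_mem _ (hg2 k)
      intro v
      have : rk v g' = ∑ k, b.repr v k • rk (b k) g' := by
        ext x
        simp only [rk_apply, LinearMap.sum_apply, LinearMap.smul_apply]
        conv_lhs => rw [← b.sum_repr v, Finset.smul_sum]
        exact Finset.sum_congr rfl fun k _ => smul_comm _ _ _
      rw [this]
      exact 𝒢.sum_mem fun k _ => 𝒢.smul_mem _ (hk k))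
    by_contra! hne
    have hm : ∀ i, g i z ≠ 0 → b i ∈ Submodule.span F {z, w} := fun i hi => by
      have := hw _ (hg2 i)
      rw [rk_apply] at this
      exact (Submodule.smul_mem_iff _ hi).1 this
    obtain ⟨k, hk⟩ : ∃ k, k ∉ ({i, j} : Finset (Fin (Module.finrank F V))) := by
      by_contra! hall
      have h1 : (Finset.univ : Finset (Fin (Module.finrank F V))) ⊆ {i, j} := fun x _ => hall x
      have h4 := Finset.card_le_card h1
      have h5 : ({i, j} : Finset (Fin (Module.finrank F V))).card ≤ 2 := Finset.card_le_two
      rw [Finset.card_univ, Fintype.card_fin] at h4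
      omega
    simp only [Finset.mem_insert, Finset.mem_singleton, not_or] at hk
    have h4 := D3_span (b.coord i) (b.coord j) (b.coord k) z w (b i) (b j) z (hm i hne.1)
      (hm j hne.2) (Submodule.subset_span (by simp))
    have hz' := hz k
    simp only [Module.Basis.coord_apply] at hz'
    simp [D3, Finsupp.single_apply, hij, hij.symm, Ne.symm hk.1, Ne.symm hk.2, hz'] at h4
  set z : V := ∑ i, b i with hz
  have hzc : ∀ k, b.coord k z = 1 := fun k => by
    simp [hz, Finsupp.single_apply]
  have two : ∃ i j, i ≠ j ∧ g i z = 0 ∧ g j z = 0 := by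
    have k01 := key z (fun k => by simp [hzc]) ⟨0, by omega⟩ ⟨1, by omega⟩ (by simp)
    have k02 := key z (fun k => by simp [hzc]) ⟨0, by omega⟩ ⟨2, by omega⟩ (by simp)
    have k12 := key z (fun k => by simp [hzc]) ⟨1, by omega⟩ ⟨2, by omega⟩ (by simp)
    rcases k01 with h | h
    · rcases k12 with h' | h'
      · exact ⟨_, _, by simp, h, h'⟩
      · exact ⟨_, _, by simp, h, h'⟩
    · rcases k02 with h' | h'
      · exact ⟨_, _, by simp, h, h'⟩
      · exact ⟨_, _, by simp, h, h'⟩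
  obtain ⟨i, j, hij, hi, hj⟩ := two
  have hone : ∀ i k, b.coord k (z - (2:F) • b i) ≠ 0 := by
    intro i k
    rw [map_sub, hzc, map_smul]
    by_cases hik : i = k
    · subst hik
      simp only [Module.Basis.coord_apply, Module.Basis.repr_self, Finsupp.single_eq_same,
        smul_eq_mul, mul_one]
      intro h
      apply one_ne_zero (α := F)
      linear_combination -h
    · simp [hik]
  have a1 : g j (b i) = 0 := by
    rcases key _ (hone i) i j hij with h | h
    · simp [hi, h2, hg i] at h
    · simpa [hj, h2] using h
  have a2 : g i (b j) = 0 := by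
    rcases key _ (hone j) i j hij with h | h
    · simpa [hi, h2] using h
    · simp [hj, h2, hg j] at h
  have hboth : ∀ k, b.coord k (z - (2:F) • b i - (2:F) • b j) ≠ 0 := by
    intro k
    by_cases hjk : j = k
    · subst hjk
      rw [map_sub, map_sub, hzc, map_smul, map_smul]
      simp only [Module.Basis.coord_apply, Module.Basis.repr_self, Finsupp.single_eq_same,
        smul_eq_mul, mul_one]
      rw [Finsupp.single_eq_of_ne (Ne.symm hij)]
      intro h
      apply one_ne_zero (α := F)
      linear_combination -h
    · have := hone i k
      rw [map_sub _ (z - (2:F) • b i), map_smul]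
      simpa [hjk] using this
  rcases key _ hboth i j hij with h | h
  · simp [hi, a2, h2, hg i] at h
  · simp [hj, a1, h2, hg j] at h

/-- Case 2: S is contained in a line. -/
lemma D_case2 (h2 : (2:F) ≠ 0) (𝒢 : Submodule F (Module.End F V))
    (hD : ∀ z : V, z ≠ 0 → (∀ g : V →ₗ[F] F, rk z g ∈ 𝒢 → g z = 0) →
      ∃ w, ∀ G ∈ 𝒢, G z ∈ Submodule.span F {z, w})
    (hS : Submodule.span F {z : V | ∃ g : V →ₗ[F] F, g z ≠ 0 ∧ rk z g ∈ 𝒢} ≠ ⊤) :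
    ∃ s : V, ∀ z, (∀ c : F, c • s ≠ z) → ∀ g : V →ₗ[F] F, rk z g ∈ 𝒢 → g z = 0 := by
  set S := {z : V | ∃ g : V →ₗ[F] F, g z ≠ 0 ∧ rk z g ∈ 𝒢} with hSdef
  set P := Submodule.span F S with hP
  by_cases hne : S.Nonempty
  · obtain ⟨h1, hh1⟩ := hne
    refine ⟨h1, fun k hk gk hgk => ?_⟩
    by_contra hgk0
    have hkS : k ∈ S := ⟨gk, hgk0, hgk⟩
    have hh1' := hh1
    obtain ⟨g1, hg1, hG1⟩ := hh1
    have h10 : h1 ≠ 0 := fun h => hg1 (by simp [h])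
    obtain ⟨f1, f2, e1, e2, e3, e4⟩ := dual_pair h1 k h10 hk
    have P1 : h1 ∈ P := Submodule.subset_span hh1'
    have P2 : k ∈ P := Submodule.subset_span hkS
    have key : ∀ z, z ∉ P → g1 z = 0 ∨ gk z = 0 := by
      intro z hz
      have hz0 : z ≠ 0 := fun h => hz (h ▸ P.zero_mem)
      obtain ⟨w, hw⟩ := hD z hz0 (fun g hg => by
        by_contra hg0
        exact hz (Submodule.subset_span ⟨g, hg0, hg⟩))
      by_contra! hne
      obtain ⟨r, hr, hrP⟩ := Submodule.exists_le_ker_of_notMem hz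
      have m1 : h1 ∈ Submodule.span F {z, w} := by
        have := hw _ hG1
        rw [rk_apply] at this
        exact (Submodule.smul_mem_iff _ hne.1).1 this
      have m2 : k ∈ Submodule.span F {z, w} := by
        have := hw _ hgk
        rw [rk_apply] at this
        exact (Submodule.smul_mem_iff _ hne.2).1 this
      have h4 := D3_span f1 f2 r z w h1 k z m1 m2 (Submodule.subset_span (by simp))
      have r1 : r h1 = 0 := hrP P1
      have r2 : r k = 0 := hrP P2
      simp [D3, e1, e2, e3, e4, r1, r2, hr] at h4
    obtain ⟨z, hz⟩ : ∃ z, z ∉ P := by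
      by_contra! hc
      exact hS (eq_top_iff.2 fun x _ => hc x)
    have hadd : ∀ z, z ∉ P → ∀ h ∈ P, z + h ∉ P := fun z hz h hh hc =>
      hz (by simpa using P.sub_mem hc hh)
    have hsub : ∀ z, z ∉ P → ∀ h ∈ P, z - h ∉ P := fun z hz h hh hc =>
      hz (by simpa using P.add_mem hc hh)
    by_cases c1 : g1 z = 0
    · by_cases c2 : gk z = 0
      · have b1 : gk h1 = 0 := by
          rcases key _ (hadd z hz h1 P1) with h | h
          · simp [c1, hg1] at h
          · simpa [c2] using h
        have b2 : g1 k = 0 := by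
          rcases key _ (hadd z hz k P2) with h | h
          · simpa [c1] using h
          · simp [c2, hgk0] at h
        rcases key _ (hadd _ (hadd z hz h1 P1) k P2) with h | h
        · simp [c1, b2, hg1] at h
        · simp [c2, b1, hgk0] at h
      · have b1 : gk (z + h1) = 0 := by
          rcases key _ (hadd z hz h1 P1) with h | h
          · simp [c1, hg1] at h
          · exact h
        have b2 : gk (z - h1) = 0 := by
          rcases key _ (hsub z hz h1 P1) with h | h
          · simp [c1, hg1] at h
          · exact h
        rw [map_add] at b1
        rw [map_sub] at b2
        have : (2:F) * gk z = 0 := by linear_combination b1 + b2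
        simp [h2, c2] at this
    · have c2 : gk z = 0 := by
        rcases key z hz with h | h
        · exact absurd h c1
        · exact h
      have b1 : g1 (z + k) = 0 := by
        rcases key _ (hadd z hz k P2) with h | h
        · exact h
        · simp [c2, hgk0] at h
      have b2 : g1 (z - k) = 0 := by
        rcases key _ (hsub z hz k P2) with h | h
        · exact h
        · simp [c2, hgk0] at h
      rw [map_add] at b1
      rw [map_sub] at b2
      have : (2:F) * g1 z = 0 := by linear_combination b1 + b2
      simp [h2, c1] at this
  · refine ⟨0, fun z _ g hg => ?_⟩
    by_contra hg0
    exact hne ⟨z, g, hg0, hg⟩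

end partC


section partD
variable {F : Type*} [Field F] {V : Type*} [AddCommGroup V] [Module F V]

lemma exists_notMem_pair [FiniteDimensional F V] (h3 : 3 ≤ Module.finrank F V) (x y : V) :
    ∃ h, h ∉ Submodule.span F {x, y} := by
  by_contra! hc
  have h1 : (⊤ : Submodule F V) ≤ Submodule.span F {x, y} := fun v _ => hc v
  have h4 := Submodule.finrank_mono h1
  rw [finrank_top] at h4
  classical
  have h5 : Module.finrank F (Submodule.span F ({x, y} : Set V)) ≤ 2 := by
    have := finrank_span_finset_le_card (R := F) ({x, y} : Finset V)
    have h6 : ({x, y} : Finset V).card ≤ 2 := Finset.card_le_two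
    rw [Finset.coe_pair] at this
    exact this.trans h6
  omega

lemma exists_annih [FiniteDimensional F V] (h3 : 3 ≤ Module.finrank F V) (x y : V) :
    ∃ p : V →ₗ[F] F, p x = 0 ∧ p y = 0 ∧ ∃ h, p h ≠ 0 := by
  obtain ⟨h, hh⟩ := exists_notMem_pair (F := F) h3 x y
  obtain ⟨p, hp, hp2⟩ := Submodule.exists_le_ker_of_notMem hh
  exact ⟨p, hp2 (Submodule.subset_span (by simp)), hp2 (Submodule.subset_span (by simp)), h, hp⟩

/-- If all functionals killing `z, w` kill `v` then `v` is in their span. -/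
lemma in_plane (z w : V) (fz fw : V →ₗ[F] F) (e1 : fz z = 1) (e2 : fz w = 0) (e3 : fw z = 0)
    (e4 : fw w = 1) (v : V) (h : ∀ p : V →ₗ[F] F, p z = 0 → p w = 0 → p v = 0) :
    v = fz v • z + fw v • w := by
  rw [← sub_eq_zero]
  refine eq_zero_of_dual (F := F) _ fun f => ?_
  have := h (f - f z • fz - f w • fw) (by simp [e1, e3]) (by simp [e2, e4])
  simp at this ⊢
  linear_combination this

lemma D3_fz (z w : V) (fz fw p : V →ₗ[F] F) (e1 : fz z = 1) (e2 : fz w = 0) (e3 : fw z = 0)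
    (e4 : fw w = 1) (p1 : p z = 0) (p2 : p w = 0) (v : V) : D3 fz fw p z w v = p v := by
  simp [D3, e1, e2, e3, e4, p1, p2]

variable [FiniteDimensional F V]

lemma LD1 (h2 : (2:F) ≠ 0) (h3 : 3 ≤ Module.finrank F V) (𝒢 : Submodule F (Module.End F V))
    (s z : V) (hzs : ∀ c : F, c • s ≠ z) (G1 G : Module.End F V) (hG1 : G1 ∈ 𝒢) (hG : G ∈ 𝒢)
    (hstar : ∀ x : V, (∀ c : F, c • s ≠ x) → ∀ A ∈ 𝒢, ∀ B ∈ 𝒢, ∀ p q r : V →ₗ[F] F,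
      D3 p q r (A x) (B x) x = 0)
    (hw : ∀ c : F, c • z ≠ G1 z) (l : F) (hl : G z = l • z) :
    ∃ (w : V) (b : V →ₗ[F] F), w ≠ 0 ∧ G = l • 1 + rk w b := by
  have hz0 : z ≠ 0 := fun h => hzs 0 (by simp [h])
  set w := G1 z with hwdef
  obtain ⟨fz, fw, e1, e2, e3, e4⟩ := dual_pair z w hz0 hw
  set K : Module.End F V := G - l • 1 with hK
  have hKx : ∀ x, G x = K x + l • x := fun x => by simp [hK]
  have hKz : K z = 0 := by simp [hK, hl]
  have star : ∀ x : V, (∀ c : F, c • s ≠ x) → ∀ p q r : V →ₗ[F] F,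
      D3 p q r (K x) (G1 x) x = 0 := by
    intro x hx p q r
    have := hstar x hx G hG G1 hG1 p q r
    rw [hKx] at this
    simp only [D3, map_add, map_smul, smul_eq_mul] at this ⊢
    linear_combination this
  have splus : ∀ h : V, (∀ c : F, c • s ≠ z + h) → ∀ p q r : V →ₗ[F] F,
      D3 p q r (K h) (w + G1 h) (z + h) = 0 := by
    intro h hh p q r
    have := star _ hh p q r
    rwa [map_add, map_add, hKz, zero_add] at this
  have sminus : ∀ h : V, (∀ c : F, c • s ≠ z - h) → ∀ p q r : V →ₗ[F] F,
      D3 p q r (K h) (w - G1 h) (z - h) = 0 := by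
    intro h hh p q r
    have := star _ hh p q r
    rw [map_sub, map_sub, hKz, zero_sub] at this
    simp only [D3, map_neg] at this ⊢
    linear_combination -this
  have hout : ∀ h, h ∉ Submodule.span F {s, z} → (∀ c : F, c • s ≠ z + h) ∧
      (∀ c : F, c • s ≠ z - h) ∧ (∀ c : F, c • s ≠ h) := by
    intro h hh
    refine ⟨fun c hc => hh ?_, fun c hc => hh ?_, fun c hc => hh ?_⟩
    · exact Submodule.mem_span_pair.2 ⟨c, -1, by rw [hc]; module⟩
    · exact Submodule.mem_span_pair.2 ⟨-c, 1, by rw [neg_smul, hc]; module⟩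
    · exact Submodule.mem_span_pair.2 ⟨c, 0, by rw [hc]; module⟩
  -- (a)
  have ha0 : ∀ h, h ∉ Submodule.span F {s, z} → ∀ p : V →ₗ[F] F, p z = 0 → p w = 0 →
      p (K h) = 0 := by
    intro h hh p p1 p2
    obtain ⟨o1, o2, o3⟩ := hout h hh
    have i1 := splus h o1 fz fw p
    have i2 := sminus h o2 fz fw p
    have i3 := star h o3 fz fw p
    simp only [D3, map_add, map_sub, e1, e2, e3, e4, p1, p2] at i1 i2 i3
    have : 2 * p (K h) = 0 := by linear_combination -i1 - i2 + 2 * i3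
    simpa [h2] using this
  obtain ⟨h0, hh0⟩ := exists_notMem_pair (F := F) h3 s z
  have ha1 : ∀ h, ∀ p : V →ₗ[F] F, p z = 0 → p w = 0 → p (K h) = 0 := by
    intro h p p1 p2
    by_cases hh : h ∈ Submodule.span F {s, z}
    · have : h + h0 ∉ Submodule.span F {s, z} := fun hc => hh0 (by
        simpa using Submodule.sub_mem _ hc hh)
      have i1 := ha0 _ this p p1 p2
      have i2 := ha0 _ hh0 p p1 p2
      rw [map_add, map_add, i2, add_zero] at i1
      exact i1
    · exact ha0 h hh p p1 p2
  have ha : ∀ h, K h = fz (K h) • z + fw (K h) • w := fun h =>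
    in_plane z w fz fw e1 e2 e3 e4 _ (ha1 h)
  -- (b)
  have hb0 : ∀ h, (∀ c : F, c • s ≠ z + h) → (∀ c : F, c • s ≠ z - h) →
      ∀ p : V →ₗ[F] F, p z = 0 → p w = 0 → fz (K h) * p h + fw (K h) * p (G1 h) = 0 := by
    intro h o1 o2 p p1 p2
    have i1 := splus h o1 fz fw p
    have i2 := sminus h o2 fz fw p
    have i3 := ha1 h p p1 p2
    simp only [D3, map_add, map_sub, e1, e2, e3, e4, p1, p2, i3] at i1 i2
    have : 2 * (fz (K h) * p h + fw (K h) * p (G1 h)) = 0 := by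
      linear_combination i1 - i2
    simpa [h2] using this
  have hb : ∀ h, ∀ p : V →ₗ[F] F, p z = 0 → p w = 0 →
      fz (K h) * p h + fw (K h) * p (G1 h) = 0 := by
    intro h p p1 p2
    by_cases hh : h ∈ Submodule.span F {s, z}
    · obtain ⟨η, θ, rfl⟩ := Submodule.mem_span_pair.1 hh
      have := hb0 (η • s) (fun c hc => hzs (c - η) (by rw [sub_smul, hc]; abel))
        (fun c hc => hzs (c + η) (by rw [add_smul, hc]; abel)) p p1 p2
      simp only [map_add, map_smul, hKz, smul_zero, add_zero, p1, ← hwdef, p2] at this ⊢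
      exact this
    · obtain ⟨o1, o2, o3⟩ := hout h hh
      exact hb0 h o1 o2 p p1 p2
  have hclaim : ∀ h, fw (K h) = 0 → fz (K h) = 0 := by
    intro h hβ
    by_contra hα
    have hph : ∀ p : V →ₗ[F] F, p z = 0 → p w = 0 → p h = 0 := by
      intro p p1 p2
      have := hb h p p1 p2
      rw [hβ, zero_mul, add_zero] at this
      exact (mul_eq_zero.1 this).resolve_left hα
    have hh := in_plane z w fz fw e1 e2 e3 e4 h hph
    set a := fz h
    set b := fw h
    have hKh : K h = b • K w := by
      rw [hh, map_add, map_smul, map_smul, hKz, smul_zero, zero_add]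
    rw [hKh, map_smul, smul_eq_mul] at hβ hα
    have hb0 : b ≠ 0 := left_ne_zero_of_mul hα
    have hαw : fz (K w) ≠ 0 := right_ne_zero_of_mul hα
    have hβw : fw (K w) = 0 := (mul_eq_zero.1 hβ).resolve_left hb0
    have hKw : K w = fz (K w) • z := by
      have := ha w
      rw [hβw, zero_smul, add_zero] at this
      exact this
    obtain ⟨p, p1, p2, h', hp'⟩ := exists_annih (F := F) h3 z w
    have hc : ∃ c : F, ∀ d : F, d • s ≠ w + c • z := by
      by_contra! hcon
      obtain ⟨d0, hd0⟩ := hcon 0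
      obtain ⟨d1, hd1⟩ := hcon 1
      exact hzs (d1 - d0) (by rw [sub_smul, hd0, hd1]; module)
    obtain ⟨c, hc⟩ := hc
    have hpG : p (G1 w) = 0 := by
      have i1 := star _ hc fz fw p
      have hKx : K (w + c • z) = fz (K w) • z := by
        rw [map_add, map_smul, hKz, smul_zero, add_zero]; exact hKw
      rw [hKx, map_add, map_smul, ← hwdef] at i1
      simp only [D3, map_add, map_smul, e1, e2, e3, e4, p1, p2, smul_eq_mul] at i1
      have : fz (K w) * p (G1 w) = 0 := by linear_combination -i1
      exact (mul_eq_zero.1 this).resolve_left hαw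
    have j1 := hb (h' + w) p p1 p2
    have j2 := hb h' p p1 p2
    simp only [map_add, hβw, p2, hpG, add_zero] at j1
    have : fz (K w) * p h' = 0 := by linear_combination j1 - j2
    exact (mul_eq_zero.1 this).elim hαw hp'
  obtain ⟨η, hη⟩ := factor_on ⊤ (fw ∘ₗ K) (fz ∘ₗ K) (fun x _ => hclaim x)
  have hα : ∀ x, fz (K x) = fw (K x) * η 1 := fun x => by
    have h1 : η (fw (K x)) = fz (K x) := hη x trivial
    rw [← h1]
    conv_lhs => rw [← mul_one (fw (K x)), ← smul_eq_mul, map_smul]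
    rfl
  refine ⟨η 1 • z + w, fw ∘ₗ K, fun h => ?_, ?_⟩
  · have := congrArg fw h
    simp [e3, e4] at this
  · ext x
    rw [hKx, ha x, hα]
    simp only [LinearMap.add_apply, LinearMap.smul_apply, Module.End.one_apply, rk_apply,
      LinearMap.comp_apply]
    module

lemma LD2 (h2 : (2:F) ≠ 0) (h3 : 3 ≤ Module.finrank F V) (s : V) (b : V →ₗ[F] F) (hb : b ≠ 0)
    (Q : V → F) (hQ : ∀ x y, Q (x + y) + Q (x - y) = 2 * Q x + 2 * Q y)
    (h : ∀ x, (∀ c : F, c • s ≠ x) → b x ≠ 0 → Q x = 0) : ∀ x, Q x = 0 := by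
  have main : ∀ x, b x ≠ 0 → Q x = 0 := by
    intro x hbx
    by_cases hxs : ∀ c : F, c • s ≠ x
    · exact h x hxs hbx
    · push Not at hxs
      obtain ⟨c, hc⟩ := hxs
      have hcne : c ≠ 0 := fun h0 => hbx (by rw [← hc, h0]; simp)
      have hbs : b s ≠ 0 := fun h0 => hbx (by rw [← hc]; simp [h0])
      have hker : ∀ k, b k = 0 → k ≠ 0 → Q k = - Q x := by
        intro k hk hk0
        have hns : ∀ c : F, c • s = k → False := fun d hd => by
          have h4 : d * b s = 0 := by rw [← smul_eq_mul, ← map_smul, hd, hk]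
          have : d = 0 := (mul_eq_zero.1 h4).resolve_right hbs
          exact hk0 (by rw [← hd, this, zero_smul])
        have q1 := h (x + k) (fun d hd => hns (d - c) (by rw [sub_smul, hd, hc]; abel))
          (by simpa [hk] using hbx)
        have q2 := h (x - k) (fun d hd => hns (c - d) (by rw [sub_smul, hd, hc]; abel))
          (by simpa [hk] using hbx)
        have := hQ x k
        have h5 : 2 * (Q k + Q x) = 0 := by linear_combination q1 + q2 - this
        have h6 := (mul_eq_zero.1 h5).resolve_left h2
        linear_combination h6
      have hfr := finrank_kerf ((b x)⁻¹ • b) x (by simp [hbx])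
      obtain ⟨k1, hk1⟩ : ∃ k1 : LinearMap.ker ((b x)⁻¹ • b), k1 ≠ 0 := by
        have : Nontrivial (LinearMap.ker ((b x)⁻¹ • b)) :=
          Module.nontrivial_of_finrank_pos (R := F) (by omega)
        exact exists_ne 0
      obtain ⟨k2, hk2⟩ := exists_indep (F := F) (V := LinearMap.ker ((b x)⁻¹ • b)) (by omega) k1
      have hbk : ∀ k : LinearMap.ker ((b x)⁻¹ • b), b k = 0 := fun k => by
        have : (b x)⁻¹ * b k = 0 := k.2
        exact (mul_eq_zero.1 this).resolve_left (inv_ne_zero hbx)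
      have hQk : ∀ k : LinearMap.ker ((b x)⁻¹ • b), k ≠ 0 → Q k = - Q x := fun k hk =>
        hker k (hbk k) (fun h0 => hk (Subtype.ext h0))
      have q1 := hQk k1 hk1
      have q2 := hQk k2 (fun h0 => hk2 0 (by simp [h0]))
      have q3 := hQk (k1 + k2) (fun h0 => hk2 (-1) (by
        rw [neg_smul, one_smul]; exact (eq_neg_of_add_eq_zero_right h0).symm))
      have q4 := hQk (k1 - k2) (fun h0 => hk2 1 (by
        rw [one_smul]; exact sub_eq_zero.1 h0))
      have := hQ k1 k2
      rw [q1, q2] at this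
      rw [Submodule.coe_add] at q3
      rw [Submodule.coe_sub] at q4
      rw [q3, q4] at this
      have h5 : 2 * Q x = 0 := by linear_combination this
      exact (mul_eq_zero.1 h5).resolve_left h2
  intro x
  by_cases hbx : b x = 0
  · obtain ⟨x0, hx0⟩ : ∃ x0, b x0 ≠ 0 := by
      by_contra! hc
      exact hb (LinearMap.ext hc)
    have q1 := main (x0 + x) (by simpa [hbx] using hx0)
    have q2 := main (x0 - x) (by simpa [hbx] using hx0)
    have q3 := main x0 hx0
    have := hQ x0 x
    rw [q1, q2, q3] at this
    have h5 : 2 * Q x = 0 := by linear_combination -this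
    exact (mul_eq_zero.1 h5).resolve_left h2
  · exact main x hbx

lemma LD3 (h2 : (2:F) ≠ 0) (h3 : 3 ≤ Module.finrank F V) (w : V) (hw : w ≠ 0) (G : Module.End F V)
    (h : ∀ (p q r : V →ₗ[F] F) (x : V), D3 p q r w (G x) x = 0) :
    ∃ (μ : F) (g : V →ₗ[F] F), G = μ • 1 + rk w g := by
  obtain ⟨f, hf⟩ := dual_one (F := F) w hw
  obtain ⟨p, hp, hpw⟩ := exists_proj f w hf
  have hfr := finrank_kerf f w hf
  have hpw0 : p w = 0 := by apply Subtype.ext; rw [hp]; simp [hf]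
  have h1 : ∀ (q r : LinearMap.ker f →ₗ[F] F) (x : V),
      q (p (G x)) * r (p x) = q (p x) * r (p (G x)) := by
    intro q r x
    have := h f (q ∘ₗ p) (r ∘ₗ p) x
    simp only [D3, LinearMap.comp_apply, hpw0, hf, map_zero] at this
    linear_combination this
  have hnt : Nontrivial (LinearMap.ker f) :=
    Module.nontrivial_of_finrank_pos (R := F) (by omega)
  obtain ⟨μ, hμ⟩ := eig_lemma h2 (⊥ : Submodule F (LinearMap.ker f)) bot_ne_top
    (p ∘ₗ G ∘ₗ (LinearMap.ker f).subtype) (by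
      intro x hx
      obtain ⟨r, hr⟩ := dual_one (F := F) x (by simpa using hx)
      refine ⟨r (p (G x)), ?_⟩
      rw [← sub_eq_zero]
      refine eq_zero_of_dual (F := F) _ fun q => ?_
      have := h1 q r x
      rw [hpw, hr] at this
      simp only [map_sub, map_smul, smul_eq_mul, LinearMap.comp_apply, Submodule.subtype_apply]
      linear_combination -this)
  have hGw : p (G w) = 0 := by
    by_contra hy
    obtain ⟨x, hx⟩ := exists_indep (F := F) (V := LinearMap.ker f) (by omega) (p (G w))
    obtain ⟨q, r, a1, a2, a3, a4⟩ := dual_pair _ _ hy hx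
    have i1 := h1 q r (w + x)
    have i2 := h1 q r x
    simp only [map_add, hpw0, hpw, zero_add, a1, a2, a3, a4] at i1 i2
    have : (1:F) = 0 := by linear_combination i1 - i2
    exact one_ne_zero this
  refine ⟨μ, f ∘ₗ G - μ • f, ?_⟩
  ext x
  have hx : x = (p x : V) + f x • w := by rw [hp]; abel
  have k1 : p (G x) = μ • p x := by
    have := hμ (p x)
    simp only [LinearMap.comp_apply, Submodule.subtype_apply] at this
    rw [← this]
    conv_lhs => rw [hx]
    rw [map_add, map_add, map_smul, map_smul, hGw, smul_zero, add_zero]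
  have k2 := congrArg Subtype.val k1
  rw [hp, Submodule.coe_smul, hp] at k2
  simp only [LinearMap.add_apply, LinearMap.smul_apply, Module.End.one_apply, rk_apply,
    LinearMap.comp_apply, LinearMap.sub_apply]
  rw [sub_eq_iff_eq_add] at k2
  conv_lhs => rw [k2]
  rw [smul_eq_mul]
  module

lemma LD_all (h2 : (2:F) ≠ 0) (h3 : 3 ≤ Module.finrank F V) (𝒢 : Submodule F (Module.End F V))
    (s : V) (hD : ∀ z : V, (∀ c : F, c • s ≠ z) →
      Module.finrank F V ≤ Module.finrank F (𝒢 ⊓ Eg F z : Submodule F (Module.End F V)) + 1 ∧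
      ∃ w, ∀ G ∈ 𝒢, G z ∈ Submodule.span F {z, w}) :
    ∃ w : V, w ≠ 0 ∧ ∀ G ∈ 𝒢, ∃ (μ : F) (g : V →ₗ[F] F), G = μ • 1 + rk w g := by
  have hstar : ∀ x : V, (∀ c : F, c • s ≠ x) → ∀ A ∈ 𝒢, ∀ B ∈ 𝒢, ∀ p q r : V →ₗ[F] F,
      D3 p q r (A x) (B x) x = 0 := by
    intro x hx A hA B hB p q r
    obtain ⟨w, hw⟩ := (hD x hx).2
    exact D3_span p q r x w _ _ _ (hw A hA) (hw B hB) (Submodule.subset_span (by simp))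
  by_cases hcase : ∀ z, z ∉ Submodule.span F {s} → ∀ G ∈ 𝒢, ∃ c : F, c • z = G z
  · have : Nontrivial V := Module.nontrivial_of_finrank_pos (R := F) (by omega)
    obtain ⟨w, hw⟩ := exists_ne (0 : V)
    refine ⟨w, hw, fun G hG => ?_⟩
    obtain ⟨u, hu⟩ := exists_indep (F := F) (V := V) (by omega) s
    obtain ⟨c, hc⟩ := eig_lemma h2 (Submodule.span F {s}) (fun ht => by
      have : u ∈ Submodule.span F {s} := by rw [ht]; trivial
      obtain ⟨c, hc⟩ := Submodule.mem_span_singleton.1 this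
      exact hu c hc) G (fun z hz => hcase z hz G hG)
    exact ⟨c, 0, by ext v; simp [hc, rk_apply]⟩
  · push Not at hcase
    obtain ⟨z, hz, G1, hG1, hGz⟩ := hcase
    have hzs : ∀ c : F, c • s ≠ z := fun c hc => hz (Submodule.mem_span_singleton.2 ⟨c, hc⟩)
    have hfr := (hD z hzs).1
    obtain ⟨G2, hG2, hG2n⟩ : ∃ G2 ∈ 𝒢 ⊓ Eg F z, G2 ∉ Submodule.span F {(1 : Module.End F V)} := by
      by_contra! hcon
      have h5 := Submodule.finrank_mono (show 𝒢 ⊓ Eg F z ≤ Submodule.span F {1} from hcon)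
      have h6 : Module.finrank F (Submodule.span F {(1 : Module.End F V)}) ≤ 1 :=
        (finrank_span_le_card ({1} : Set (Module.End F V))).trans (by simp)
      omega
    obtain ⟨l, hl⟩ := (mem_Eg z G2).1 hG2.2
    obtain ⟨w, b, hw, hG2'⟩ := LD1 h2 h3 𝒢 s z hzs G1 G2 hG1 hG2.1 hstar hGz l hl.symm
    have hb : b ≠ 0 := by
      rintro rfl
      apply hG2n
      refine Submodule.mem_span_singleton.2 ⟨l, ?_⟩
      rw [hG2']; ext v; simp [rk_apply]
    refine ⟨w, hw, fun G hG => LD3 h2 h3 w hw G fun p q r => ?_⟩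
    refine LD2 h2 h3 s b hb (fun x => D3 p q r w (G x) x) ?_ ?_
    · intro x y
      simp only [D3, map_add, map_sub]
      ring
    · intro x hx hbx
      have := hstar x hx G2 hG2.1 G hG p q r
      rw [hG2'] at this
      simp only [D3, LinearMap.add_apply, LinearMap.smul_apply, Module.End.one_apply, rk_apply,
        map_add, map_smul, smul_eq_mul] at this
      have h5 : b x * D3 p q r w (G x) x = 0 := by
        simp only [D3]; linear_combination this
      exact (mul_eq_zero.1 h5).resolve_left hbx

lemma BB_fix (h2 : (2:F) ≠ 0) (h3 : 3 ≤ Module.finrank F V) (w : V) (hw : w ≠ 0) (c : F) :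
    ∃ A : Module.End F V, BB A ∧ A w = w ∧ LinearMap.trace F V A = c := by
  obtain ⟨f, hf⟩ := dual_one (F := F) w hw
  obtain ⟨p, hp, hpw⟩ := exists_proj f w hf
  have hfr := finrank_kerf f w hf
  have hpw0 : p w = 0 := by apply Subtype.ext; rw [hp]; simp [hf]
  obtain ⟨A', hA', hA't⟩ := BB_tr (F := F) (V := LinearMap.ker f) (by omega) (c - 1)
  let A : Module.End F V := rk w f + (LinearMap.ker f).subtype ∘ₗ A' ∘ₗ p
  have hAv : ∀ v, A v = f v • w + (A' (p v) : LinearMap.ker f) := fun v => rfl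
  refine ⟨A, BB_ext h2 A A' p (fun w => ⟨w, hpw w⟩) hA' ?_ ?_, ?_, ?_⟩
  · intro v
    rw [hAv]; simp [hpw0, hpw]
  · intro v hv
    rw [hAv, hv]
    have := hp v
    rw [hv] at this
    simp [← sub_eq_zero.1 this.symm]
  · rw [hAv, hpw0, hf]; simp
  · have e1 : LinearMap.trace F V ((LinearMap.ker f).subtype ∘ₗ A' ∘ₗ p) = c - 1 := by
      have := LinearMap.trace_comp_comm' (R := F) p ((LinearMap.ker f).subtype ∘ₗ A')
      rw [LinearMap.comp_assoc] at this
      rw [this, ← hA't]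
      congr 1
      ext x
      simp [hpw]
    simp only [A, map_add, tr_rk, hf, e1]
    ring

lemma D_end (h2 : (2:F) ≠ 0) (h3 : 3 ≤ Module.finrank F V) (𝒢 : Submodule F (Module.End F V))
    (hfin : Module.finrank F 𝒢 = Module.finrank F V)
    (hH : ∀ A : Module.End F V, BB A → ∃ G ∈ 𝒢, LinearMap.trace F V (G * A) ≠ 0)
    (w : V) (hw : w ≠ 0)
    (hall : ∀ G ∈ 𝒢, ∃ (μ : F) (g : V →ₗ[F] F), G = μ • 1 + rk w g) :
    ∀ g : V →ₗ[F] F, rk w g ∈ 𝒢 := by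
  let Ψ : (F × (V →ₗ[F] F)) →ₗ[F] Module.End F V :=
    { toFun := fun x => x.1 • 1 + rk w x.2
      map_add' := by
        intros; ext v; simp [rk_apply]; module
      map_smul' := by
        intros; ext v; simp [rk_apply]; module }
  have hΨ : ∀ μ g, Ψ (μ, g) = μ • 1 + rk w g := fun _ _ => rfl
  have hinj : Function.Injective Ψ := by
    rw [injective_iff_map_eq_zero]
    rintro ⟨μ, g⟩ h0
    rw [hΨ] at h0
    have hx : ∀ x, μ • x + g x • w = 0 := fun x => LinearMap.congr_fun h0 x
    obtain ⟨u, hu⟩ := exists_indep (F := F) (V := V) (by omega) w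
    obtain ⟨f1, f2, a1, a2, a3, a4⟩ := dual_pair w u hw hu
    have hμ : μ = 0 := by
      have := congrArg f2 (hx u)
      simpa [a4, a3] using this
    have hg : g = 0 := by
      ext x
      have := hx x
      rw [hμ, zero_smul, zero_add, smul_eq_zero] at this
      simpa [hw] using this
    rw [hμ, hg]; rfl
  have hdual : Module.finrank F (V →ₗ[F] F) = Module.finrank F V :=
    Subspace.dual_finrank_eq (K := F) (V := V)
  have hlt : 𝒢.comap Ψ < ⊤ := by
    refine lt_top_iff_ne_top.2 fun ht => ?_
    have h5 : LinearMap.range Ψ ≤ 𝒢 := by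
      rintro _ ⟨x, rfl⟩
      have : x ∈ 𝒢.comap Ψ := by rw [ht]; trivial
      exact this
    have h6 := Submodule.finrank_mono h5
    rw [LinearMap.finrank_range_of_inj hinj, Module.finrank_prod, Module.finrank_self, hdual] at h6
    omega
  obtain ⟨φ, hφ0, hφ⟩ := Submodule.exists_le_ker_of_lt_top _ hlt
  set a := φ (1, 0) with ha
  obtain ⟨u, hu⟩ := (Module.evalEquiv F V).surjective (φ ∘ₗ LinearMap.inr F F (V →ₗ[F] F))
  have hφ1 : ∀ μ g, φ (μ, g) = a * μ + g u := by
    intro μ g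
    have h5 : g u = φ (0, g) := LinearMap.congr_fun hu g
    have h6 : ((μ, g) : F × (V →ₗ[F] F)) = μ • (1, 0) + (0, g) := by simp
    rw [h6, map_add, map_smul, smul_eq_mul, ← ha, ← h5, mul_comm]
  have hφ2 : ∀ μ g, (μ • (1 : Module.End F V) + rk w g) ∈ 𝒢 → a * μ + g u = 0 := by
    intro μ g hg
    rw [← hφ1]
    exact hφ (show (μ, g) ∈ 𝒢.comap Ψ from hg)
  by_cases hu0 : u = 0
  · have ha0 : a ≠ 0 := by
      intro h0
      apply hφ0
      refine LinearMap.ext ?_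
      rintro ⟨μ, g⟩
      rw [hφ1, h0, hu0]; simp
    let Θ : (V →ₗ[F] F) →ₗ[F] Module.End F V := Ψ ∘ₗ LinearMap.inr F F (V →ₗ[F] F)
    have hΘ : ∀ g, Θ g = rk w g := fun g => by
      change Ψ (0, g) = _
      rw [hΨ]; simp
    have hle : 𝒢 ≤ LinearMap.range Θ := by
      intro G hG
      obtain ⟨μ, g, rfl⟩ := hall G hG
      have := hφ2 μ g hG
      rw [hu0, map_zero, add_zero] at this
      have hμ := (mul_eq_zero.1 this).resolve_left ha0
      exact ⟨g, by rw [hΘ, hμ]; simp⟩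
    have heq := Submodule.eq_of_le_of_finrank_le hle (by
      have := LinearMap.finrank_range_le Θ
      omega)
    intro g
    rw [heq]
    exact ⟨g, hΘ g⟩
  · exfalso
    have hA : ∃ (A : Module.End F V) (t : F), BB A ∧ A w = t • u ∧ LinearMap.trace F V A = t * a := by
      by_cases hpar : ∃ c : F, c • w = u
      · obtain ⟨c, hc⟩ := hpar
        have hc0 : c ≠ 0 := fun h0 => hu0 (by rw [← hc, h0, zero_smul])
        obtain ⟨A, b1, b2, b3⟩ := BB_fix h2 h3 w hw (c⁻¹ * a)
        exact ⟨A, c⁻¹, b1, by rw [b2, ← hc, smul_smul, inv_mul_cancel₀ hc0, one_smul], b3⟩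
      · push Not at hpar
        obtain ⟨A, b1, b2, b3⟩ := BB_TR w u hw hpar a
        exact ⟨A, 1, b1, by simpa using b2, by simpa using b3⟩
    obtain ⟨A, t, b1, b2, b3⟩ := hA
    obtain ⟨G, hG, hG2⟩ := hH A b1
    obtain ⟨μ, g, rfl⟩ := hall G hG
    apply hG2
    have := hφ2 μ g hG
    rw [add_mul, map_add, tr_rk_mul, b2, smul_mul_assoc, one_mul, map_smul, b3, map_smul]
    simp only [smul_eq_mul]
    linear_combination t * this

theorem thmD (h2 : (2:F) ≠ 0) (h3 : 3 ≤ Module.finrank F V) (𝒢 : Submodule F (Module.End F V))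
    (hfin : Module.finrank F 𝒢 = Module.finrank F V)
    (hH : ∀ A : Module.End F V, BB A → ∃ G ∈ 𝒢, LinearMap.trace F V (G * A) ≠ 0) :
    (∃ w : V, w ≠ 0 ∧ ∀ g : V →ₗ[F] F, rk w g ∈ 𝒢) ∨
    (∃ g : V →ₗ[F] F, g ≠ 0 ∧ ∀ z, rk z g ∈ 𝒢) := by
  have hD := D1 h2 h3 𝒢 hfin hH
  by_cases hS : Submodule.span F {z : V | ∃ g : V →ₗ[F] F, g z ≠ 0 ∧ rk z g ∈ 𝒢} = ⊤
  · exact Or.inr (D_case1 h2 h3 𝒢 hfin (fun z hz hi => (hD z hz hi).2) hS)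
  · left
    obtain ⟨s, hs⟩ := D_case2 h2 𝒢 (fun z hz hi => (hD z hz hi).2) hS
    obtain ⟨w, hw, hall⟩ := LD_all h2 h3 𝒢 s (fun z hz =>
      hD z (fun h0 => hz 0 (by simp [h0])) (hs z hz))
    exact ⟨w, hw, D_end h2 h3 𝒢 hfin hH w hw hall⟩

end partD


section partE
variable {F : Type*} [Field F] {n : ℕ}

lemma BB_toMatrix (A : Module.End F (Fin n → F)) (hA : BB A) :
    LinearMap.toMatrix' A ∈ ProdInv2 F n := by
  obtain ⟨J, hJ, hJA⟩ := hA
  refine ⟨LinearMap.toMatrix' J, LinearMap.toMatrix' (J * A), ?_, ?_, ?_⟩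
  · rw [← LinearMap.toMatrix'_mul, hJ, LinearMap.toMatrix'_one]
  · rw [← LinearMap.toMatrix'_mul, hJA, LinearMap.toMatrix'_one]
  · rw [← LinearMap.toMatrix'_mul, ← mul_assoc, hJ, one_mul]

lemma ProdInv2_unit (A : Matrix (Fin n) (Fin n) F) (hA : A ∈ ProdInv2 F n) : IsUnit A := by
  obtain ⟨J, K, hJ, hK, rfl⟩ := hA
  exact (IsUnit.of_mul_eq_one J hJ).mul (IsUnit.of_mul_eq_one K hK)

lemma mulVec_ne (A : Matrix (Fin n) (Fin n) F) (hA : IsUnit A) (x : Fin n → F) (hx : x ≠ 0) :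
    A *ᵥ x ≠ 0 := by
  intro h
  obtain ⟨u, rfl⟩ := hA
  apply hx
  have : (↑u⁻¹ : Matrix (Fin n) (Fin n) F) *ᵥ ((u : Matrix (Fin n) (Fin n) F) *ᵥ x) = 0 := by
    rw [h, mulVec_zero]
  rwa [mulVec_mulVec, Units.inv_mul, one_mulVec] at this

lemma exists_mat (x : Fin n → F) (f : (Fin n → F) →ₗ[F] F) (v : Fin n → F) :
    ∃ M : Matrix (Fin n) (Fin n) F, ∀ y, M *ᵥ y = f y • v := by
  refine ⟨LinearMap.toMatrix' (rk v f), fun y => ?_⟩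
  rw [LinearMap.toMatrix'_mulVec, rk_apply]

/-- type I and II at a vector -/
def TI (T : Matrix (Fin n) (Fin n) F →ₗ[F] Matrix (Fin n) (Fin n) F) (x : Fin n → F) : Prop :=
  ∃ z : Fin n → F, z ≠ 0 ∧ ∀ X, T X *ᵥ x = 0 → X *ᵥ z = 0

/-- type II -/
def TII (T : Matrix (Fin n) (Fin n) F →ₗ[F] Matrix (Fin n) (Fin n) F) (x : Fin n → F) : Prop :=
  ∃ z : Fin n → F, z ≠ 0 ∧ ∀ X, T X *ᵥ x = 0 → Xᵀ *ᵥ z = 0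

lemma types_ge3 (h2 : (2:F) ≠ 0) (hn : 3 ≤ n)
    (T : Matrix (Fin n) (Fin n) F →ₗ[F] Matrix (Fin n) (Fin n) F)
    (hT : Function.Bijective T) (hB : ∀ A ∈ ProdInv2 F n, T A ∈ ProdInv2 F n)
    (x : Fin n → F) (hx : x ≠ 0) : TI T x ∨ TII T x := by
  let τ : Module.End F (Fin n → F) →ₗ[F] Module.Dual F (Module.End F (Fin n → F)) :=
    LinearMap.mk₂ F (fun G E => LinearMap.trace F _ (G * E))
      (by intros; simp [add_mul]) (by intros; simp) (by intros; simp [mul_add]) (by intros; simp)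
  have hτ : ∀ G E, τ G E = LinearMap.trace F _ (G * E) := fun _ _ => rfl
  have hτb : Function.Bijective τ := by
    constructor
    · rw [injective_iff_map_eq_zero]
      intro X hX
      refine LinearMap.ext fun v => ?_
      refine eq_zero_of_dual (F := F) _ fun g => ?_
      rw [← tr_mul_rk, ← hτ, hX]; rfl
    · intro φ
      obtain ⟨X, hX⟩ := tr_dual φ
      refine ⟨X, LinearMap.ext fun G => ?_⟩
      rw [hτ, hX, LinearMap.trace_mul_comm]
  let τe := LinearEquiv.ofBijective τ hτb
  let ev : Module.End F (Fin n → F) →ₗ[F] (Fin n → F) :=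
    { toFun := fun E => T (LinearMap.toMatrix' E) *ᵥ x
      map_add' := by intros; simp [add_mulVec]
      map_smul' := by intros; simp [smul_mulVec] }
  have hev : ∀ E, ev E = T (LinearMap.toMatrix' E) *ᵥ x := fun _ => rfl
  have hevs : Function.Surjective ev := by
    intro v
    obtain ⟨f, hf⟩ := dual_one (F := F) x hx
    obtain ⟨M, hM⟩ := exists_mat x f v
    obtain ⟨X, hX⟩ := hT.2 M
    refine ⟨Matrix.toLin' X, ?_⟩
    rw [hev, LinearMap.toMatrix'_toLin', hX, hM, hf, one_smul]
  let 𝒢 : Submodule F (Module.End F (Fin n → F)) :=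
    (LinearMap.range ev.dualMap).map (τe.symm : _ →ₗ[F] _)
  have h𝒢 : ∀ G ∈ 𝒢, ∃ φ : (Fin n → F) →ₗ[F] F, ∀ E, LinearMap.trace F _ (G * E) = φ (ev E) := by
    rintro _ ⟨_, ⟨φ, rfl⟩, rfl⟩
    refine ⟨φ, fun E => ?_⟩
    rw [← hτ]
    have : τ (τe.symm (ev.dualMap φ)) = ev.dualMap φ := τe.apply_symm_apply _
    exact LinearMap.congr_fun this E
  have h𝒢2 : ∀ φ : (Fin n → F) →ₗ[F] F, ∃ G ∈ 𝒢, ∀ E, LinearMap.trace F _ (G * E) = φ (ev E) := by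
    intro φ
    refine ⟨τe.symm (ev.dualMap φ), ⟨_, ⟨φ, rfl⟩, rfl⟩, fun E => ?_⟩
    rw [← hτ]
    have : τ (τe.symm (ev.dualMap φ)) = ev.dualMap φ := τe.apply_symm_apply _
    exact LinearMap.congr_fun this E
  have hfin : Module.finrank F 𝒢 = Module.finrank F (Fin n → F) := by
    have h1 : Module.finrank F 𝒢 = Module.finrank F (LinearMap.range ev.dualMap) :=
      LinearEquiv.finrank_map_eq τe.symm _
    rw [h1, LinearMap.finrank_range_of_inj (LinearMap.dualMap_injective_of_surjective hevs),
      Subspace.dual_finrank_eq]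
  have hz : ∀ X, T X *ᵥ x = 0 → ev (Matrix.toLin' X) = 0 := fun X hX => by
    rw [hev, LinearMap.toMatrix'_toLin', hX]
  rcases thmD h2 (by simpa using hn) 𝒢 hfin (by
    intro A hA
    have hne := mulVec_ne _ (ProdInv2_unit _ (hB _ (BB_toMatrix A hA))) x hx
    obtain ⟨φ, hφ⟩ := dual_one (F := F) _ hne
    obtain ⟨G, hG, hG2⟩ := h𝒢2 φ
    refine ⟨G, hG, ?_⟩
    rw [hG2, hev, hφ]
    exact one_ne_zero) with ⟨w, hw, hwg⟩ | ⟨g, hg, hgz⟩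
  · left
    refine ⟨w, hw, fun X hX => ?_⟩
    refine eq_zero_of_dual (F := F) _ fun g => ?_
    obtain ⟨φ, hφ⟩ := h𝒢 _ (hwg g)
    have := hφ (Matrix.toLin' X)
    rwa [tr_rk_mul, hz X hX, map_zero, Matrix.toLin'_apply] at this
  · right
    refine ⟨fun i => g (Pi.single i 1), fun h0 => hg ?_, fun X hX => ?_⟩
    · refine LinearMap.pi_ext' fun i => ?_
      ext
      exact congrFun h0 i
    · funext j
      obtain ⟨φ, hφ⟩ := h𝒢 _ (hgz (Pi.single j 1))
      have h5 := hφ (Matrix.toLin' X)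
      rw [tr_rk_mul, hz X hX, map_zero, Matrix.toLin'_apply] at h5
      have h6 : X *ᵥ Pi.single j 1 = ∑ i, X i j • (Pi.single i (1:F) : Fin n → F) := by
        funext k
        simp [Finset.sum_apply, Pi.single_apply]
      rw [h6, map_sum] at h5
      simpa [mulVec, dotProduct] using h5

end partE


section partF
variable {F : Type*} [Field F]

lemma two_invol (A : Matrix (Fin 2) (Fin 2) F) (h1 : A.det = -1) (h2 : A 0 0 + A 1 1 = 0) :
    A * A = 1 := by
  rw [det_fin_two] at h1
  have e : A 1 1 = - A 0 0 := by linear_combination h2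
  rw [e] at h1
  ext i j
  fin_cases i <;> fin_cases j <;> simp [mul_apply, Fin.sum_univ_two, e] <;>
    first | ring1 | linear_combination -h1

lemma two_B (A J : Matrix (Fin 2) (Fin 2) F) (hJ : J.det = -1) (hJ2 : J 0 0 + J 1 1 = 0)
    (hA : A.det = 1) (h : (J * A) 0 0 + (J * A) 1 1 = 0) : A ∈ ProdInv2 F 2 := by
  refine ⟨J, J * A, two_invol _ hJ hJ2, two_invol _ (by rw [det_mul, hJ, hA, mul_one]) h, ?_⟩
  rw [← mul_assoc, two_invol _ hJ hJ2, one_mul]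

lemma two_SL (A : Matrix (Fin 2) (Fin 2) F) (hA : A.det = 1) : A ∈ ProdInv2 F 2 := by
  by_cases hc : A 1 0 = 0
  · by_cases hb : A 0 1 = 0
    · refine two_B A !![0, 1; 1, 0] (by simp [det_fin_two]) (by simp) hA ?_
      simp [mul_apply, Fin.sum_univ_two, hb, hc]
    · refine two_B A !![1, 0; (A 1 1 - A 0 0) / A 0 1, -1] (by simp [det_fin_two]) (by simp) hA ?_
      simp [mul_apply, Fin.sum_univ_two]
      field_simp
      ring
  · refine two_B A !![1, (A 1 1 - A 0 0) / A 1 0; 0, -1] (by simp [det_fin_two]) (by simp) hA ?_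
    simp [mul_apply, Fin.sum_univ_two]
    field_simp
    ring

lemma two_inv_B (A : Matrix (Fin 2) (Fin 2) F) (h1 : A.det = -1) (h2 : A 0 0 + A 1 1 = 0) :
    A ∈ ProdInv2 F 2 :=
  ⟨1, A, one_mul _, two_invol A h1 h2, (one_mul _).symm⟩

lemma B_det_sq {n : ℕ} (A : Matrix (Fin n) (Fin n) F) (hA : A ∈ ProdInv2 F n) : A.det ^ 2 = 1 := by
  obtain ⟨J, K, hJ, hK, rfl⟩ := hA
  have e1 : J.det * J.det = 1 := by rw [← det_mul, hJ, det_one]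
  have e2 : K.det * K.det = 1 := by rw [← det_mul, hK, det_one]
  rw [det_mul]
  linear_combination (K.det * K.det) * e1 + e2

lemma quad_pm (h2 : (2:F) ≠ 0) (a : F) (ha0 : a ≠ 0) (ha1 : a ^ 2 ≠ 1) (α β γ : F)
    (h : ∀ t : F, (α + β * t + γ * t ^ 2) ^ 2 = 1) : γ = 0 := by
  have h0 := h 0
  have hp := h 1
  have hm := h (-1)
  have hap := h a
  have ham := h (-a)
  have h4 : (4:F) ≠ 0 := by
    have : (4:F) = 2 * 2 := by norm_num
    rw [this]; exact mul_ne_zero h2 h2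
  have hα : α ≠ 0 := by
    rintro rfl
    simp at h0
  have e1 : β * (α + γ) = 0 := by
    apply (mul_eq_zero.1 (?_ : (4:F) * _ = 0)).resolve_left h4
    linear_combination hp - hm
  rcases mul_eq_zero.1 e1 with hb | hg
  · subst hb
    by_contra hγ
    have e2 : 2 * α + γ = 0 := by
      apply (mul_eq_zero.1 (?_ : γ * _ = 0)).resolve_left hγ
      linear_combination hp - h0
    have e3 : 2 * α + γ * a ^ 2 = 0 := by
      apply (mul_eq_zero.1 (?_ : (γ * a ^ 2) * _ = 0)).resolve_left (mul_ne_zero hγ (pow_ne_zero _ ha0))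
      linear_combination hap - h0
    apply ha1
    have : γ * (a ^ 2 - 1) = 0 := by linear_combination e3 - e2
    linear_combination (mul_eq_zero.1 this).resolve_left hγ
  · exfalso
    have hg' : γ = -α := by linear_combination hg
    subst hg'
    have hβ : β ≠ 0 := by
      rintro rfl
      simp at hp
    have : (4 * β * a * α) * (1 - a ^ 2) = 0 := by linear_combination hap - ham
    have := (mul_eq_zero.1 this).resolve_left
      (mul_ne_zero (mul_ne_zero (mul_ne_zero h4 hβ) ha0) hα)
    exact ha1 (by linear_combination -this)

lemma two_big (h2 : (2:F) ≠ 0) (a : F) (ha0 : a ≠ 0) (ha1 : a ^ 2 ≠ 1)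
    (T : Matrix (Fin 2) (Fin 2) F →ₗ[F] Matrix (Fin 2) (Fin 2) F)
    (hB : ∀ A ∈ ProdInv2 F 2, T A ∈ ProdInv2 F 2)
    (X : Matrix (Fin 2) (Fin 2) F) (hX : (T X).det = 0) : X.det = 0 := by
  have key : ∀ A N : Matrix (Fin 2) (Fin 2) F, (∀ t : F, (A + t • N).det = 1) → (T N).det = 0 := by
    intro A N h
    refine quad_pm h2 a ha0 ha1 (T A).det
      (T A 0 0 * T N 1 1 + T N 0 0 * T A 1 1 - T A 0 1 * T N 1 0 - T N 0 1 * T A 1 0) _ fun t => ?_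
    have := B_det_sq _ (hB _ (two_SL _ (h t)))
    rw [map_add, map_smul] at this
    rw [← this]
    simp only [det_fin_two, Matrix.add_apply, Matrix.smul_apply, smul_eq_mul]
    ring
  have comb : ∀ p q r s : F, T !![p, q; r, s] = p • T !![1, 0; 0, 0] + q • T !![0, 1; 0, 0]
      + r • T !![0, 0; 1, 0] + s • T !![0, 0; 0, 1] := by
    intro p q r s
    rw [← T.map_smul, ← T.map_smul, ← T.map_smul, ← T.map_smul, ← T.map_add, ← T.map_add,
      ← T.map_add]
    congr 1
    ext i j
    fin_cases i <;> fin_cases j <;> simp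
  have k1 := key !![0, 1; -1, 0] !![1, 0; 0, 0] (by intro t; simp [det_fin_two])
  have k2 := key 1 !![0, 1; 0, 0] (by intro t; simp [det_fin_two])
  have k3 := key 1 !![0, 0; 1, 0] (by intro t; simp [det_fin_two])
  have k4 := key !![0, 1; -1, 0] !![0, 0; 0, 1] (by intro t; simp [det_fin_two])
  have k12 := key !![1, 0; 1, 1] !![1, 1; 0, 0] (by intro t; simp [det_fin_two])
  have k13 := key !![1, 1; 0, 1] !![1, 0; 1, 0] (by intro t; simp [det_fin_two])
  have k24 := key !![1, 0; 1, 1] !![0, 1; 0, 1] (by intro t; simp [det_fin_two]; try ring)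
  have k34 := key !![1, 1; 0, 1] !![0, 0; 1, 1] (by intro t; simp [det_fin_two]; try ring)
  have kall := key !![1, 2; 0, 1] !![1, 1; 1, 1] (by intro t; simp [det_fin_two]; try ring)
  have kI := B_det_sq _ (hB _ (two_SL 1 det_one))
  rw [Matrix.one_fin_two] at kI
  rw [eta_fin_two X] at hX ⊢
  rw [comb] at k12 k13 k24 k34 kall kI hX
  generalize T !![1, 0; 0, 0] = M1 at *
  generalize T !![0, 1; 0, 0] = M2 at *
  generalize T !![0, 0; 1, 0] = M3 at *
  generalize T !![0, 0; 0, 1] = M4 at *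
  generalize X 0 0 = p at *
  generalize X 0 1 = q at *
  generalize X 1 0 = r at *
  generalize X 1 1 = s at *
  simp only [det_fin_two, Matrix.add_apply, Matrix.smul_apply, smul_eq_mul, one_mul, zero_mul,
    zero_add, add_zero] at k1 k2 k3 k4 k12 k13 k24 k34 kall kI hX
  rw [det_fin_two_of]
  have hK : M1 0 0 * M4 1 1 + M4 0 0 * M1 1 1 - M1 0 1 * M4 1 0 - M4 0 1 * M1 1 0 ≠ 0 := by
    intro h0
    have : (M1 0 0 + M4 0 0) * (M1 1 1 + M4 1 1) - (M1 0 1 + M4 0 1) * (M1 1 0 + M4 1 0) = 0 := by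
      linear_combination h0 + k1 + k4
    rw [this] at kI
    simp at kI
  apply (mul_eq_zero.1 (?_ : (M1 0 0 * M4 1 1 + M4 0 0 * M1 1 1 - M1 0 1 * M4 1 0
    - M4 0 1 * M1 1 0) * _ = 0)).resolve_left hK
  linear_combination hX - p ^ 2 * k1 - q ^ 2 * k2 - r ^ 2 * k3 - s ^ 2 * k4
    - p * q * (k12 - k1 - k2) - p * r * (k13 - k1 - k3) - q * s * (k24 - k2 - k4)
    - r * s * (k34 - k3 - k4) - q * r * (kall - k1 - k2 - k3 - k4 - (k12 - k1 - k2)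
    - (k13 - k1 - k3) - (k24 - k2 - k4) - (k34 - k3 - k4))

lemma two_fac (A : Matrix (Fin 2) (Fin 2) F) (hA : A.det = 0) :
    ∃ u v : Fin 2 → F, ∀ i j, A i j = u i * v j := by
  rw [det_fin_two] at hA
  by_cases h0 : A 0 0 = 0
  · by_cases h1 : A 0 1 = 0
    · refine ⟨![0, 1], ![A 1 0, A 1 1], fun i j => ?_⟩
      fin_cases i <;> fin_cases j <;> simp [h0, h1]
    · refine ⟨![1, A 1 1 / A 0 1], ![A 0 0, A 0 1], fun i j => ?_⟩
      fin_cases i <;> fin_cases j <;> simp <;> field_simp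
      linear_combination -hA
  · refine ⟨![1, A 1 0 / A 0 0], ![A 0 0, A 0 1], fun i j => ?_⟩
    fin_cases i <;> fin_cases j <;> simp <;> field_simp
    linear_combination hA

/-- matrices whose image is `v` times the functional vanishing at `x` -/
lemma two_W (T : Matrix (Fin 2) (Fin 2) F →ₗ[F] Matrix (Fin 2) (Fin 2) F)
    (hT : Function.Bijective T) (x : Fin 2 → F) (hx : x ≠ 0) :
    ∃ Z : Matrix (Fin 2) (Fin 2) F, Z ≠ 0 ∧ Z 0 0 + Z 1 1 = 0 ∧ T Z *ᵥ x = 0 := by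
  obtain ⟨Y0, hY0⟩ := hT.2 !![x 1, -x 0; 0, 0]
  obtain ⟨Y1, hY1⟩ := hT.2 !![0, 0; x 1, -x 0]
  have key : ∀ a b : F, (a ≠ 0 ∨ b ≠ 0) → a • Y0 + b • Y1 ≠ 0 := by
    intro a b hab h
    have h' : T (a • Y0 + b • Y1) = 0 := by rw [h, map_zero]
    rw [map_add, map_smul, map_smul, hY0, hY1] at h'
    have e00 := congrFun (congrFun h' 0) 0
    have e01 := congrFun (congrFun h' 0) 1
    have e10 := congrFun (congrFun h' 1) 0
    have e11 := congrFun (congrFun h' 1) 1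
    simp at e00 e01 e10 e11
    apply hx
    ext i
    fin_cases i <;> simp <;> tauto
  have kz : ∀ a b : F, T (a • Y0 + b • Y1) *ᵥ x = 0 := by
    intro a b
    rw [map_add, map_smul, map_smul, hY0, hY1]
    ext i
    fin_cases i <;> simp [mulVec, dotProduct, Fin.sum_univ_two] <;> ring
  by_cases h : Y0 0 0 + Y0 1 1 = 0
  · refine ⟨(1:F) • Y0 + (0:F) • Y1, key _ _ (Or.inl one_ne_zero), ?_, kz _ _⟩
    simpa using h
  · refine ⟨(Y1 0 0 + Y1 1 1) • Y0 + (-(Y0 0 0 + Y0 1 1)) • Y1,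
      key _ _ (Or.inr (neg_ne_zero.2 h)), ?_, kz _ _⟩
    simp
    ring

lemma two_small (h2 : (2:F) ≠ 0) (hF : ∀ a : F, a = 0 ∨ a = 1 ∨ a = -1)
    (T : Matrix (Fin 2) (Fin 2) F →ₗ[F] Matrix (Fin 2) (Fin 2) F)
    (hT : Function.Bijective T) (hB : ∀ A ∈ ProdInv2 F 2, T A ∈ ProdInv2 F 2)
    (x : Fin 2 → F) (hx : x ≠ 0) (X : Matrix (Fin 2) (Fin 2) F) (hX : T X *ᵥ x = 0) :
    X.det = 0 := by
  have nB : ∀ Y, T Y *ᵥ x = 0 → Y ∉ ProdInv2 F 2 := fun Y hY h =>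
    mulVec_ne _ (ProdInv2_unit _ (hB _ h)) x hx hY
  have n1 : ∀ Y, T Y *ᵥ x = 0 → Y.det ≠ 1 := fun Y hY h => nB Y hY (two_SL Y h)
  obtain ⟨Z, hZ0, hZt, hZx⟩ := two_W T hT x hx
  have hZd : Z.det = 0 := by
    rcases hF Z.det with h | h | h
    · exact h
    · exact absurd h (n1 Z hZx)
    · exact absurd (two_inv_B Z h hZt) (nB Z hZx)
  rcases hF X.det with h | h | h
  · exact h
  · exact absurd h (n1 X hX)
  exfalso
  refine nB X hX (two_inv_B X h ?_)
  have hpol : X 0 0 * Z 1 1 + Z 0 0 * X 1 1 - X 0 1 * Z 1 0 - Z 0 1 * X 1 0 = 0 := by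
    by_contra hp
    set p := X 0 0 * Z 1 1 + Z 0 0 * X 1 1 - X 0 1 * Z 1 0 - Z 0 1 * X 1 0 with hpd
    apply n1 (X + (2 / p) • Z)
    · rw [map_add, map_smul, add_mulVec, smul_mulVec, hX, hZx, smul_zero, add_zero]
    · have hq : (2 / p) * p = 2 := by field_simp
      rw [hpd] at hq
      rw [det_fin_two] at *
      generalize 2 / (X 0 0 * Z 1 1 + Z 0 0 * X 1 1 - X 0 1 * Z 1 0 - Z 0 1 * X 1 0) = t at *
      simp only [Matrix.add_apply, Matrix.smul_apply, smul_eq_mul]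
      linear_combination h + t ^ 2 * hZd + hq
  have e : Z 1 1 = - Z 0 0 := by linear_combination hZt
  rw [det_fin_two] at h hZd
  rw [e] at hpol hZd
  have hlast : ∀ l m : F, l * m = -1 → l + m = 0 := by
    intro l m hlm
    rcases hF l with h | h | h
    · subst h; simp at hlm
    · subst h; linear_combination hlm
    · subst h; linear_combination -hlm
  by_cases hb : Z 0 1 = 0
  · have ha : Z 0 0 = 0 := by
      rw [hb] at hZd
      simpa using hZd
    have hc : Z 1 0 ≠ 0 := by
      intro hc
      apply hZ0
      ext i j
      fin_cases i <;> fin_cases j <;> simp [ha, hb, hc, e]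
    rw [ha, hb] at hpol
    have : X 0 1 = 0 := by simpa [hc] using hpol
    rw [this] at h
    exact hlast _ _ (by linear_combination h)
  · set k := Z 0 0 / Z 0 1 with hk
    have ha : Z 0 0 = k * Z 0 1 := by rw [hk]; field_simp
    have hc : Z 1 0 = - k ^ 2 * Z 0 1 := by
      apply mul_left_cancel₀ hb
      rw [ha] at hZd
      linear_combination -hZd
    rw [ha, hc] at hpol
    have e2 : k * (X 1 1 - X 0 0) + X 0 1 * k ^ 2 - X 1 0 = 0 := by
      apply (mul_eq_zero.1 (?_ : Z 0 1 * _ = 0)).resolve_left hb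
      linear_combination hpol
    have := hlast (X 0 0 - X 0 1 * k) (X 1 1 + X 0 1 * k) (by
      linear_combination h - X 0 1 * e2)
    linear_combination this

lemma types_two (h2 : (2:F) ≠ 0)
    (T : Matrix (Fin 2) (Fin 2) F →ₗ[F] Matrix (Fin 2) (Fin 2) F)
    (hT : Function.Bijective T) (hB : ∀ A ∈ ProdInv2 F 2, T A ∈ ProdInv2 F 2)
    (x : Fin 2 → F) (hx : x ≠ 0) : TI T x ∨ TII T x := by
  have sing : ∀ X, T X *ᵥ x = 0 → X.det = 0 := by
    intro X hX
    by_cases hF : ∀ a : F, a = 0 ∨ a = 1 ∨ a = -1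
    · exact two_small h2 hF T hT hB x hx X hX
    · push Not at hF
      obtain ⟨a, ha0, ha1, ha2⟩ := hF
      refine two_big h2 a ha0 ?_ T hB X ?_
      · intro h
        rcases mul_self_eq_one_iff.1 ((sq a).symm.trans h) with h | h
        · exact ha1 h
        · exact ha2 h
      · exact (Matrix.exists_mulVec_eq_zero_iff).1 ⟨x, hx, hX⟩
  obtain ⟨X1, hX10, -, hX1x⟩ := two_W T hT x hx
  obtain ⟨u, v, huv⟩ := two_fac X1 (sing _ hX1x)
  have hu : u ≠ 0 := by
    rintro rfl
    apply hX10; ext i j; simp [huv]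
  have hv : v ≠ 0 := by
    rintro rfl
    apply hX10; ext i j; simp [huv]
  have perp : ∀ w : Fin 2 → F, w ≠ 0 → (![-w 1, w 0] : Fin 2 → F) ≠ 0 := by
    intro w hw h
    apply hw
    have h0 := congrFun h 0
    have h1 := congrFun h 1
    simp at h0 h1
    ext i; fin_cases i <;> simp [h0, h1]
  have each : ∀ Y, T Y *ᵥ x = 0 → Y *ᵥ ![-v 1, v 0] = 0 ∨ Yᵀ *ᵥ ![-u 1, u 0] = 0 := by
    intro Y hY
    have d1 := sing _ hX1x
    have d2 := sing _ hY
    have d3 := sing (X1 + Y) (by rw [map_add, add_mulVec, hX1x, hY, add_zero])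
    obtain ⟨p, q, hpq⟩ := two_fac Y d2
    rw [det_fin_two] at d3
    simp only [Matrix.add_apply, huv, hpq] at d3
    have : (q 1 * v 0 - q 0 * v 1) * (p 1 * u 0 - p 0 * u 1) = 0 := by
      linear_combination d3
    rcases mul_eq_zero.1 this with h | h
    · left
      ext i
      simp [mulVec, dotProduct, Fin.sum_univ_two, hpq]
      linear_combination p i * h
    · right
      ext i
      simp [mulVec, dotProduct, Fin.sum_univ_two, hpq]
      linear_combination q i * h
  by_contra hcon
  rw [not_or] at hcon
  obtain ⟨c1, c2⟩ := hcon
  have c1' : ∃ Y, T Y *ᵥ x = 0 ∧ Y *ᵥ ![-v 1, v 0] ≠ 0 := by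
    by_contra h
    push Not at h
    exact c1 ⟨_, perp v hv, h⟩
  have c2' : ∃ Y, T Y *ᵥ x = 0 ∧ Yᵀ *ᵥ ![-u 1, u 0] ≠ 0 := by
    by_contra h
    push Not at h
    exact c2 ⟨_, perp u hu, h⟩
  obtain ⟨Y1, a1, a2⟩ := c1'
  obtain ⟨Y2, b1, b2⟩ := c2'
  have a3 := (each _ a1).resolve_left a2
  have b3 := (each _ b1).resolve_right b2
  rcases each (Y1 + Y2) (by rw [map_add, add_mulVec, a1, b1, add_zero]) with h | h
  · rw [add_mulVec, b3, add_zero] at h; exact a2 h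
  · rw [transpose_add, add_mulVec, a3, zero_add] at h; exact b2 h

lemma types_all {n : ℕ} (h2 : (2:F) ≠ 0) (hn : 2 ≤ n)
    (T : Matrix (Fin n) (Fin n) F →ₗ[F] Matrix (Fin n) (Fin n) F)
    (hT : Function.Bijective T) (hB : ∀ A ∈ ProdInv2 F n, T A ∈ ProdInv2 F n)
    (x : Fin n → F) (hx : x ≠ 0) : TI T x ∨ TII T x := by
  rcases Nat.lt_or_ge n 3 with h | h
  · obtain rfl : n = 2 := by omega
    exact types_two h2 T hT hB x hx
  · exact types_ge3 h2 h T hT hB x hx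
end partF


section partG
variable {F : Type*} [Field F] {n : ℕ}

lemma dot_all_zero (g : Fin n → F) (h : ∀ v, g ⬝ᵥ v = 0) : g = 0 := by
  ext i
  have := h (Pi.single i 1)
  simpa using this

lemma mixed (T : Matrix (Fin n) (Fin n) F →ₗ[F] Matrix (Fin n) (Fin n) F)
    (hT : Function.Bijective T) (x1 x2 : Fin n → F) (hx1 : x1 ≠ 0) (hx : ∀ c : F, c • x1 ≠ x2)
    (h1 : TI T x1) (h2 : TII T x2) : False := by
  obtain ⟨z, hz, hz1⟩ := h1
  obtain ⟨g, hg, hg2⟩ := h2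
  obtain ⟨f1, f2, -, -, a1, a2⟩ := dual_pair (F := F) x1 x2 hx1 hx
  apply hg
  apply dot_all_zero
  intro v
  obtain ⟨f, hf⟩ := dual_one (F := F) z hz
  obtain ⟨X, hX⟩ := exists_mat z f v
  obtain ⟨M, hM⟩ := exists_mat z f2 (T X *ᵥ x2)
  obtain ⟨Y, rfl⟩ := hT.2 M
  have e1 : Y *ᵥ z = 0 := hz1 Y (by rw [hM, a1, zero_smul])
  have e2 : (X - Y)ᵀ *ᵥ g = 0 := hg2 (X - Y) (by rw [map_sub, sub_mulVec, hM, a2, one_smul, sub_self])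
  have e3 : (X - Y) *ᵥ z = v := by rw [sub_mulVec, e1, hX, hf, one_smul, sub_zero]
  rw [← e3, dotProduct_mulVec, ← mulVec_transpose, e2, zero_dotProduct]

lemma TI_data (T : Matrix (Fin n) (Fin n) F →ₗ[F] Matrix (Fin n) (Fin n) F)
    (x : Fin n → F) (h : TI T x) :
    ∃ (z : Fin n → F) (R : (Fin n → F) →ₗ[F] (Fin n → F)), z ≠ 0 ∧ Function.Injective R ∧
      ∀ X, X *ᵥ z = R (T X *ᵥ x) := by
  obtain ⟨z, hz, hzx⟩ := h
  let φ : Matrix (Fin n) (Fin n) F →ₗ[F] (Fin n → F) :=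
    { toFun := fun X => T X *ᵥ x
      map_add' := by intros; simp [add_mulVec]
      map_smul' := by intros; simp [smul_mulVec] }
  let ξ : Matrix (Fin n) (Fin n) F →ₗ[F] (Fin n → F) :=
    { toFun := fun X => X *ᵥ z
      map_add' := by intros; simp [add_mulVec]
      map_smul' := by intros; simp [smul_mulVec] }
  have hco : ∀ i, ∃ η : (Fin n → F) →ₗ[F] F, ∀ X ∈ (⊤ : Submodule F (Matrix (Fin n) (Fin n) F)),
      η (φ X) = ((LinearMap.proj i).comp ξ) X := fun i =>
    factor_on (F := F) ⊤ φ ((LinearMap.proj i).comp ξ) (fun X _ h => congrFun (hzx X h) i)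
  choose η hη using hco
  let R : (Fin n → F) →ₗ[F] (Fin n → F) := LinearMap.pi η
  have hR' : ∀ X, X *ᵥ z = R (T X *ᵥ x) := fun X => funext fun i => (hη i X trivial).symm
  refine ⟨z, R, hz, ?_, hR'⟩
  rw [LinearMap.injective_iff_surjective]
  intro v
  obtain ⟨f, hf⟩ := dual_one (F := F) z hz
  obtain ⟨X, hX⟩ := exists_mat z f v
  refine ⟨T X *ᵥ x, ?_⟩
  rw [← hR', hX, hf, one_smul]

lemma R_prop (T : Matrix (Fin n) (Fin n) F →ₗ[F] Matrix (Fin n) (Fin n) F)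
    (hT : Function.Bijective T) (x y zx zy zs : Fin n → F)
    (Rx Ry Rs : (Fin n → F) →ₗ[F] (Fin n → F)) (hx : x ≠ 0) (hxy : ∀ c : F, c • x ≠ y)
    (hzs : zs ≠ 0) (iRx : Function.Injective Rx) (iRy : Function.Injective Ry)
    (hRx : ∀ X, X *ᵥ zx = Rx (T X *ᵥ x)) (hRy : ∀ X, X *ᵥ zy = Ry (T X *ᵥ y))
    (hRs : ∀ X, X *ᵥ zs = Rs (T X *ᵥ (x + y))) (iRs : Function.Injective Rs) :
    ∃ c : F, c ≠ 0 ∧ ∀ v, Ry v = c • Rx v := by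
  have hmem : zs ∈ Submodule.span F {zx, zy} := by
    by_contra hn
    obtain ⟨f, hf1, hf2⟩ := Submodule.exists_le_ker_of_notMem hn
    obtain ⟨X, hX⟩ := exists_mat zs f zs
    have k1 : f zx = 0 := hf2 (Submodule.subset_span (by simp))
    have k2 : f zy = 0 := hf2 (Submodule.subset_span (by simp))
    have t1 : T X *ᵥ x = 0 := iRx (by rw [← hRx, hX, k1, zero_smul, map_zero])
    have t2 : T X *ᵥ y = 0 := iRy (by rw [← hRy, hX, k2, zero_smul, map_zero])
    have t3 := hRs X
    rw [mulVec_add, t1, t2, add_zero, map_zero, hX] at t3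
    exact (smul_ne_zero hf1 hzs) t3
  obtain ⟨α, β, hαβ⟩ := Submodule.mem_span_pair.1 hmem
  obtain ⟨f1, f2, a1, a2, a3, a4⟩ := dual_pair (F := F) x y hx hxy
  have all : ∀ Y : Matrix (Fin n) (Fin n) F,
      α • Rx (Y *ᵥ x) + β • Ry (Y *ᵥ y) = Rs (Y *ᵥ x + Y *ᵥ y) := by
    intro Y
    obtain ⟨X, rfl⟩ := hT.2 Y
    rw [← hRx, ← hRy, ← mulVec_add, ← hRs, ← hαβ, mulVec_add, mulVec_smul, mulVec_smul]
  have k1 : ∀ v, α • Rx v = Rs v := by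
    intro v
    obtain ⟨Y, hY⟩ := exists_mat x f1 v
    have := all Y
    rw [hY, hY, a1, a2] at this
    simpa using this
  have k2 : ∀ v, β • Ry v = Rs v := by
    intro v
    obtain ⟨Y, hY⟩ := exists_mat x f2 v
    have := all Y
    rw [hY, hY, a3, a4] at this
    simpa using this
  have hne : Rs x ≠ 0 := fun h => hx (iRs (by rw [h, map_zero]))
  have hα : α ≠ 0 := by
    rintro rfl
    apply hne
    rw [← k1, zero_smul]
  have hβ : β ≠ 0 := by
    rintro rfl
    apply hne
    rw [← k2, zero_smul]
  refine ⟨β⁻¹ * α, mul_ne_zero (inv_ne_zero hβ) hα, fun v => ?_⟩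
  rw [mul_smul, k1, ← k2, inv_smul_smul₀ hβ]

lemma TI_form (hn : 2 ≤ n) (T : Matrix (Fin n) (Fin n) F →ₗ[F] Matrix (Fin n) (Fin n) F)
    (hT : Function.Bijective T) (h : ∀ x, x ≠ 0 → TI T x) :
    ∃ P Q : Matrix (Fin n) (Fin n) F, ∀ X, T X = P * X * Q := by
  have hd : ∀ x : Fin n → F, ∃ (z : Fin n → F) (R : (Fin n → F) →ₗ[F] (Fin n → F)), x ≠ 0 →
      z ≠ 0 ∧ Function.Injective R ∧ ∀ X, X *ᵥ z = R (T X *ᵥ x) := by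
    intro x
    by_cases hx : x = 0
    · exact ⟨0, 0, fun h => absurd hx h⟩
    · obtain ⟨z, R, hz⟩ := TI_data T x (h x hx)
      exact ⟨z, R, fun _ => hz⟩
  choose z R hzR using hd
  let i0 : Fin n := ⟨0, by omega⟩
  let e : Fin n → Fin n → F := fun i => Pi.single i 1
  have he : ∀ i, e i ≠ 0 := by
    intro i h
    have := congrFun h i
    simp [e] at this
  have hc : ∀ i, ∃ c : F, c ≠ 0 ∧ ∀ v, R (e i) v = c • R (e i0) v := by
    intro i
    by_cases hi : i = i0
    · exact ⟨1, one_ne_zero, fun v => by rw [hi, one_smul]⟩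
    · have hind : ∀ c : F, c • e i0 ≠ e i := by
        intro c h
        have := congrFun h i
        simp [e, hi] at this
      have hs : e i0 + e i ≠ 0 := by
        intro h
        have := congrFun h i
        simp [e, hi] at this
      obtain ⟨a1, a2, a3⟩ := hzR _ (he i0)
      obtain ⟨b1, b2, b3⟩ := hzR _ (he i)
      obtain ⟨c1, c2, c3⟩ := hzR _ hs
      exact R_prop T hT _ _ _ _ _ _ _ _ (he i0) hind c1 a2 b2 a3 b3 c3 c2
  choose c hc0 hcR using hc
  let Z : Matrix (Fin n) (Fin n) F := Matrix.of fun k i => (c i)⁻¹ * z (e i) k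
  let Rm := LinearMap.toMatrix' (R (e i0))
  have key : ∀ X, X * Z = Rm * T X := by
    intro X
    ext k i
    have h1 : (X * Z) k i = (c i)⁻¹ * (X *ᵥ z (e i)) k := by
      simp only [mul_apply, mulVec, dotProduct, Z, of_apply, Finset.mul_sum]
      exact Finset.sum_congr rfl fun _ _ => by ring
    have h2 : (Rm * T X) k i = (Rm *ᵥ (T X *ᵥ e i)) k := by
      rw [mulVec_mulVec]; simp [e]
    rw [h1, h2, LinearMap.toMatrix'_mulVec, (hzR _ (he i)).2.2, hcR]
    simp [hc0 i]
  have hu : IsUnit Rm := by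
    have : IsUnit (R (e i0)) := by
      rw [LinearMap.isUnit_iff_ker_eq_bot]
      exact LinearMap.ker_eq_bot.2 (hzR _ (he i0)).2.1
    obtain ⟨u, hu⟩ := this
    refine IsUnit.of_mul_eq_one (LinearMap.toMatrix' (↑u⁻¹ : Module.End F (Fin n → F))) ?_
    rw [← LinearMap.toMatrix'_mul, ← hu, Units.mul_inv, LinearMap.toMatrix'_one]
  refine ⟨Rm⁻¹, Z, fun X => ?_⟩
  rw [mul_assoc, key, ← mul_assoc, nonsing_inv_mul _ ((isUnit_iff_isUnit_det _).1 hu), one_mul]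

end partG


section partH
variable {F : Type*} [Field F] {n : ℕ}

lemma B_conj (A P : Matrix (Fin n) (Fin n) F) (hA : A ∈ ProdInv2 F n) (hP : IsUnit P) :
    P * A * P⁻¹ ∈ ProdInv2 F n := by
  obtain ⟨J, K, hJ, hK, rfl⟩ := hA
  have e : P⁻¹ * P = 1 := nonsing_inv_mul _ ((isUnit_iff_isUnit_det _).1 hP)
  have e' : P * P⁻¹ = 1 := mul_nonsing_inv _ ((isUnit_iff_isUnit_det _).1 hP)
  have c : ∀ G H : Matrix (Fin n) (Fin n) F, (P * G * P⁻¹) * (P * H * P⁻¹) = P * (G * H) * P⁻¹ := by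
    intro G H
    calc (P * G * P⁻¹) * (P * H * P⁻¹) = P * G * (P⁻¹ * P) * H * P⁻¹ := by simp only [mul_assoc]
      _ = _ := by rw [e, mul_one]; simp only [mul_assoc]
  refine ⟨P * J * P⁻¹, P * K * P⁻¹, ?_, ?_, (c _ _).symm⟩
  · rw [c, hJ, mul_one, e']
  · rw [c, hK, mul_one, e']

lemma B_transpose (A : Matrix (Fin n) (Fin n) F) (hA : A ∈ ProdInv2 F n) : Aᵀ ∈ ProdInv2 F n := by
  obtain ⟨J, K, hJ, hK, rfl⟩ := hA
  refine ⟨Kᵀ, Jᵀ, ?_, ?_, transpose_mul _ _⟩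
  · rw [← transpose_mul, hK, transpose_one]
  · rw [← transpose_mul, hJ, transpose_one]

lemma B_neg (A : Matrix (Fin n) (Fin n) F) (hA : A ∈ ProdInv2 F n) : -A ∈ ProdInv2 F n := by
  obtain ⟨J, K, hJ, hK, rfl⟩ := hA
  exact ⟨-J, K, by rw [neg_mul_neg, hJ], hK, (neg_mul _ _).symm⟩

lemma scalar_lemma (h2 : (2:F) ≠ 0) (hn : 2 ≤ n) (M : Matrix (Fin n) (Fin n) F)
    (hM : ∀ A ∈ ProdInv2 F n, A * M ∈ ProdInv2 F n) :
    ∃ m : F, (m = 1 ∨ m = -1) ∧ M = m • 1 := by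
  have hM1 := hM 1 ⟨1, 1, one_mul _, one_mul _, (one_mul _).symm⟩
  rw [one_mul] at hM1
  obtain ⟨J0, K0, hJ0, hK0, hM0⟩ := hM1
  set M' := K0 * J0 with hM'
  have hMM : M * M' = 1 := by
    rw [hM0, hM', mul_assoc, ← mul_assoc K0, hK0, one_mul, hJ0]
  have tr : ∀ J K : Matrix (Fin n) (Fin n) F, J * J = 1 → K * K = 1 →
      trace (M * (J * K)) = trace (M' * (K * J)) := by
    intro J K hJ hK
    obtain ⟨J1, K1, hJ1, hK1, h1⟩ := hM (J * K) ⟨J, K, hJ, hK, rfl⟩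
    have e1 : (J * K * M) * (M' * (K * J)) = 1 := by
      calc (J * K * M) * (M' * (K * J)) = J * K * (M * M') * (K * J) := by simp only [mul_assoc]
        _ = J * (K * K) * J := by rw [hMM, mul_one]; simp only [mul_assoc]
        _ = 1 := by rw [hK, mul_one, hJ]
    have e2 : (K1 * J1) * (J * K * M) = 1 := by
      rw [h1, mul_assoc, ← mul_assoc J1, hJ1, one_mul, hK1]
    have e3 : K1 * J1 = M' * (K * J) := left_inv_eq_right_inv e2 e1
    rw [trace_mul_comm, h1, trace_mul_comm, e3]
  have sqJ : ∀ E : Matrix (Fin n) (Fin n) F, E * E = E → (1 - (2:F) • E) * (1 - (2:F) • E) = 1 := by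
    intro E hE
    simp only [sub_mul, mul_sub, one_mul, mul_one, smul_mul_assoc, mul_smul_comm, hE]
    module
  have idem : ∀ E : Matrix (Fin n) (Fin n) F, E * E = E → trace (M * E) = trace (M' * E) := by
    intro E hE
    have a := tr 1 1 (one_mul _) (one_mul _)
    have b := tr (1 - (2:F) • E) 1 (sqJ E hE) (one_mul _)
    simp only [mul_one, one_mul, mul_sub, mul_smul_comm, trace_sub, trace_smul, smul_eq_mul] at a b
    apply mul_left_cancel₀ h2
    linear_combination a - b
  have trs : ∀ (N : Matrix (Fin n) (Fin n) F) i j, trace (N * Matrix.single i j 1) = N j i := by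
    intro N i j
    simp [trace_mul_single]
  have hdiag : ∀ i, M i i = M' i i := by
    intro i
    have := idem (Matrix.single i i 1) (by simp)
    rwa [trs, trs] at this
  have hoff : ∀ i j, i ≠ j → M j i = M' j i := by
    intro i j hij
    have := idem (Matrix.single i i 1 + Matrix.single i j 1)
      (by simp [mul_add, add_mul, hij.symm])
    rw [mul_add, mul_add, trace_add, trace_add, trs, trs, trs, trs] at this
    linear_combination this - hdiag i
  have hMeq : M = M' := by
    ext i j
    by_cases hij : j = i
    · subst hij; exact hdiag _
    · exact hoff _ _ hij
  have nil : ∀ E N : Matrix (Fin n) (Fin n) F, E * E = E → E * N = N → N * E = 0 →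
      trace (M * N) = 0 := by
    intro E N hE hEN hNE
    have hNN : N * N = 0 := by
      calc N * N = N * (E * N) := by rw [hEN]
        _ = 0 := by rw [← mul_assoc, hNE, zero_mul]
    have a := tr 1 1 (one_mul _) (one_mul _)
    have b := tr (1 - (2:F) • E) (1 - (2:F) • E - N) (sqJ E hE) (by
      simp only [sub_mul, mul_sub, one_mul, mul_one, smul_mul_assoc, mul_smul_comm, hE, hEN, hNE, hNN]
      module)
    have e1 : (1 - (2:F) • E) * (1 - (2:F) • E - N) = 1 + N := by
      simp only [sub_mul, mul_sub, one_mul, mul_one, smul_mul_assoc, mul_smul_comm, hE, hEN]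
      module
    have e2 : (1 - (2:F) • E - N) * (1 - (2:F) • E) = 1 - N := by
      simp only [sub_mul, mul_sub, one_mul, mul_one, smul_mul_assoc, mul_smul_comm, hE, hNE]
      module
    rw [e1, e2, ← hMeq, mul_add, mul_sub, trace_add, trace_sub] at b
    apply mul_left_cancel₀ h2
    linear_combination b
  have hz : ∀ i j, i ≠ j → M j i = 0 := by
    intro i j hij
    have := nil (Matrix.single i i 1) (Matrix.single i j 1) (by simp) (by simp) (by simp [hij.symm])
    rwa [trs] at this
  have hd : ∀ i j, i ≠ j → M i i = M j j := by
    intro i j hij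
    have := nil (Matrix.single i i 1 + Matrix.single j i 1)
      (Matrix.single i i 1 - Matrix.single i j 1 + Matrix.single j i 1 - Matrix.single j j 1)
      (by simp [mul_add, add_mul, hij])
      (by simp [mul_add, add_mul, mul_sub, sub_mul, hij, hij.symm]; try abel)
      (by simp [mul_add, add_mul, mul_sub, sub_mul, hij, hij.symm]; try abel)
    rw [mul_sub, mul_add, mul_sub, trace_sub, trace_add, trace_sub, trs, trs, trs, trs,
      hz i j hij, hz j i hij.symm] at this
    linear_combination this
  let i0 : Fin n := ⟨0, by omega⟩
  have hMs : M = (M i0 i0) • 1 := by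
    ext i j
    by_cases hij : j = i
    · subst hij
      by_cases h : j = i0
      · subst h; simp
      · simp [hd j i0 h]
    · rw [hz j i hij]
      simp [Ne.symm hij]
  refine ⟨M i0 i0, ?_, hMs⟩
  rw [← hMeq] at hMM
  have := congrFun (congrFun hMM i0) i0
  rw [hMs] at this
  simp at this
  exact mul_self_eq_one_iff.1 (by simpa using this)

lemma form_scalar (h2 : (2:F) ≠ 0) (hn : 2 ≤ n)
    (T : Matrix (Fin n) (Fin n) F →ₗ[F] Matrix (Fin n) (Fin n) F)
    (hB : ∀ A ∈ ProdInv2 F n, T A ∈ ProdInv2 F n)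
    (P Q : Matrix (Fin n) (Fin n) F) (hPQ : ∀ X, T X = P * X * Q) :
    ∃ α : F, (α = 1 ∨ α = -1) ∧ IsUnit P ∧ ∀ X, T X = α • (P * X * P⁻¹) := by
  have h1 := ProdInv2_unit _ (hB 1 ⟨1, 1, one_mul _, one_mul _, (one_mul _).symm⟩)
  rw [hPQ, mul_one] at h1
  have hP : IsUnit P := by
    rw [isUnit_iff_isUnit_det] at h1 ⊢
    rw [det_mul] at h1
    exact isUnit_of_mul_isUnit_left h1
  have hPd := (isUnit_iff_isUnit_det _).1 hP
  obtain ⟨m, hm, hQP⟩ := scalar_lemma h2 hn (Q * P) (by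
    intro A hA
    have := B_conj _ P⁻¹ (hB A hA) (by
      rw [isUnit_nonsing_inv_iff]; exact hP)
    rw [hPQ, nonsing_inv_nonsing_inv _ hPd] at this
    have e : P⁻¹ * (P * A * Q) * P = A * (Q * P) := by
      calc P⁻¹ * (P * A * Q) * P = (P⁻¹ * P) * A * Q * P := by simp only [mul_assoc]
        _ = _ := by rw [nonsing_inv_mul _ hPd, one_mul, mul_assoc]
    rwa [e] at this)
  refine ⟨m, hm, hP, fun X => ?_⟩
  have hQ : Q = m • P⁻¹ := by
    calc Q = Q * P * P⁻¹ := by rw [mul_assoc, mul_nonsing_inv _ hPd, mul_one]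
      _ = _ := by rw [hQP, smul_mul_assoc, one_mul]
  rw [hPQ, hQ, mul_smul_comm]

lemma forward (h2 : (2:F) ≠ 0) (hn : 2 ≤ n)
    (T : Matrix (Fin n) (Fin n) F →ₗ[F] Matrix (Fin n) (Fin n) F)
    (hT : Function.Bijective T) (hB : ∀ A ∈ ProdInv2 F n, T A ∈ ProdInv2 F n) :
    ∃ (α : F) (P : Matrix (Fin n) (Fin n) F), (α = 1 ∨ α = -1) ∧ IsUnit P ∧
        ((∀ X, T X = α • (P * X * P⁻¹)) ∨ (∀ X, T X = α • (P * Xᵀ * P⁻¹))) := by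
  by_cases hI : ∀ x, x ≠ 0 → TI T x
  · obtain ⟨P, Q, hPQ⟩ := TI_form hn T hT hI
    obtain ⟨α, a1, a2, a3⟩ := form_scalar h2 hn T hB P Q hPQ
    exact ⟨α, P, a1, a2, Or.inl a3⟩
  · push Not at hI
    obtain ⟨x1, hx1, hn1⟩ := hI
    have hII1 := (types_all h2 hn T hT hB x1 hx1).resolve_left hn1
    have hII : ∀ x, x ≠ 0 → TII T x := by
      intro x hx
      rcases types_all h2 hn T hT hB x hx with h | h
      · exfalso
        by_cases hc : ∀ c : F, c • x ≠ x1
        · exact mixed T hT x x1 hx hc h hII1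
        · push Not at hc
          obtain ⟨c, rfl⟩ := hc
          have hc0 : c ≠ 0 := by
            rintro rfl
            simp at hx1
          obtain ⟨z, hz, hzx⟩ := h
          refine hn1 ⟨z, hz, fun X hX => hzx X ?_⟩
          rw [mulVec_smul] at hX
          exact (smul_eq_zero.1 hX).resolve_left hc0
      · exact h
    let T' : Matrix (Fin n) (Fin n) F →ₗ[F] Matrix (Fin n) (Fin n) F :=
      T.comp (Matrix.transposeLinearEquiv (Fin n) (Fin n) F F).toLinearMap
    have hT' : ∀ X, T' X = T Xᵀ := fun _ => rfl
    have hT'b : Function.Bijective T' :=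
      hT.comp (Matrix.transposeLinearEquiv (Fin n) (Fin n) F F).bijective
    obtain ⟨P, Q, hPQ⟩ := TI_form hn T' hT'b (by
      intro x hx
      obtain ⟨z, hz, hzx⟩ := hII x hx
      exact ⟨z, hz, fun X hX => by simpa using hzx Xᵀ hX⟩)
    obtain ⟨α, a1, a2, a3⟩ := form_scalar h2 hn T' (fun A hA => hB _ (B_transpose A hA)) P Q hPQ
    refine ⟨α, P, a1, a2, Or.inr fun X => ?_⟩
    rw [← a3, hT', transpose_transpose]

end partH

theorem stmt0 (F : Type*) [Field F] (hchar : ringChar F ≠ 2) (n : ℕ) (hn : 2 ≤ n)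
    (T : Matrix (Fin n) (Fin n) F →ₗ[F] Matrix (Fin n) (Fin n) F)
    (hT : Function.Bijective T) :
    (∀ A ∈ ProdInv2 F n, T A ∈ ProdInv2 F n) ↔
      ∃ (α : F) (P : Matrix (Fin n) (Fin n) F), (α = 1 ∨ α = -1) ∧ IsUnit P ∧
        ((∀ X, T X = α • (P * X * P⁻¹)) ∨ (∀ X, T X = α • (P * Xᵀ * P⁻¹))) := by
  constructor
  · exact forward (Ring.two_ne_zero hchar) hn T hT
  · rintro ⟨α, P, hα, hP, h⟩ A hA
    have hs : ∀ Y ∈ ProdInv2 F n, α • Y ∈ ProdInv2 F n := by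
      intro Y hY
      rcases hα with rfl | rfl
      · rwa [one_smul]
      · rw [neg_one_smul]; exact B_neg Y hY
    rcases h with h | h
    · rw [h]; exact hs _ (B_conj _ _ hA hP)
    · rw [h]; exact hs _ (B_conj _ _ (B_transpose _ hA) hP)
end

section
/- Let F be a field with char(F) = 2 and let T : M_3(F) → M_3(F) be a bijective linear map. Suppose that either S = C_3 and F has exactly 2 elements, or S = D_3. Then T(S) ⊆ S if and only if there exist invertible matrices P, Q ∈ M_3(F) with det(PQ) = 1 such that either T(X) = P·X·Q for all X ∈ M_3(F), or T(X) = P·Xᵗ·Q for all X ∈ M_3(F). -/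
open Matrix

/-- The set of matrices that are products of three involutions. -/
def ProdInv3 (F : Type*) [Field F] (n : ℕ) : Set (Matrix (Fin n) (Fin n) F) :=
  {A | ∃ J₁ J₂ J₃ : Matrix (Fin n) (Fin n) F,
    J₁ * J₁ = 1 ∧ J₂ * J₂ = 1 ∧ J₃ * J₃ = 1 ∧ A = J₁ * J₂ * J₃}

/-- The set of matrices that are products of four involutions. -/
def ProdInv4 (F : Type*) [Field F] (n : ℕ) : Set (Matrix (Fin n) (Fin n) F) :=
  {A | ∃ J₁ J₂ J₃ J₄ : Matrix (Fin n) (Fin n) F,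
    J₁ * J₁ = 1 ∧ J₂ * J₂ = 1 ∧ J₃ * J₃ = 1 ∧ J₄ * J₄ = 1 ∧ A = J₁ * J₂ * J₃ * J₄}


namespace Stmt19

/-- Shorthand for 3 by 3 matrices. -/
abbrev M3 (F : Type*) := Matrix (Fin 3) (Fin 3) F

section inv
variable {F : Type*} [Field F]

lemma inv_of_nil (h2 : (2 : F) = 0) (N : M3 F) (hN : N * N = 0) : (1 + N) * (1 + N) = 1 := by
  have : (1 + N) * (1 + N) = 1 + (2 : F) • N + N * N := by
    rw [two_smul]; noncomm_ring
  rw [this, h2, hN]; simp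

/-- Products of two involutions. -/
def P2 (A : M3 F) : Prop := ∃ J₁ J₂ : M3 F, J₁ * J₁ = 1 ∧ J₂ * J₂ = 1 ∧ A = J₁ * J₂

lemma P2_of (h2 : (2 : F) = 0) (B N N' : M3 F) (hN : N * N = 0) (hN' : N' * N' = 0)
    (h : B = (1 + N) * (1 + N')) : P2 B :=
  ⟨_, _, inv_of_nil h2 N hN, inv_of_nil h2 N' hN', h⟩

lemma key (h2 : (2 : F) = 0) (a b c d e f : F) (hd : a * f - b * e = 1) :
    P2 !![1, c, d; 0, a, b; 0, e, f] := by
  by_cases he : e = 0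
  · by_cases hb : b = 0
    · subst he hb
      by_cases haf : a = f
      · subst haf
        have h1 : (a - 1) * (a - 1) = 0 := by linear_combination hd - (a - 1) * h2
        have h1 : a = 1 := by
          have := mul_self_eq_zero.1 h1
          linear_combination this
        subst h1
        apply P2_of h2 _ 0 !![0, c, d; 0, 0, 0; 0, 0, 0]
        · simp
        · ext i j; fin_cases i <;> fin_cases j <;> simp [Matrix.mul_apply, Fin.sum_univ_three]
        · ext i j; fin_cases i <;> fin_cases j <;> simp
      · have haf' : a - f ≠ 0 := sub_ne_zero.2 haf
        obtain ⟨p, hp⟩ : ∃ p, p * (a - f) = 1 - f := ⟨(1 - f) / (a - f), by field_simp⟩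
        obtain ⟨q, hq⟩ : ∃ q, q * (a - f) = a - 1 := ⟨(a - 1) / (a - f), by field_simp⟩
        have hpq : p + q = 1 := by
          apply mul_right_cancel₀ haf'; linear_combination hp + hq
        have hpq2 : p * a + q * f = 1 := by
          apply mul_right_cancel₀ haf'; linear_combination a * hp + f * hq
        have hq' : q = 1 - p := by linear_combination hpq
        subst hq'
        obtain ⟨x, hx⟩ : ∃ x, x = c - (c + d) * (p * a) := ⟨_, rfl⟩
        obtain ⟨y, hy⟩ : ∃ y, y = a - 1 + (1 - a) * (p * a) := ⟨_, rfl⟩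
        have haf1 : a * f = 1 := by linear_combination hd
        have hp2 : p + p * f = f := by
          apply mul_right_cancel₀ haf'
          linear_combination (1 + f) * hp - haf1
        apply P2_of h2 _ !![0, -(c+d)*p, -(c+d)*(1-p); 0, (1-a)*p, (1-a)*(1-p); 0, (1-f)*p, (1-f)*(1-p)]
          !![0, x, -x; 0, y, -y; 0, y, -y]
        · ext i j; fin_cases i <;> fin_cases j <;>
            simp [Matrix.mul_apply, Fin.sum_univ_three] <;> grind
        · ext i j; fin_cases i <;> fin_cases j <;>
            simp [Matrix.mul_apply, Fin.sum_univ_three] <;> grind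
        · ext i j; fin_cases i <;> fin_cases j <;>
            simp [Matrix.mul_apply, Fin.sum_univ_three] <;> grind
    · obtain ⟨p, hp⟩ : ∃ p, p * b = 1 - f := ⟨(1 - f) / b, by field_simp⟩
      apply P2_of h2 _ !![0, -d*p, -d; 0, -b*p, -b; 0, (1-f)*p, 1-f]
        !![0, c - d*(p*a+e), 0; 0, 0, 0; 0, e + (1-f)*(p*a+e), 0]
      all_goals
        ext i j; fin_cases i <;> fin_cases j <;>
            simp [Matrix.mul_apply, Fin.sum_univ_three] <;> grind
  · obtain ⟨p, hp⟩ : ∃ p, p * e = 1 - a := ⟨(1 - a) / e, by field_simp⟩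
    apply P2_of h2 _ !![0, -c, -c*p; 0, 1-a, (1-a)*p; 0, -e, -e*p]
      !![0, 0, d - c*(b+f*p); 0, 0, b + (1-a)*(b+f*p); 0, 0, 0]
    all_goals
      ext i j; fin_cases i <;> fin_cases j <;>
            simp [Matrix.mul_apply, Fin.sum_univ_three] <;> grind


lemma exists_basis (A : M3 F) (hA : ∀ l : F, A ≠ l • (1 : M3 F)) :
    ∃ P : M3 F, P.det ≠ 0 ∧ ∀ i, P i 1 = ∑ k, A i k * P k 0 := by
  by_contra hcon
  push Not at hcon
  have h' : ∀ v u : Fin 3 → F, (!![v 0, A 0 0 * v 0 + A 0 1 * v 1 + A 0 2 * v 2, u 0;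
      v 1, A 1 0 * v 0 + A 1 1 * v 1 + A 1 2 * v 2, u 1;
      v 2, A 2 0 * v 0 + A 2 1 * v 1 + A 2 2 * v 2, u 2] : M3 F).det = 0 := by
    intro v u
    by_contra hne
    obtain ⟨i, hi⟩ := hcon _ hne
    apply hi
    fin_cases i <;> simp [Fin.sum_univ_three]
  simp only [Matrix.det_fin_three] at h'
  apply hA (A 0 0)
  have a1 := h' ![1,0,0] ![0,1,0]
  have a2 := h' ![1,0,0] ![0,0,1]
  have a3 := h' ![0,1,0] ![1,0,0]
  have a4 := h' ![0,1,0] ![0,0,1]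
  have a5 := h' ![0,0,1] ![1,0,0]
  have a6 := h' ![0,0,1] ![0,1,0]
  have a7 := h' ![1,1,0] ![0,0,1]
  have a8 := h' ![1,0,1] ![0,1,0]
  simp at a1 a2 a3 a4 a5 a6 a7 a8
  ext i j
  fin_cases i <;> fin_cases j <;> simp <;> grind

lemma conj_inv (P J : M3 F) (hP : IsUnit P.det) (hJ : J * J = 1) :
    (P * J * P⁻¹) * (P * J * P⁻¹) = 1 := by
  have h1 : P⁻¹ * P = 1 := Matrix.nonsing_inv_mul P hP
  have h3 : P * P⁻¹ = 1 := Matrix.mul_nonsing_inv P hP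
  calc _ = P * J * (P⁻¹ * P) * J * P⁻¹ := by noncomm_ring
    _ = P * (J * J) * P⁻¹ := by rw [h1]; noncomm_ring
    _ = 1 := by rw [hJ]; simpa using h3

lemma nonscalar_mem (h2 : (2 : F) = 0) (A : M3 F) (hA : ∀ l : F, A ≠ l • (1 : M3 F))
    (hdet : A.det = 1) : A ∈ ProdInv3 F 3 := by
  obtain ⟨P, hP, hcol⟩ := exists_basis A hA
  have hu : IsUnit P.det := isUnit_iff_ne_zero.2 hP
  have h1 : P⁻¹ * P = 1 := Matrix.nonsing_inv_mul P hu
  have h3 : P * P⁻¹ = 1 := Matrix.mul_nonsing_inv P hu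
  obtain ⟨B, hB⟩ : ∃ B, B = P⁻¹ * A * P := ⟨_, rfl⟩
  have hBA : A = P * B * P⁻¹ := by
    rw [hB]
    calc A = 1 * A * 1 := by simp
      _ = (P * P⁻¹) * A * (P * P⁻¹) := by rw [h3]
      _ = _ := by noncomm_ring
  have hBdet : B.det = 1 := by
    rw [hB, Matrix.det_mul, Matrix.det_mul, hdet, mul_one, ← Matrix.det_mul, h1, Matrix.det_one]
  have hBcol : ∀ i, B i 0 = (1 : M3 F) i 1 := by
    intro i
    rw [hB, ← h1, Matrix.mul_assoc, Matrix.mul_apply, Matrix.mul_apply]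
    refine Finset.sum_congr rfl fun k _ => ?_
    rw [hcol, Matrix.mul_apply]
  have b0 := hBcol 0
  have b1 := hBcol 1
  have b2 := hBcol 2
  simp at b0 b1 b2
  rw [Matrix.det_fin_three, b0, b1, b2] at hBdet
  obtain ⟨J₁, J₂, hJ₁, hJ₂, hJ⟩ := key h2 (B 0 1) (B 0 2) (B 1 1) (B 1 2) (B 2 1) (B 2 2)
    (by linear_combination -hBdet - h2)
  have hsw : (!![0,1,0;1,0,0;0,0,1] : M3 F) * !![0,1,0;1,0,0;0,0,1] = 1 := by
    ext i j; fin_cases i <;> fin_cases j <;> simp [Matrix.mul_apply, Fin.sum_univ_three]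
  have hBs : B = !![0,1,0;1,0,0;0,0,1] * (J₁ * J₂) := by
    rw [← hJ]
    ext i j; fin_cases i <;> fin_cases j <;> simp [Matrix.mul_apply, Fin.sum_univ_three, b0, b1, b2]
  refine ⟨_, _, _, conj_inv P _ hu hsw, conj_inv P _ hu hJ₁, conj_inv P _ hu hJ₂, ?_⟩
  rw [hBA, hBs]
  generalize (!![0,1,0;1,0,0;0,0,1] : M3 F) = s
  calc P * (s * (J₁ * J₂)) * P⁻¹ = P * s * 1 * J₁ * 1 * J₂ * P⁻¹ := by noncomm_ring
    _ = P * s * (P⁻¹ * P) * J₁ * (P⁻¹ * P) * J₂ * P⁻¹ := by rw [h1]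
    _ = _ := by noncomm_ring

lemma det_of_inv (h2 : (2 : F) = 0) (J : M3 F) (hJ : J * J = 1) : J.det = 1 := by
  have h := congrArg Matrix.det hJ
  rw [Matrix.det_mul, Matrix.det_one] at h
  have h1 : (J.det - 1) * (J.det - 1) = 0 := by linear_combination h - (J.det - 1) * h2
  linear_combination mul_self_eq_zero.1 h1

lemma mem4_iff (h2 : (2 : F) = 0) (A : M3 F) : A ∈ ProdInv4 F 3 ↔ A.det = 1 := by
  constructor
  · rintro ⟨J₁, J₂, J₃, J₄, h₁, h₂, h₃, h₄, rfl⟩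
    simp [Matrix.det_mul, det_of_inv h2, *]
  · intro h
    by_cases hA : ∀ l : F, A ≠ l • (1 : M3 F)
    · obtain ⟨J₁, J₂, J₃, h₁, h₂, h₃, rfl⟩ := nonscalar_mem h2 A hA h
      exact ⟨J₁, J₂, J₃, 1, h₁, h₂, h₃, by simp, by simp⟩
    · push Not at hA
      obtain ⟨l, hl⟩ := hA
      have hsw : (!![0,1,0;1,0,0;0,0,1] : M3 F) * !![0,1,0;1,0,0;0,0,1] = 1 := by
        ext i j; fin_cases i <;> fin_cases j <;> simp [Matrix.mul_apply, Fin.sum_univ_three]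
      have hl0 : l ≠ 0 := by
        rintro rfl
        simp [hl] at h
      obtain ⟨J₁, J₂, J₃, h₁, h₂, h₃, hJ⟩ := nonscalar_mem h2 (A * !![0,1,0;1,0,0;0,0,1])
        (by
          intro m hm
          have := congrFun (congrFun hm 0) 1
          simp [hl, Matrix.mul_apply, Fin.sum_univ_three] at this
          exact hl0 this) (by
          rw [Matrix.det_mul, h, det_of_inv h2 _ hsw, one_mul])
      refine ⟨J₁, J₂, J₃, _, h₁, h₂, h₃, hsw, ?_⟩
      rw [← hJ, Matrix.mul_assoc, hsw, Matrix.mul_one]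

lemma mem3_iff (h2 : (2 : F) = 0) (hF : ∀ x : F, x = 0 ∨ x = 1) (A : M3 F) :
    A ∈ ProdInv3 F 3 ↔ A.det = 1 := by
  constructor
  · rintro ⟨J₁, J₂, J₃, h₁, h₂, h₃, rfl⟩
    simp [Matrix.det_mul, det_of_inv h2, *]
  · intro h
    by_cases hA : ∀ l : F, A ≠ l • (1 : M3 F)
    · exact nonscalar_mem h2 A hA h
    · push Not at hA
      obtain ⟨l, hl⟩ := hA
      rcases hF l with rfl | rfl
      · simp [hl] at h
      · exact ⟨1, 1, 1, by simp, by simp, by simp, by simp [hl]⟩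

end inv
end Stmt19

namespace Stmt19
section pres
variable {F : Type*} [Field F]

lemma exists_diag (X : M3 F) : ∃ (P Q : M3 F) (d : Fin 3 → F), P.det = 1 ∧ Q.det = 1 ∧
    X = P * Matrix.diagonal d * Q := by
  obtain ⟨L, L', D, h⟩ :=
    Matrix.Pivot.exists_list_transvec_mul_diagonal_mul_list_transvec X
  exact ⟨_, _, D, Matrix.TransvectionStruct.det_toMatrix_prod L,
    Matrix.TransvectionStruct.det_toMatrix_prod L', h⟩

lemma cubic_zero (h2 : (2 : F) = 0) (w : F) (hw0 : w ≠ 0) (hw1 : w ≠ 1) (c0 c1 c2 c3 : F)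
    (h : ∀ t : F, c0 + c1 * t + c2 * t ^ 2 + c3 * t ^ 3 = 0) :
    c0 = 0 ∧ c1 = 0 ∧ c2 = 0 ∧ c3 = 0 := by
  have e0 : c0 = 0 := by simpa using h 0
  have e1 := h 1
  have ew := h w
  have ew1 := h (w + 1)
  have hs : w + 1 ≠ 0 := by
    intro hh; apply hw1; linear_combination hh - h2
  have hd : w - 1 ≠ 0 := sub_ne_zero.2 hw1
  have f1 : c1 + c2 + c3 = 0 := by linear_combination e1 - e0
  have fw : c1 + c2 * w + c3 * w ^ 2 = 0 := by
    apply mul_left_cancel₀ hw0; linear_combination ew - e0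
  have fw1 : c1 + c2 * (w + 1) + c3 * (w + 1) ^ 2 = 0 := by
    apply mul_left_cancel₀ hs; linear_combination ew1 - e0
  have g : c2 + c3 = 0 := by linear_combination fw1 - fw - c3 * w * h2
  have g1 : c1 = 0 := by linear_combination f1 - g
  have g2 : c2 + c3 * w = 0 := by
    apply mul_left_cancel₀ hw0; linear_combination fw - g1
  have g3 : c3 = 0 := by
    apply mul_left_cancel₀ hd; linear_combination g2 - g
  exact ⟨e0, g1, by linear_combination g - g3, g3⟩

/-- The partial polarization of the determinant. -/
def qf (A B : M3 F) : F :=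
  B 0 0 * (A 1 1 * A 2 2 - A 1 2 * A 2 1) - B 0 1 * (A 1 0 * A 2 2 - A 1 2 * A 2 0)
  + B 0 2 * (A 1 0 * A 2 1 - A 1 1 * A 2 0) - B 1 0 * (A 0 1 * A 2 2 - A 0 2 * A 2 1)
  + B 1 1 * (A 0 0 * A 2 2 - A 0 2 * A 2 0) - B 1 2 * (A 0 0 * A 2 1 - A 0 1 * A 2 0)
  + B 2 0 * (A 0 1 * A 1 2 - A 0 2 * A 1 1) - B 2 1 * (A 0 0 * A 1 2 - A 0 2 * A 1 0)
  + B 2 2 * (A 0 0 * A 1 1 - A 0 1 * A 1 0)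

lemma det_pencil (A B : M3 F) : ∃ c1 c2 : F, ∀ t : F,
    (A + t • B).det = A.det + c1 * t + c2 * t ^ 2 + B.det * t ^ 3 := by
  refine ⟨qf A B, qf B A, fun t => ?_⟩
  simp only [Matrix.det_fin_three, qf, Matrix.add_apply, Matrix.smul_apply, smul_eq_mul]
  ring

lemma det_three (A B C : M3 F) : ∃ c1 c2 c3 c4 c5 c6 c7 : F, ∀ x y z : F,
    (x • A + y • B + z • C).det = A.det * x ^ 3 + B.det * y ^ 3 + C.det * z ^ 3
      + c1 * x ^ 2 * y + c2 * x * y ^ 2 + c3 * x ^ 2 * z + c4 * x * z ^ 2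
      + c5 * y ^ 2 * z + c6 * y * z ^ 2 + c7 * x * y * z := by
  refine ⟨qf A B, qf B A, qf A C, qf C A, qf B C, qf C B, qf (A + B) C - qf A C - qf B C,
     fun x y z => ?_⟩
  simp only [Matrix.det_fin_three, qf, Matrix.add_apply, Matrix.smul_apply, smul_eq_mul]
  ring

lemma det_pres_big (h2 : (2 : F) = 0) (w : F) (hw0 : w ≠ 0) (hw1 : w ≠ 1)
    (T : M3 F →ₗ[F] M3 F) (hT : ∀ A, A.det = 1 → (T A).det = 1) (X : M3 F) :
    (T X).det = X.det := by
  obtain ⟨P, Q, d, hP, hQ, rfl⟩ := exists_diag X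
  have hT' : ∀ A : M3 F, A.det = 1 → (T (P * A * Q)).det = 1 := by
    intro A hA; apply hT; simp [Matrix.det_mul, hP, hQ, hA]
  obtain ⟨T', hT'def⟩ : ∃ T' : M3 F →ₗ[F] M3 F, ∀ A, T' A = T (P * A * Q) :=
    ⟨T ∘ₗ LinearMap.mulLeftRight F (P, Q), fun A => rfl⟩
  simp only [← hT'def] at hT' ⊢
  have hsing : ∀ x y z : F, x * y * z = 0 → (T' (Matrix.diagonal ![x, y, z])).det = 0 := by
    intro x y z hxyz
    obtain ⟨c1, c2, hc⟩ := det_pencil (T' !![0,1,0;0,0,1;1,0,0]) (T' (Matrix.diagonal ![x, y, z]))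
    have h1 : ∀ t : F, (!![0,1,0;0,0,1;1,0,0] + t • Matrix.diagonal ![x, y, z] : M3 F).det = 1 := by
      intro t
      have : (!![0,1,0;0,0,1;1,0,0] + t • Matrix.diagonal ![x, y, z] : M3 F)
          = !![t * x, 1, 0; 0, t * y, 1; 1, 0, t * z] := by
        ext i j; fin_cases i <;> fin_cases j <;> simp
      rw [this, Matrix.det_fin_three]
      simp only [Matrix.of_apply, Matrix.cons_val', Matrix.cons_val_zero, Matrix.cons_val_one,
        Matrix.cons_val]
      linear_combination t ^ 3 * hxyz
    have h3 := hT' !![0,1,0;0,0,1;1,0,0] (by simp [Matrix.det_fin_three])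
    refine (cubic_zero h2 w hw0 hw1 0 c1 c2 _ fun t => ?_).2.2.2
    have h4 := hT' _ (h1 t)
    rw [map_add, map_smul, hc, h3] at h4
    linear_combination h4
  obtain ⟨c1, c2, c3, c4, c5, c6, c7, hc⟩ := det_three (T' (Matrix.diagonal ![1, 0, 0]))
    (T' (Matrix.diagonal ![0, 1, 0])) (T' (Matrix.diagonal ![0, 0, 1]))
  rw [hsing 1 0 0 (by simp), hsing 0 1 0 (by simp), hsing 0 0 1 (by simp)] at hc
  have hdg : ∀ x y z : F, T' (Matrix.diagonal ![x, y, z]) = x • T' (Matrix.diagonal ![1, 0, 0])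
      + y • T' (Matrix.diagonal ![0, 1, 0]) + z • T' (Matrix.diagonal ![0, 0, 1]) := by
    intro x y z
    rw [← map_smul, ← map_smul, ← map_smul, ← map_add, ← map_add]
    congr 1
    ext i j; fin_cases i <;> fin_cases j <;> simp
  have k1 := cubic_zero h2 w hw0 hw1 0 c1 c2 0 fun t => by
    have := hsing 1 t 0 (by simp)
    rw [hdg, hc] at this; linear_combination this
  have k2 := cubic_zero h2 w hw0 hw1 0 c3 c4 0 fun t => by
    have := hsing 1 0 t (by simp)
    rw [hdg, hc] at this; linear_combination this
  have k3 := cubic_zero h2 w hw0 hw1 0 c5 c6 0 fun t => by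
    have := hsing 0 1 t (by simp)
    rw [hdg, hc] at this; linear_combination this
  obtain ⟨-, rfl, rfl, -⟩ := k1
  obtain ⟨-, rfl, rfl, -⟩ := k2
  obtain ⟨-, rfl, rfl, -⟩ := k3
  have k4 := hT' (Matrix.diagonal ![1, 1, 1]) (by simp [Fin.prod_univ_three])
  rw [hdg, hc] at k4
  have hdd : d = ![d 0, d 1, d 2] := by ext i; fin_cases i <;> simp
  rw [Matrix.det_mul, Matrix.det_mul, hP, hQ, hdd, hdg, hc, Matrix.det_diagonal]
  simp only [Fin.prod_univ_three, Matrix.cons_val_zero, Matrix.cons_val_one, Matrix.cons_val]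
  linear_combination (d 0 * d 1 * d 2) * k4

lemma det_pres_two (hF : ∀ x : F, x = 0 ∨ x = 1)
    (T : M3 F →ₗ[F] M3 F) (hb : Function.Injective T)
    (hT : ∀ A, A.det = 1 → (T A).det = 1) (X : M3 F) :
    (T X).det = X.det := by
  have hfin : Finite F := by
    apply Finite.of_surjective (fun b : Bool => if b then (1 : F) else 0)
    intro x
    rcases hF x with rfl | rfl
    · exact ⟨false, by simp⟩
    · exact ⟨true, by simp⟩
  let f : {A : M3 F // A.det = 1} → {A : M3 F // A.det = 1} := fun A => ⟨T A.1, hT _ A.2⟩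
  have hf : Function.Injective f := by
    intro A B h
    exact Subtype.ext (hb (congrArg Subtype.val h))
  have hfs := Finite.injective_iff_surjective.1 hf
  have hrev : (T X).det = 1 → X.det = 1 := by
    intro h
    obtain ⟨A, hA⟩ := hfs ⟨T X, h⟩
    have : A.1 = X := hb (congrArg Subtype.val hA)
    rw [← this]; exact A.2
  rcases hF X.det with h | h
  · rcases hF (T X).det with h' | h'
    · rw [h, h']
    · rw [hrev h', h']
  · rw [h, hT X h]

end pres
end Stmt19

namespace Stmt19
section struct
variable {F : Type*} [Field F]

/-- The full polarization of the determinant. -/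
def DD (X Y Z : M3 F) : F :=
  (X + Y + Z).det - (X + Y).det - (X + Z).det - (Y + Z).det + X.det + Y.det + Z.det

lemma DD_diag (d : Fin 3 → F) (Y Z : M3 F) : DD (Matrix.diagonal d) Y Z =
    Z 0 0 * (d 1 * Y 2 2 + d 2 * Y 1 1) + Z 1 1 * (d 0 * Y 2 2 + d 2 * Y 0 0)
    + Z 2 2 * (d 0 * Y 1 1 + d 1 * Y 0 0)
    - d 2 * (Y 0 1 * Z 1 0 + Y 1 0 * Z 0 1) - d 1 * (Y 0 2 * Z 2 0 + Y 2 0 * Z 0 2)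
    - d 0 * (Y 1 2 * Z 2 1 + Y 2 1 * Z 1 2) := by
  have e1 : ∀ i j : Fin 3, i ≠ j → Matrix.diagonal d i j = 0 := fun i j h =>
    Matrix.diagonal_apply_ne d h
  simp only [DD, Matrix.det_fin_three, Matrix.add_apply, Matrix.diagonal_apply_eq,
    e1 0 1 (by decide), e1 0 2 (by decide), e1 1 0 (by decide), e1 1 2 (by decide),
    e1 2 0 (by decide), e1 2 1 (by decide)]
  ring

lemma DD_rad (d : Fin 3 → F) (Y : M3 F) (h : ∀ Z, DD (Matrix.diagonal d) Y Z = 0) :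
    d 1 * Y 2 2 + d 2 * Y 1 1 = 0 ∧ d 0 * Y 2 2 + d 2 * Y 0 0 = 0 ∧ d 0 * Y 1 1 + d 1 * Y 0 0 = 0
    ∧ d 2 * Y 0 1 = 0 ∧ d 2 * Y 1 0 = 0 ∧ d 1 * Y 0 2 = 0 ∧ d 1 * Y 2 0 = 0
    ∧ d 0 * Y 1 2 = 0 ∧ d 0 * Y 2 1 = 0 := by
  simp only [DD_diag] at h
  have h1 := h !![1,0,0;0,0,0;0,0,0]
  have h2 := h !![0,0,0;0,1,0;0,0,0]
  have h3 := h !![0,0,0;0,0,0;0,0,1]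
  have h4 := h !![0,0,0;1,0,0;0,0,0]
  have h5 := h !![0,1,0;0,0,0;0,0,0]
  have h6 := h !![0,0,0;0,0,0;1,0,0]
  have h7 := h !![0,0,1;0,0,0;0,0,0]
  have h8 := h !![0,0,0;0,0,0;0,1,0]
  have h9 := h !![0,0,0;0,0,1;0,0,0]
  simp only [Matrix.of_apply, Matrix.cons_val', Matrix.cons_val_zero, Matrix.cons_val_one,
    Matrix.cons_val] at h1 h2 h3 h4 h5 h6 h7 h8 h9
  refine ⟨by linear_combination h1, by linear_combination h2, by linear_combination h3,
    by linear_combination -h4, by linear_combination -h5, by linear_combination -h6,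
    by linear_combination -h7, by linear_combination -h8, by linear_combination -h9⟩

lemma DD_sand (P Q X Y Z : M3 F) (hP : P.det = 1) (hQ : Q.det = 1) :
    DD (P * X * Q) (P * Y * Q) (P * Z * Q) = DD X Y Z := by
  have e : ∀ A : M3 F, (P * A * Q).det = A.det := fun A => by simp [Matrix.det_mul, hP, hQ]
  simp only [DD, ← Matrix.mul_add, ← Matrix.add_mul, e]

/-- Extraction of four coordinates. -/
def coords (i j : Fin 3) : M3 F →ₗ[F] (Fin 4 → F) where
  toFun Y := ![Y i i, Y i j, Y j i, Y j j]
  map_add' X Y := by ext k; fin_cases k <;> simp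
  map_smul' c X := by ext k; fin_cases k <;> simp

lemma no_inj (i j : Fin 3) (ι : (Fin 5 → F) →ₗ[F] M3 F)
    (h : ∀ a, ι a i i = 0 → ι a i j = 0 → ι a j i = 0 → ι a j j = 0 → a = 0) : False := by
  have hinj : Function.Injective (coords i j ∘ₗ ι) := by
    rw [← LinearMap.ker_eq_bot, LinearMap.ker_eq_bot']
    intro a ha
    have h0 := congrFun ha 0
    have h1 := congrFun ha 1
    have h2 := congrFun ha 2
    have h3 := congrFun ha 3
    simp [coords] at h0 h1 h2 h3
    exact h a h0 h1 h2 h3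
  have := LinearMap.finrank_le_finrank_of_injective hinj
  simp at this

lemma rank_one (A : M3 F) (ι : (Fin 5 → F) →ₗ[F] M3 F) (hι : Function.Injective ι)
    (h : ∀ a Z, DD A (ι a) Z = 0) : ∃ u v : Fin 3 → F, A = Matrix.vecMulVec u v := by
  obtain ⟨P, Q, d, hP, hQ, rfl⟩ := exists_diag A
  have uP : IsUnit P.det := by simp [hP]
  have uQ : IsUnit Q.det := by simp [hQ]
  obtain ⟨κ, hκ⟩ : ∃ κ : (Fin 5 → F) →ₗ[F] M3 F, ∀ a, κ a = P⁻¹ * ι a * Q⁻¹ :=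
    ⟨LinearMap.mulLeftRight F (P⁻¹, Q⁻¹) ∘ₗ ι, fun a => rfl⟩
  have hκι : ∀ a, ι a = P * κ a * Q := by
    intro a
    rw [hκ]
    calc ι a = 1 * ι a * 1 := by simp
      _ = (P * P⁻¹) * ι a * (Q⁻¹ * Q) := by
        rw [Matrix.mul_nonsing_inv P uP, Matrix.nonsing_inv_mul Q uQ]
      _ = _ := by noncomm_ring
  have hrad : ∀ a Z, DD (Matrix.diagonal d) (κ a) Z = 0 := by
    intro a Z
    rw [← DD_sand P Q _ _ _ hP hQ, ← hκι]
    exact h a _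
  have hz : ∀ a, κ a = 0 → a = 0 := by
    intro a ha
    apply hι
    rw [hκι, ha]; simp
  have hr := fun a => DD_rad d (κ a) (hrad a)
  have c01 : d 0 = 0 ∨ d 1 = 0 := by
    by_contra hcon
    push Not at hcon
    obtain ⟨n0, n1⟩ := hcon
    apply no_inj 0 1 κ
    intro a h1 h2 h3 h4
    have := hr a
    apply hz
    ext i j; fin_cases i <;> fin_cases j <;> simp <;> grind
  have c02 : d 0 = 0 ∨ d 2 = 0 := by
    by_contra hcon
    push Not at hcon
    obtain ⟨n0, n1⟩ := hcon
    apply no_inj 0 2 κ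
    intro a h1 h2 h3 h4
    have := hr a
    apply hz
    ext i j; fin_cases i <;> fin_cases j <;> simp <;> grind
  have c12 : d 1 = 0 ∨ d 2 = 0 := by
    by_contra hcon
    push Not at hcon
    obtain ⟨n0, n1⟩ := hcon
    apply no_inj 1 2 κ
    intro a h1 h2 h3 h4
    have := hr a
    apply hz
    ext i j; fin_cases i <;> fin_cases j <;> simp <;> grind
  have fin : ∀ i, (∀ j, j ≠ i → d j = 0) → 
      ∃ u v : Fin 3 → F, P * Matrix.diagonal d * Q = Matrix.vecMulVec u v := by
    intro i hi
    refine ⟨fun r => P r i * d i, fun s => Q i s, ?_⟩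
    ext r s
    rw [Matrix.mul_apply, Matrix.vecMulVec_apply, Finset.sum_eq_single i]
    · simp [Matrix.mul_diagonal]
    · intro j _ hj
      simp [Matrix.mul_diagonal, hi j hj]
    · simp
  have fin' : ∀ i : Fin 3, (d 0 = 0 ∨ 0 = i) → (d 1 = 0 ∨ 1 = i) → (d 2 = 0 ∨ 2 = i) →
      ∃ u v : Fin 3 → F, P * Matrix.diagonal d * Q = Matrix.vecMulVec u v := by
    intro i k0 k1 k2
    apply fin i
    intro j hj
    fin_cases j
    · exact k0.resolve_right hj
    · exact k1.resolve_right hj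
    · exact k2.resolve_right hj
  by_cases n0 : d 0 = 0
  · by_cases n1 : d 1 = 0
    · exact fin' 2 (Or.inl n0) (Or.inl n1) (Or.inr rfl)
    · exact fin' 1 (Or.inl n0) (Or.inr rfl) (Or.inl (c12.resolve_left n1))
  · exact fin' 0 (Or.inr rfl) (Or.inl (c01.resolve_left n0)) (Or.inl (c02.resolve_left n0))

/-- The radical for the first diagonal unit. -/
def io0 : (Fin 5 → F) →ₗ[F] M3 F where
  toFun a := !![a 0, a 1, a 2; a 3, 0, 0; a 4, 0, 0]
  map_add' X Y := by ext i j; fin_cases i <;> fin_cases j <;> simp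
  map_smul' c X := by ext i j; fin_cases i <;> fin_cases j <;> simp

/-- The radical for the second diagonal unit. -/
def io1 : (Fin 5 → F) →ₗ[F] M3 F where
  toFun a := !![0, a 1, 0; a 0, a 2, a 3; 0, a 4, 0]
  map_add' X Y := by ext i j; fin_cases i <;> fin_cases j <;> simp
  map_smul' c X := by ext i j; fin_cases i <;> fin_cases j <;> simp

/-- The radical for the third diagonal unit. -/
def io2 : (Fin 5 → F) →ₗ[F] M3 F where
  toFun a := !![0, 0, a 0; 0, 0, a 1; a 2, a 3, a 4]
  map_add' X Y := by ext i j; fin_cases i <;> fin_cases j <;> simp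
  map_smul' c X := by ext i j; fin_cases i <;> fin_cases j <;> simp

lemma io0_inj : Function.Injective (io0 (F := F)) := by
  rw [← LinearMap.ker_eq_bot, LinearMap.ker_eq_bot']
  intro a ha
  have h := fun i j => congrFun (congrFun ha i) j
  have h0 := h 0 0
  have h1 := h 0 1
  have h2 := h 0 2
  have h3 := h 1 0
  have h4 := h 2 0
  simp [io0] at h0 h1 h2 h3 h4
  ext k; fin_cases k <;> simp [*]

lemma io1_inj : Function.Injective (io1 (F := F)) := by
  rw [← LinearMap.ker_eq_bot, LinearMap.ker_eq_bot']
  intro a ha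
  have h := fun i j => congrFun (congrFun ha i) j
  have h0 := h 1 0
  have h1 := h 0 1
  have h2 := h 1 1
  have h3 := h 1 2
  have h4 := h 2 1
  simp [io1] at h0 h1 h2 h3 h4
  ext k; fin_cases k <;> simp [*]

lemma io2_inj : Function.Injective (io2 (F := F)) := by
  rw [← LinearMap.ker_eq_bot, LinearMap.ker_eq_bot']
  intro a ha
  have h := fun i j => congrFun (congrFun ha i) j
  have h0 := h 0 2
  have h1 := h 1 2
  have h2 := h 2 0
  have h3 := h 2 1
  have h4 := h 2 2
  simp [io2] at h0 h1 h2 h3 h4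
  ext k; fin_cases k <;> simp [*]

lemma DD_pres (T : M3 F →ₗ[F] M3 F) (hT : ∀ X, (T X).det = X.det) (X Y Z : M3 F) :
    DD (T X) (T Y) (T Z) = DD X Y Z := by
  simp only [DD, ← map_add, hT]

lemma unit_image (T : M3 F →ₗ[F] M3 F) (hb : Function.Bijective T)
    (hT : ∀ X, (T X).det = X.det) (d : Fin 3 → F) (ι : (Fin 5 → F) →ₗ[F] M3 F)
    (hι : Function.Injective ι) (h : ∀ a Z, DD (Matrix.diagonal d) (ι a) Z = 0) :
    ∃ u v : Fin 3 → F, T (Matrix.diagonal d) = Matrix.vecMulVec u v := by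
  apply rank_one _ (T ∘ₗ ι) (hb.1.comp hι)
  intro a Z
  obtain ⟨Z, rfl⟩ := hb.2 Z
  rw [LinearMap.comp_apply, DD_pres T hT, h]

/-- The conclusion for a map. -/
def Good (T : M3 F →ₗ[F] M3 F) : Prop :=
  ∃ P Q : M3 F, (P * Q).det = 1 ∧
        ((∀ X, T X = P * X * Q) ∨ (∀ X, T X = P * Xᵀ * Q))

lemma rad_pres (T : M3 F →ₗ[F] M3 F) (hb : Function.Bijective T)
    (hT : ∀ X, (T X).det = X.det) (d : Fin 3 → F)
    (hd : T (Matrix.diagonal d) = Matrix.diagonal d) (Y : M3 F)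
    (hY : ∀ Z, DD (Matrix.diagonal d) Y Z = 0) : ∀ Z, DD (Matrix.diagonal d) (T Y) Z = 0 := by
  intro Z
  obtain ⟨Z, rfl⟩ := hb.2 Z
  have := DD_pres T hT (Matrix.diagonal d) Y Z
  rw [hd, hY] at this
  exact this

lemma alg {a b c d : F} (w : a ≠ 0) (m : a * b = 0) (n : c * d = 0) (p : a * d + b * c = 1) :
    b = 0 ∧ c = 0 ∧ a * d = 1 := by
  have hb : b = 0 := by simpa [w] using m
  subst hb
  have had : a * d = 1 := by linear_combination p
  have hd : d ≠ 0 := by rintro rfl; simp at had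
  have hc : c = 0 := by simpa [hd] using n
  exact ⟨rfl, hc, had⟩

lemma diag_form (a1 a2 a3 d1 d2 d3 : F) (p1 : a1 * d1 = 1) (p2 : a2 * d2 = 1) (p3 : a3 * d3 = 1)
    (q : a1 * a2 * a3 = 1) (X : M3 F) :
    !![X 0 0, a1 * X 0 1, d3 * X 0 2; d1 * X 1 0, X 1 1, a2 * X 1 2; a3 * X 2 0, d2 * X 2 1, X 2 2]
      = Matrix.diagonal ![1, d1, a3] * X * Matrix.diagonal ![1, a1, d3] := by
  have ha2 : a2 = d1 * d3 := by
    linear_combination d1 * d3 * q - (a2 * a3 * d3) * p1 - a2 * p3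
  have hd2 : d2 = a1 * a3 := by
    linear_combination (a1 * a3) * p2 - d2 * q
  subst ha2 hd2
  ext i j; fin_cases i <;> fin_cases j <;>
    simp [Matrix.mul_diagonal, Matrix.diagonal_mul]
  · ring
  · ring
  · linear_combination -X 1 1 * p1
  · ring
  · ring
  · linear_combination -X 2 2 * p3

lemma diag_det (a1 a3 d1 d3 : F) (p1 : a1 * d1 = 1) (p3 : a3 * d3 = 1) :
    (Matrix.diagonal ![1, d1, a3] * Matrix.diagonal ![1, a1, d3] : M3 F).det = 1 := by
  rw [Matrix.det_mul, Matrix.det_diagonal, Matrix.det_diagonal]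
  simp only [Fin.prod_univ_three, Matrix.cons_val_zero, Matrix.cons_val_one, Matrix.cons_val]
  linear_combination a3 * d3 * p1 + p3

lemma normalized (T : M3 F →ₗ[F] M3 F) (hb : Function.Bijective T)
    (hT : ∀ X, (T X).det = X.det)
    (t0 : T (Matrix.diagonal ![1, 0, 0]) = Matrix.diagonal ![1, 0, 0])
    (t1 : T (Matrix.diagonal ![0, 1, 0]) = Matrix.diagonal ![0, 1, 0])
    (t2 : T (Matrix.diagonal ![0, 0, 1]) = Matrix.diagonal ![0, 0, 1]) : Good T := by
  have r0 := fun Y hY => DD_rad _ _ (rad_pres T hb hT _ t0 Y hY)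
  have r1 := fun Y hY => DD_rad _ _ (rad_pres T hb hT _ t1 Y hY)
  have r2 := fun Y hY => DD_rad _ _ (rad_pres T hb hT _ t2 Y hY)
  simp only [DD_diag] at r0 r1 r2
  simp only [Matrix.cons_val_zero, Matrix.cons_val_one, Matrix.cons_val, zero_mul, one_mul,
    zero_add, add_zero, sub_zero, mul_zero, true_and, and_true] at r0 r1 r2
  have s01 : ∀ x y : F, ∃ a b : F, T !![0,x,0;y,0,0;0,0,0] = !![0,a,0;b,0,0;0,0,0] := by
    intro x y
    have k0 := r0 !![0,x,0;y,0,0;0,0,0] (by intro Z; simp)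
    have k1 := r1 !![0,x,0;y,0,0;0,0,0] (by intro Z; simp)
    refine ⟨T !![0,x,0;y,0,0;0,0,0] 0 1, T !![0,x,0;y,0,0;0,0,0] 1 0, ?_⟩
    ext i j; fin_cases i <;> fin_cases j <;> simp [k0, k1]
  have s12 : ∀ x y : F, ∃ a b : F, T !![0,0,0;0,0,x;0,y,0] = !![0,0,0;0,0,a;0,b,0] := by
    intro x y
    have k0 := r1 !![0,0,0;0,0,x;0,y,0] (by intro Z; simp)
    have k1 := r2 !![0,0,0;0,0,x;0,y,0] (by intro Z; simp)
    refine ⟨T !![0,0,0;0,0,x;0,y,0] 1 2, T !![0,0,0;0,0,x;0,y,0] 2 1, ?_⟩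
    ext i j; fin_cases i <;> fin_cases j <;> simp [k0, k1]
  have s20 : ∀ x y : F, ∃ a b : F, T !![0,0,y;0,0,0;x,0,0] = !![0,0,b;0,0,0;a,0,0] := by
    intro x y
    have k0 := r0 !![0,0,y;0,0,0;x,0,0] (by intro Z; simp)
    have k1 := r2 !![0,0,y;0,0,0;x,0,0] (by intro Z; simp)
    refine ⟨T !![0,0,y;0,0,0;x,0,0] 2 0, T !![0,0,y;0,0,0;x,0,0] 0 2, ?_⟩
    ext i j; fin_cases i <;> fin_cases j <;> simp [k0, k1]
  obtain ⟨a1, b1, e01⟩ := s01 1 0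
  obtain ⟨c1, d1, e10⟩ := s01 0 1
  obtain ⟨a2, b2, e12⟩ := s12 1 0
  obtain ⟨c2, d2, e21⟩ := s12 0 1
  obtain ⟨a3, b3, e20⟩ := s20 1 0
  obtain ⟨c3, d3, e02⟩ := s20 0 1
  have hTX : ∀ X : M3 F, T X = !![X 0 0, a1 * X 0 1 + c1 * X 1 0, b3 * X 2 0 + d3 * X 0 2;
      b1 * X 0 1 + d1 * X 1 0, X 1 1, a2 * X 1 2 + c2 * X 2 1;
      a3 * X 2 0 + c3 * X 0 2, b2 * X 1 2 + d2 * X 2 1, X 2 2] := by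
    intro X
    have hX : X = X 0 0 • Matrix.diagonal ![1, 0, 0] + X 1 1 • Matrix.diagonal ![0, 1, 0]
      + X 2 2 • Matrix.diagonal ![0, 0, 1] + X 0 1 • !![0,1,0;0,0,0;0,0,0]
      + X 1 0 • !![0,0,0;1,0,0;0,0,0] + X 1 2 • !![0,0,0;0,0,1;0,0,0]
      + X 2 1 • !![0,0,0;0,0,0;0,1,0] + X 2 0 • !![0,0,0;0,0,0;1,0,0]
      + X 0 2 • !![0,0,1;0,0,0;0,0,0] := by
      ext i j; fin_cases i <;> fin_cases j <;> simp
    have h := congrArg T hX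
    simp only [map_add, map_smul, t0, t1, t2, e01, e10, e12, e21, e20, e02] at h
    rw [h]
    ext i j; fin_cases i <;> fin_cases j <;> simp <;> ring
  have hdet : ∀ X : M3 F, (T X).det = X.det := hT
  simp only [hTX, Matrix.det_fin_three] at hdet
  have D := fun x0 x1 x2 x3 x4 x5 x6 x7 x8 : F => hdet !![x0, x1, x2; x3, x4, x5; x6, x7, x8]
  simp only [Matrix.of_apply, Matrix.cons_val', Matrix.cons_val_zero, Matrix.cons_val_one,
    Matrix.cons_val] at D
  have m1 : a1 * b1 = 0 := by linear_combination -D 0 1 0 0 0 0 0 0 1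
  have m2 : a2 * b2 = 0 := by linear_combination -D 1 0 0 0 0 1 0 0 0
  have m3 : a3 * b3 = 0 := by linear_combination -D 0 0 0 0 1 0 1 0 0
  have n1 : c1 * d1 = 0 := by linear_combination -D 0 0 0 1 0 0 0 0 1
  have n2 : c2 * d2 = 0 := by linear_combination -D 1 0 0 0 0 0 0 1 0
  have n3 : c3 * d3 = 0 := by linear_combination -D 0 0 1 0 1 0 0 0 0
  have p1 : a1 * d1 + b1 * c1 = 1 := by linear_combination -D 0 1 0 1 0 0 0 0 1 - m1 - n1
  have p2 : a2 * d2 + b2 * c2 = 1 := by linear_combination -D 1 0 0 0 0 1 0 1 0 - m2 - n2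
  have p3 : a3 * d3 + b3 * c3 = 1 := by linear_combination -D 0 0 1 0 1 0 1 0 0 - m3 - n3
  have q : a1 * a2 * a3 + b1 * b2 * b3 = 1 := by linear_combination D 0 1 0 0 0 1 1 0 0
  clear D hdet r0 r1 r2 s01 s12 s20
  by_cases hz : a1 * a2 * a3 = 0
  · have hb : b1 * b2 * b3 = 1 := by linear_combination q - hz
    have w1 : b1 ≠ 0 := by rintro rfl; simp at hb
    have w2 : b2 ≠ 0 := by rintro rfl; simp at hb
    have w3 : b3 ≠ 0 := by rintro rfl; simp at hb
    obtain ⟨x1, y1, f1⟩ := alg w1 (by rw [mul_comm]; exact m1) (by rw [mul_comm]; exact n1)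
      (by rw [add_comm]; exact p1)
    obtain ⟨x2, y2, f2⟩ := alg w2 (by rw [mul_comm]; exact m2) (by rw [mul_comm]; exact n2)
      (by rw [add_comm]; exact p2)
    obtain ⟨x3, y3, f3⟩ := alg w3 (by rw [mul_comm]; exact m3) (by rw [mul_comm]; exact n3)
      (by rw [add_comm]; exact p3)
    refine ⟨Matrix.diagonal ![1, b1, c3], Matrix.diagonal ![1, c1, b3],
      diag_det c1 c3 b1 b3 (by rw [mul_comm]; exact f1) (by rw [mul_comm]; exact f3), Or.inr ?_⟩
    intro X
    rw [hTX, ← diag_form c1 c2 c3 b1 b2 b3 (by rw [mul_comm]; exact f1)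
      (by rw [mul_comm]; exact f2) (by rw [mul_comm]; exact f3)
      (by linear_combination (-c1 * c2 * c3) * hb + b2 * b3 * c2 * c3 * f1 + b3 * c3 * f2 + f3) Xᵀ,
      x1, x2, x3, y1, y2, y3]
    simp only [Matrix.transpose_apply, zero_mul, zero_add, add_zero]
  · have w1 : a1 ≠ 0 := by rintro rfl; simp at hz
    have w2 : a2 ≠ 0 := by rintro rfl; simp at hz
    have w3 : a3 ≠ 0 := by rintro rfl; simp at hz
    obtain ⟨x1, y1, f1⟩ := alg w1 m1 n1 p1
    obtain ⟨x2, y2, f2⟩ := alg w2 m2 n2 p2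
    obtain ⟨x3, y3, f3⟩ := alg w3 m3 n3 p3
    refine ⟨Matrix.diagonal ![1, d1, a3], Matrix.diagonal ![1, a1, d3],
      diag_det a1 a3 d1 d3 f1 f3, Or.inl ?_⟩
    intro X
    rw [hTX, ← diag_form a1 a2 a3 d1 d2 d3 f1 f2 f3 (by rw [x1] at q; linear_combination q) X,
      x1, x2, x3, y1, y2, y3]
    simp only [zero_mul, zero_add, add_zero]

lemma struct (T : M3 F →ₗ[F] M3 F) (hb : Function.Bijective T)
    (hT : ∀ X, (T X).det = X.det) : Good T := by
  obtain ⟨u0, v0, h0⟩ := unit_image T hb hT ![1, 0, 0] io0 io0_inj (by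
    intro a Z; rw [DD_diag]; simp [io0])
  obtain ⟨u1, v1, h1⟩ := unit_image T hb hT ![0, 1, 0] io1 io1_inj (by
    intro a Z; rw [DD_diag]; simp [io1])
  obtain ⟨u2, v2, h2⟩ := unit_image T hb hT ![0, 0, 1] io2 io2_inj (by
    intro a Z; rw [DD_diag]; simp [io2])
  obtain ⟨U, hU⟩ : ∃ U : M3 F, U = !![u0 0, u1 0, u2 0; u0 1, u1 1, u2 1; u0 2, u1 2, u2 2] :=
    ⟨_, rfl⟩
  obtain ⟨V, hV⟩ : ∃ V : M3 F, V = !![v0 0, v0 1, v0 2; v1 0, v1 1, v1 2; v2 0, v2 1, v2 2] :=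
    ⟨_, rfl⟩
  have g0 : T (Matrix.diagonal ![1, 0, 0]) = U * Matrix.diagonal ![1, 0, 0] * V := by
    rw [h0, hU, hV]
    ext i j; fin_cases i <;> fin_cases j <;>
      simp [Matrix.mul_apply, Fin.sum_univ_three, Matrix.vecMulVec_apply, Matrix.vecMul_diagonal]
  have g1 : T (Matrix.diagonal ![0, 1, 0]) = U * Matrix.diagonal ![0, 1, 0] * V := by
    rw [h1, hU, hV]
    ext i j; fin_cases i <;> fin_cases j <;>
      simp [Matrix.mul_apply, Fin.sum_univ_three, Matrix.vecMulVec_apply, Matrix.vecMul_diagonal]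
  have g2 : T (Matrix.diagonal ![0, 0, 1]) = U * Matrix.diagonal ![0, 0, 1] * V := by
    rw [h2, hU, hV]
    ext i j; fin_cases i <;> fin_cases j <;>
      simp [Matrix.mul_apply, Fin.sum_univ_three, Matrix.vecMulVec_apply, Matrix.vecMul_diagonal]
  have hone : (1 : M3 F) = Matrix.diagonal ![1, 0, 0] + Matrix.diagonal ![0, 1, 0]
      + Matrix.diagonal ![0, 0, 1] := by
    ext i j; fin_cases i <;> fin_cases j <;> simp
  have hT1 : T 1 = U * V := by
    conv_lhs => rw [hone]
    rw [map_add, map_add, g0, g1, g2, ← Matrix.add_mul, ← Matrix.add_mul, ← Matrix.mul_add,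
      ← Matrix.mul_add, ← hone, Matrix.mul_one]
  have hUV : U.det * V.det = 1 := by
    rw [← Matrix.det_mul, ← hT1, hT, Matrix.det_one]
  have uU : IsUnit U.det := IsUnit.of_mul_eq_one _ hUV
  have uV : IsUnit V.det := IsUnit.of_mul_eq_one _ (by rw [mul_comm]; exact hUV)
  have iU : U⁻¹ * U = 1 := Matrix.nonsing_inv_mul U uU
  have iU' : U * U⁻¹ = 1 := Matrix.mul_nonsing_inv U uU
  have iV : V⁻¹ * V = 1 := Matrix.nonsing_inv_mul V uV
  have iV' : V * V⁻¹ = 1 := Matrix.mul_nonsing_inv V uV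
  obtain ⟨S, hS⟩ : ∃ S : M3 F →ₗ[F] M3 F, ∀ X, S X = U⁻¹ * T X * V⁻¹ :=
    ⟨LinearMap.mulLeftRight F (U⁻¹, V⁻¹) ∘ₗ T, fun X => rfl⟩
  have hTS : ∀ X, T X = U * S X * V := by
    intro X
    rw [hS]
    calc T X = 1 * T X * 1 := by simp
      _ = (U * U⁻¹) * T X * (V⁻¹ * V) := by rw [iU', iV]
      _ = _ := by noncomm_ring
  have hcanc : ∀ Y : M3 F, U⁻¹ * (U * Y * V) * V⁻¹ = Y := by
    intro Y
    calc _ = (U⁻¹ * U) * Y * (V * V⁻¹) := by noncomm_ring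
      _ = Y := by rw [iU, iV']; simp
  have hSdet : ∀ X, (S X).det = X.det := by
    intro X
    rw [← hT X, hTS X, Matrix.det_mul, Matrix.det_mul]
    linear_combination -(S X).det * hUV
  have hSb : Function.Bijective S := by
    constructor
    · intro X Y h
      apply hb.1
      rw [hTS, hTS, h]
    · intro Y
      obtain ⟨X, hX⟩ := hb.2 (U * Y * V)
      exact ⟨X, by rw [hS, hX, hcanc]⟩
  obtain ⟨P, Q, hPQ, h⟩ := normalized S hSb hSdet (by rw [hS, g0, hcanc]) (by rw [hS, g1, hcanc])
    (by rw [hS, g2, hcanc])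
  refine ⟨U * P, Q * V, ?_, ?_⟩
  · rw [Matrix.det_mul] at hPQ
    simp only [Matrix.det_mul]
    linear_combination U.det * V.det * hPQ + hUV
  · rcases h with h | h
    · left; intro X; rw [hTS, h]; noncomm_ring
    · right; intro X; rw [hTS, h]; noncomm_ring

end struct
end Stmt19

theorem stmt19 (F : Type*) [Field F] (hchar : ringChar F = 2)
    (S : Set (Matrix (Fin 3) (Fin 3) F))
    (hS : (S = ProdInv3 F 3 ∧ Nat.card F = 2) ∨ S = ProdInv4 F 3)
    (T : Matrix (Fin 3) (Fin 3) F →ₗ[F] Matrix (Fin 3) (Fin 3) F)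
    (hT : Function.Bijective T) :
    (∀ A ∈ S, T A ∈ S) ↔
      ∃ P Q : Matrix (Fin 3) (Fin 3) F, IsUnit P ∧ IsUnit Q ∧ (P * Q).det = 1 ∧
        ((∀ X, T X = P * X * Q) ∨ (∀ X, T X = P * Xᵀ * Q)) := by
  have h2 : (2 : F) = 0 := by
    have := ringChar.Nat.cast_ringChar (R := F)
    rw [hchar] at this
    exact_mod_cast this
  have hmem : ∀ A, A ∈ S ↔ A.det = 1 := by
    intro A
    rcases hS with ⟨rfl, hc⟩ | rfl
    · refine Stmt19.mem3_iff h2 ?_ A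
      obtain ⟨x, y, hxy, hu⟩ := Nat.card_eq_two_iff.1 hc
      intro z
      have hm : ∀ z : F, z = x ∨ z = y := fun z => by
        have : z ∈ ({x, y} : Set F) := by rw [hu]; trivial
        simpa using this
      rcases hm 0 with h0 | h0 <;> rcases hm 1 with h1 | h1 <;> rcases hm z with h | h <;>
        first
        | exact absurd (h0.trans h1.symm) zero_ne_one
        | exact Or.inl (h.trans h0.symm)
        | exact Or.inr (h.trans h1.symm)
    · exact Stmt19.mem4_iff h2 A
  simp only [hmem]
  constructor
  · intro h
    have hdet : ∀ X, (T X).det = X.det := by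
      by_cases hF : ∀ x : F, x = 0 ∨ x = 1
      · exact Stmt19.det_pres_two hF T hT.1 h
      · push Not at hF
        obtain ⟨w, hw0, hw1⟩ := hF
        exact Stmt19.det_pres_big h2 w hw0 hw1 T h
    obtain ⟨P, Q, hPQ, hh⟩ := Stmt19.struct T hT hdet
    rw [Matrix.det_mul] at hPQ
    refine ⟨P, Q, ?_, ?_, by rw [Matrix.det_mul, hPQ], hh⟩
    · rw [Matrix.isUnit_iff_isUnit_det]
      exact IsUnit.of_mul_eq_one _ hPQ
    · rw [Matrix.isUnit_iff_isUnit_det]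
      exact IsUnit.of_mul_eq_one _ (by rw [mul_comm]; exact hPQ)
  · rintro ⟨P, Q, -, -, hPQ, hh⟩ A hA
    rw [Matrix.det_mul] at hPQ
    rcases hh with hh | hh
    · rw [hh, Matrix.det_mul, Matrix.det_mul, hA, mul_one, hPQ]
    · rw [hh, Matrix.det_mul, Matrix.det_mul, Matrix.det_transpose, hA, mul_one, hPQ]
end
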